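/- arXiv:2508.05980 — 3 statements merged into one kernel-verified Lean document; each statement's English description precedes it below -/
import Mathlib

section
/- Let s ≥ 2 and 2 ≤ r' ≤ s' be integers with s − 1 ≤ s' − r' < 2s − 2. Let U ⊆ ℂ^s be a connected open set with U ∩ S(Ω_{1,s}) ≠ ∅, and let F : U → ℂ^{r'×s'} be a nonconstant holomorphic map such that F(z)·F(z)ᴴ = I_{r'} for every z ∈ U ∩ S(Ω_{1,s}). Then there exist a (1,s)-unitary matrix M ∈ GL(1+s, ℂ) and an (r',s')-unitary matrix M' ∈ GL(r'+s', ℂ) such that for every z ∈ U, rowSpan([I_{r'} | F(z)] · M') = rowSpan(Φ((1, z) · M)); i.e. after composing with automorphisms of Ω_{1,s} and Ω_{r',s'}, F is the standard linear embedding z ↦ (I 0 0; 0 z 0). -/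
open scoped BigOperators
open Matrix

noncomputable section

/-- Hermitian dot product of row vectors: `z ⬝ wᴴ`. -/
def cdot {n : ℕ} (z w : Fin n → ℂ) : ℂ := ∑ i, z i * (starRingEnd ℂ) (w i)

/-- Signature matrix `I_{a,b} = diag(I_a, −I_b)`. -/
def sigMat (a b : ℕ) : Matrix (Fin (a + b)) (Fin (a + b)) ℂ :=
  Matrix.diagonal fun i => if (i : ℕ) < a then (1 : ℂ) else -1

/-- Row span of a matrix: the ℂ-linear span of its rows. -/
def rowSpan {m n : ℕ} (A : Matrix (Fin m) (Fin n) ℂ) : Submodule ℂ (Fin n → ℂ) :=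
  Submodule.span ℂ (Set.range fun i => A i)

/-- The chart matrix `[I_r | Z]`. -/
def chartMat (r s : ℕ) (Z : Matrix (Fin r) (Fin s) ℂ) : Matrix (Fin r) (Fin (r + s)) ℂ :=
  Matrix.of fun i j =>
    if h : (j : ℕ) < r then (if (i : ℕ) = (j : ℕ) then 1 else 0)
    else Z i ⟨(j : ℕ) - r, by have := j.isLt; omega⟩

/-- The row vector `(1, z) ∈ ℂ^{1+s}`. -/
def onecons {s : ℕ} (z : Fin s → ℂ) : Fin (1 + s) → ℂ :=
  fun j => if h : (j : ℕ) = 0 then 1 else z ⟨(j : ℕ) - 1, by have := j.isLt; omega⟩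

/-- For a row vector `v = (v₀, v₁, …, v_s) ∈ ℂ^{1+s}`, `Phi r' s' s v` is the
`r'×(r'+s')` matrix with column blocks of sizes `r'−1, 1, r'−1, s, s'−s−r'+1`, whose
first `r'−1` rows form the block row `[I_{r'−1}, 0, I_{r'−1}, 0, 0]` and whose last row
is `[0, v₀, 0, (v₁,…,v_s), 0]`. -/
def Phi (r' s' s : ℕ) (v : Fin (1 + s) → ℂ) : Matrix (Fin r') (Fin (r' + s')) ℂ :=
  Matrix.of fun i j =>
    if (i : ℕ) < r' - 1 then
      if (j : ℕ) < r' - 1 then (if (i : ℕ) = (j : ℕ) then 1 else 0)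
      else if r' ≤ (j : ℕ) ∧ (j : ℕ) < 2 * r' - 1 then
        (if (i : ℕ) = (j : ℕ) - r' then 1 else 0)
      else 0
    else
      if (j : ℕ) = r' - 1 then v ⟨0, by omega⟩
      else if h : 2 * r' - 1 ≤ (j : ℕ) ∧ (j : ℕ) < 2 * r' - 1 + s then
        v ⟨(j : ℕ) - (2 * r' - 1) + 1, by omega⟩
      else 0


section partA
open Metric Set Filter Topology
open scoped ComplexConjugate

section
variable {V W : Type*} [NormedAddCommGroup V] [InnerProductSpace ℂ V] [FiniteDimensional ℂ V]
  [NormedAddCommGroup W] [InnerProductSpace ℂ W] [FiniteDimensional ℂ W]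

theorem diffOn_inner_conj {W : Type*} [NormedAddCommGroup W] [InnerProductSpace ℂ W] [FiniteDimensional ℂ W] {R : ℝ} {g h : ℂ → W}
    (hg : DifferentiableOn ℂ (fun t => g (conj t)) (ball 0 R))
    (hh : DifferentiableOn ℂ h (ball 0 R)) :
    DifferentiableOn ℂ (fun t => inner ℂ (g t) (h t)) (ball 0 R) := by
  have key : ∀ t, inner ℂ (g t) (h t) = ∑ k, conj (inner ℂ (stdOrthonormalBasis ℂ W k) (g t)) *
      inner ℂ (stdOrthonormalBasis ℂ W k) (h t) := by
    intro t
    rw [← (stdOrthonormalBasis ℂ W).sum_inner_mul_inner]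
    simp
  simp_rw [key]
  intro t ht
  apply DifferentiableAt.differentiableWithinAt
  have hnh : ball (0:ℂ) R ∈ 𝓝 t := isOpen_ball.mem_nhds ht
  have hct : conj t ∈ ball (0:ℂ) R := by simpa using ht
  have hnh' : ball (0:ℂ) R ∈ 𝓝 (conj t) := isOpen_ball.mem_nhds hct
  apply DifferentiableAt.fun_sum
  intro k _
  have h1 : DifferentiableAt ℂ (fun t => g (conj t)) (conj t) := hg.differentiableAt hnh'
  have h2 : DifferentiableAt ℂ (fun t => inner ℂ (stdOrthonormalBasis ℂ W k) (g (conj t))) (conj t) :=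
    (innerSL ℂ (stdOrthonormalBasis ℂ W k)).differentiableAt.comp _ h1
  have h3 := h2.conj_conj
  have h4 : DifferentiableAt ℂ (fun t => inner ℂ (stdOrthonormalBasis ℂ W k) (h t)) t :=
    (innerSL ℂ (stdOrthonormalBasis ℂ W k)).differentiableAt.comp _ (hh.differentiableAt hnh)
  refine DifferentiableAt.mul ?_ h4
  simpa [Function.comp_def] using h3

/-- one variable identity theorem on an open preconnected set. -/
theorem ident1 {E : Type*} [NormedAddCommGroup E] [NormedSpace ℂ E] [CompleteSpace E]
    {f : ℂ → E} {s : Set ℂ} (hs : IsOpen s) (hc : IsPreconnected s)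
    (hf : DifferentiableOn ℂ f s) {t₀ : ℂ} (ht₀ : t₀ ∈ s) (hz : ∃ᶠ t in 𝓝[≠] t₀, f t = 0)
    {t : ℂ} (ht : t ∈ s) : f t = 0 :=
  (hf.analyticOnNhd hs).eqOn_zero_of_preconnected_of_frequently_eq_zero hc ht₀ hz ht

theorem freq_real (a : ℝ) {P : ℂ → Prop} {ε : ℝ} (hε : 0 < ε)
    (h : ∀ r : ℝ, a < r → r < a + ε → P r) : ∃ᶠ t in 𝓝[≠] (a:ℂ), P t := by
  have h1 : ∀ᶠ r : ℝ in 𝓝[>] a, P (r:ℂ) := by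
    have : Ioo a (a+ε) ∈ 𝓝[>] a := Ioo_mem_nhdsGT (by linarith)
    filter_upwards [this] with r hr using h r hr.1 hr.2
  have h2 : Tendsto (fun r : ℝ => (r:ℂ)) (𝓝[>] a) (𝓝[≠] (a:ℂ)) := by
    apply tendsto_nhdsWithin_of_tendsto_nhds_of_eventually_within
    · exact (Complex.continuous_ofReal.tendsto a).mono_left nhdsWithin_le_nhds
    · filter_upwards [self_mem_nhdsWithin] with r hr
      simp only [mem_compl_iff, mem_singleton_iff, Complex.ofReal_inj]
      exact ne_of_gt hr
  exact h2.frequently h1.frequently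

theorem identU {E : Type*} [NormedAddCommGroup E] [NormedSpace ℂ E]
    {F : Type*} [NormedAddCommGroup F] [NormedSpace ℂ F] [CompleteSpace F]
    {f : E → F} {U O : Set E} (hU : IsOpen U) (hc : IsPreconnected U)
    (hf : DifferentiableOn ℂ f U) (hO : IsOpen O) (hne : (U ∩ O).Nonempty)
    (hz : ∀ z ∈ U ∩ O, f z = 0) : ∀ z ∈ U, f z = 0 := by
  let Z : Set E := interior {z | f z = 0}
  have hsub : U ⊆ Z := by
    apply hc.subset_of_closure_inter_subset isOpen_interior
    · obtain ⟨z, hz1, hz2⟩ := hne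
      refine ⟨z, hz1, ?_⟩
      exact interior_maximal (fun x hx => hz x hx) (hU.inter hO) ⟨hz1, hz2⟩
    · rintro z ⟨hzc, hzU⟩
      obtain ⟨r, hr, hb⟩ := Metric.isOpen_iff.1 hU z hzU
      obtain ⟨x, hxZ, hxz⟩ := Metric.mem_closure_iff.1 hzc r hr
      have hxb : x ∈ ball z r := by rw [mem_ball, dist_comm]; exact hxz
      apply interior_maximal (s := {z | f z = 0}) (t := ball z r) _ isOpen_ball (mem_ball_self hr)
      intro y hy
      let ℓ : ℂ → E := fun t => x + t • (y - x)
      have hℓ : Differentiable ℂ ℓ := by fun_prop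
      have hconv : Convex ℝ (ℓ ⁻¹' (ball z r)) := by
        intro a ha b hb' u v hu hv huv
        have := (convex_ball z r) ha hb' hu hv huv
        simp only [mem_preimage]
        convert this using 1
        simp only [ℓ]
        have hu' : (u:ℂ) + v = 1 := by exact_mod_cast huv
        have e1 : u • (x + a • (y - x)) = (u:ℂ) • (x + a • (y-x)) := (Complex.coe_smul u _).symm
        have e2 : v • (x + b • (y - x)) = (v:ℂ) • (x + b • (y-x)) := (Complex.coe_smul v _).symm
        rw [e1, e2]
        have e3 : x = ((u:ℂ) + v) • x := by rw [hu', one_smul]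
        simp only [Complex.real_smul]
        nth_rewrite 1 [e3]
        module
      have hop : IsOpen (ℓ ⁻¹' (ball z r)) := isOpen_ball.preimage hℓ.continuous
      have h0 : (0:ℂ) ∈ ℓ ⁻¹' (ball z r) := by simpa [ℓ] using hxb
      have h1 : (1:ℂ) ∈ ℓ ⁻¹' (ball z r) := by simpa [ℓ] using hy
      have hd : DifferentiableOn ℂ (fun t => f (ℓ t)) (ℓ ⁻¹' (ball z r)) :=
        (hf.mono hb).comp hℓ.differentiableOn (fun t ht => ht)
      have hfreq : ∃ᶠ t in 𝓝[≠] (0:ℂ), f (ℓ t) = 0 := by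
        apply Eventually.frequently
        apply Filter.Eventually.filter_mono nhdsWithin_le_nhds
        have : ℓ ⁻¹' Z ∈ 𝓝 (0:ℂ) := by
          apply (isOpen_interior.preimage hℓ.continuous).mem_nhds
          simpa [ℓ] using hxZ
        filter_upwards [this] with t ht
        have := interior_subset (s := {z | f z = 0}) ht
        exact this
      have := ident1 hop hconv.isPreconnected hd h0 hfreq h1
      simpa [ℓ] using this
  intro z hz'
  have := interior_subset (s := {z | f z = 0}) (hsub hz')
  exact this

theorem fderiv_cont {U : Set V} (hU : IsOpen U) {f : V → W} (hf : DifferentiableOn ℂ f U) :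
    ContinuousOn (fderiv ℂ f) U := by
  intro z₀ hz₀
  apply ContinuousAt.continuousWithinAt
  obtain ⟨r, hr, hb⟩ := Metric.isOpen_iff.1 hU z₀ hz₀
  have hcomp : IsCompact (closedBall z₀ (r/2)) := by
    have := FiniteDimensional.proper ℂ V
    exact isCompact_closedBall _ _
  have hcb : closedBall z₀ (r/2) ⊆ U := (closedBall_subset_ball (by linarith)).trans hb
  have huc := hcomp.uniformContinuousOn_of_continuous (hf.continuousOn.mono hcb)
  rw [Metric.continuousAt_iff]
  intro ε hε
  rw [Metric.uniformContinuousOn_iff] at huc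
  obtain ⟨δ, hδ, h⟩ := huc (ε/2 * (r/4)) (by positivity)
  refine ⟨min δ (r/4), by positivity, ?_⟩
  intro z hz
  have hz1 : dist z z₀ < δ := lt_of_lt_of_le hz (min_le_left _ _)
  have hz2 : dist z z₀ < r/4 := lt_of_lt_of_le hz (min_le_right _ _)
  rw [dist_eq_norm]
  refine lt_of_le_of_lt ?_ (half_lt_self hε)
  apply ContinuousLinearMap.opNorm_le_of_unit_norm (by positivity)
  intro e he
  let φ : ℂ → W := fun t => f (z + t • e) - f (z₀ + t • e)
  have mem1 : ∀ t : ℂ, ‖t‖ ≤ r/4 → z + t • e ∈ closedBall z₀ (r/2) := by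
    intro t ht
    rw [mem_closedBall, dist_eq_norm]
    calc ‖z + t • e - z₀‖ = ‖(z - z₀) + t • e‖ := by congr 1; abel
      _ ≤ ‖z - z₀‖ + ‖t • e‖ := norm_add_le _ _
      _ ≤ r/4 + r/4 := by
        rw [norm_smul, he, mul_one]
        rw [dist_eq_norm] at hz2
        linarith
      _ = r/2 := by ring
  have mem2 : ∀ t : ℂ, ‖t‖ ≤ r/4 → z₀ + t • e ∈ closedBall z₀ (r/2) := by
    intro t ht
    rw [mem_closedBall, dist_eq_norm]
    simp only [add_sub_cancel_left, norm_smul, he, mul_one]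
    linarith
  have hd : DiffContOnCl ℂ φ (ball 0 (r/4)) := by
    apply DifferentiableOn.diffContOnCl_ball (U := {t : ℂ | z + t • e ∈ U ∧ z₀ + t • e ∈ U})
    · apply DifferentiableOn.sub
      · exact hf.comp (by fun_prop) (fun t ht => ht.1)
      · exact hf.comp (by fun_prop) (fun t ht => ht.2)
    · intro t ht
      have ht' : ‖t‖ ≤ r/4 := by simpa using ht
      exact ⟨hcb (mem1 t ht'), hcb (mem2 t ht')⟩
  have hbd := Complex.norm_deriv_le_of_forall_mem_sphere_norm_le (c := 0) (R := r/4) (f := φ)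
    (C := ε/2 * (r/4)) (by positivity) hd (by
      intro t ht
      have ht' : ‖t‖ ≤ r/4 := by
        have : ‖t‖ = r/4 := by simpa using ht
        exact this.le
      have := h _ (mem1 t ht') _ (mem2 t ht') (by simpa [dist_eq_norm] using hz1)
      rw [dist_eq_norm] at this
      exact this.le)
  have hder : deriv φ 0 = (fderiv ℂ f z - fderiv ℂ f z₀) e := by
    have hl : ∀ y : V, HasDerivAt (fun t : ℂ => y + t • e) e 0 := by
      intro y
      simpa using ((hasDerivAt_id (0:ℂ)).smul_const e).const_add y
    have hzU : z ∈ U := by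
      have := hcb (mem1 0 (by simp; positivity)); simpa using this
    have d1 : HasDerivAt (fun t : ℂ => f (z + t • e)) (fderiv ℂ f z e) 0 := by
      have h1 : HasFDerivAt f (fderiv ℂ f z) (z + (0:ℂ) • e) := by
        simpa using (hf.differentiableAt (hU.mem_nhds hzU)).hasFDerivAt
      exact h1.comp_hasDerivAt (0:ℂ) (hl z)
    have d2 : HasDerivAt (fun t : ℂ => f (z₀ + t • e)) (fderiv ℂ f z₀ e) 0 := by
      have h1 : HasFDerivAt f (fderiv ℂ f z₀) (z₀ + (0:ℂ) • e) := by
        simpa using (hf.differentiableAt (hU.mem_nhds hz₀)).hasFDerivAt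
      exact h1.comp_hasDerivAt (0:ℂ) (hl z₀)
    exact (d1.sub d2).deriv
  rw [hder] at hbd
  refine hbd.trans ?_
  rw [mul_div_assoc, div_self (by positivity), mul_one]
end

end partA

section partB
open Metric Set Filter Topology
open scoped ComplexConjugate

theorem polar_lemma {V : Type*} [NormedAddCommGroup V] [InnerProductSpace ℂ V]
    (p : V) (hp : ‖p‖ = 1) {δ : ℝ} (hδ : 0 < δ) :
    ∃ δ' > 0, δ' ≤ δ ∧ ∀ Ψ : V → V → ℂ,
      (∀ z w : ℂ → V, DifferentiableOn ℂ z (ball 0 2) →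
        DifferentiableOn ℂ (fun t => w (conj t)) (ball 0 2) →
        (∀ t ∈ ball (0:ℂ) 2, z t ∈ ball p δ) → (∀ t ∈ ball (0:ℂ) 2, w t ∈ ball p δ) →
        DifferentiableOn ℂ (fun t => Ψ (z t) (w t)) (ball 0 2)) →
      (∀ q ∈ ball p δ, ‖q‖ = 1 → Ψ q q = 0) →
      ∀ z1 ∈ ball p δ', ∀ w1 ∈ ball p δ', inner ℂ w1 z1 = 1 → Ψ z1 w1 = 0 := by
  have hcont : ContinuousAt (fun N : ℂ => N ^ ((-(1/2) : ℝ) : ℂ)) 1 := by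
    apply continuousAt_cpow_const
    simp [Complex.mem_slitPlane_iff]
  rw [Metric.continuousAt_iff] at hcont
  obtain ⟨η0, hη0, hη⟩ := hcont (min (δ/2) 1) (by positivity)
  let η := min η0 (1/2)
  have hηpos : 0 < η := by positivity
  refine ⟨min (η/9) (min (δ/12) (1/3)), by positivity, ?_, ?_⟩
  · exact (min_le_right _ _).trans ((min_le_left _ _).trans (by linarith))
  intro Ψ ha hb z1 hz1 w1 hw1 h1
  set δ' := min (η/9) (min (δ/12) (1/3)) with hδ'
  have d1 : δ' ≤ η/9 := min_le_left _ _
  have d2 : δ' ≤ δ/12 := (min_le_right _ _).trans (min_le_left _ _)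
  have d3 : δ' ≤ 1/3 := (min_le_right _ _).trans (min_le_right _ _)
  let x : V := (1/2 : ℂ) • (z1 + w1)
  let y : V := (-(Complex.I)/2) • (z1 - w1)
  rw [mem_ball, dist_eq_norm] at hz1 hw1
  have hx : ‖x - p‖ < δ' := by
    have : x - p = (1/2 : ℂ) • ((z1 - p) + (w1 - p)) := by simp only [x]; module
    rw [this, norm_smul]
    have := norm_add_le (z1 - p) (w1 - p)
    norm_num
    linarith
  have hy : ‖y‖ < δ' := by
    have : y = (-(Complex.I)/2) • ((z1 - p) - (w1 - p)) := by simp only [y]; module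
    rw [this, norm_smul]
    have := norm_sub_le (z1 - p) (w1 - p)
    simp
    have e : z1 - p - (w1 - p) = z1 - w1 := by abel
    rw [e] at this
    linarith
  have hzI : x + Complex.I • y = z1 := by
    simp only [x, y, smul_smul]
    have : Complex.I * (-Complex.I / 2) = 1/2 := by
      linear_combination (-1/2) * Complex.I_sq
    rw [this]; module
  have hwI : x + (-Complex.I) • y = w1 := by
    simp only [x, y, smul_smul]
    have : -Complex.I * (-Complex.I / 2) = -(1/2) := by
      linear_combination (1/2) * Complex.I_sq
    rw [this]; module
  have hxy : ∀ t : ℂ, ‖t‖ < 2 → ‖x + t • y - p‖ < 3 * δ' := by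
    intro t ht
    have e : x + t • y - p = (x - p) + t • y := by abel
    rw [e]
    have := norm_add_le (x-p) (t • y)
    rw [norm_smul] at this
    have h2 : ‖t‖ * ‖y‖ ≤ 2 * δ' := by
      apply mul_le_mul ht.le hy.le (norm_nonneg _) (by norm_num)
    linarith
  let N : ℂ → ℂ := fun t => inner ℂ (x + conj t • y) (x + t • y)
  have hNeq : ∀ t, N t = inner ℂ x x + t * (inner ℂ x y + inner ℂ y x) + t^2 * inner ℂ y y := by
    intro t
    simp only [N, inner_add_left, inner_add_right, inner_smul_left, inner_smul_right,
      Complex.conj_conj]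
    ring
  have hNdiff : Differentiable ℂ N := by
    have : N = fun t => inner ℂ x x + t * (inner ℂ x y + inner ℂ y x) + t^2 * inner ℂ y y :=
      funext hNeq
    rw [this]; fun_prop
  have hN1 : ∀ t : ℂ, ‖t‖ < 2 → ‖N t - 1‖ < η := by
    intro t ht
    have e : N t - 1 = inner ℂ (x + conj t • y - p) (x + t • y) + inner ℂ p (x + t • y - p) := by
      have : inner ℂ p p = (1:ℂ) := by
        rw [inner_self_eq_norm_sq_to_K, hp]; simp
      rw [inner_sub_left, inner_sub_right, this]
      simp only [N]; ring
    rw [e]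
    have a1 := hxy t ht
    have a2 := hxy (conj t) (by simpa using ht)
    have a3 : ‖x + t • y‖ ≤ 2 := by
      have : x + t • y = (x + t • y - p) + p := by abel
      rw [this]
      have := norm_add_le (x + t • y - p) p
      rw [hp] at this
      linarith
    have b1 := norm_inner_le_norm (𝕜 := ℂ) (x + conj t • y - p) (x + t • y)
    have b2 := norm_inner_le_norm (𝕜 := ℂ) p (x + t • y - p)
    rw [hp, one_mul] at b2
    have b3 : ‖x + conj t • y - p‖ * ‖x + t • y‖ ≤ 3 * δ' * 2 :=
      mul_le_mul a2.le a3 (norm_nonneg _) (by positivity)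
    have := norm_add_le (inner ℂ (x + conj t • y - p) (x + t • y)) (inner ℂ p (x + t • y - p))
    linarith
  let ρ : ℂ → ℂ := fun t => N t ^ ((-(1/2) : ℝ) : ℂ)
  have hρ1 : ∀ t : ℂ, ‖t‖ < 2 → ‖ρ t - 1‖ < min (δ/2) 1 := by
    intro t ht
    have := hη (x := N t) (by rw [dist_eq_norm]; exact (hN1 t ht).trans_le (min_le_left _ _))
    simpa [dist_eq_norm, ρ] using this
  have hρd : DifferentiableOn ℂ ρ (ball 0 2) := by
    intro t ht
    have ht' : ‖t‖ < 2 := by simpa using ht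
    apply DifferentiableAt.differentiableWithinAt
    apply DifferentiableAt.cpow_const (hNdiff t)
    left
    have h1 := (hN1 t ht').trans_le (min_le_right _ _)
    have h2 := Complex.abs_re_le_norm (N t - 1)
    have h3 := abs_lt.1 (h2.trans_lt h1)
    simp at h3
    linarith [h3.1]
  let z : ℂ → V := fun t => ρ t • (x + t • y)
  have hzd : DifferentiableOn ℂ z (ball 0 2) := hρd.smul (by fun_prop)
  have hzb : ∀ t ∈ ball (0:ℂ) 2, z t ∈ ball p δ := by
    intro t ht
    have ht' : ‖t‖ < 2 := by simpa using ht
    rw [mem_ball, dist_eq_norm]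
    have e : z t - p = ρ t • (x + t • y - p) + (ρ t - 1) • p := by simp only [z]; module
    rw [e]
    have a1 := hxy t ht'
    have a2 := hρ1 t ht'
    have a3 := a2.trans_le (min_le_left _ _)
    have a4 := a2.trans_le (min_le_right _ _)
    have a5 : ‖ρ t‖ ≤ 2 := by
      have : ρ t = (ρ t - 1) + 1 := by ring
      rw [this]
      have := norm_add_le (ρ t - 1) 1
      simp only [norm_one] at this
      linarith
    have := norm_add_le (ρ t • (x + t • y - p)) ((ρ t - 1) • p)
    rw [norm_smul, norm_smul, hp] at this
    have b3 : ‖ρ t‖ * ‖x + t • y - p‖ ≤ 2 * (3 * δ') :=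
      mul_le_mul a5 a1.le (norm_nonneg _) (by positivity)
    linarith
  have hconjball : ∀ t ∈ ball (0:ℂ) 2, conj t ∈ ball (0:ℂ) 2 := by
    intro t ht; simpa using ht
  have hD := ha z (fun t => z (conj t)) hzd (by simpa using hzd) hzb
    (fun t ht => hzb _ (hconjball t ht))
  have hreal : ∀ r : ℝ, 0 < r → r < 0 + 1 → Ψ (z r) (z (conj (r:ℂ))) = 0 := by
    intro r hr0 hr1
    rw [Complex.conj_ofReal]
    have hr2 : ‖(r:ℂ)‖ < 2 := by
      simp [abs_of_pos hr0]; linarith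
    apply hb _ (hzb _ (by simpa using hr2))
    have hNr : N r = ((‖x + (r:ℂ) • y‖^2 : ℝ) : ℂ) := by
      simp only [N, Complex.conj_ofReal]
      rw [inner_self_eq_norm_sq_to_K]; simp
    have hne : 0 < ‖x + (r:ℂ) • y‖ := by
      rw [norm_pos_iff]
      intro h0
      have := hN1 r hr2
      rw [hNr, h0] at this
      simp at this
      have : η ≤ 1/2 := min_le_right _ _
      linarith
    have hρr : ρ r = ((‖x + (r:ℂ) • y‖⁻¹ : ℝ) : ℂ) := by
      simp only [ρ, hNr]
      rw [← Complex.ofReal_cpow (by positivity)]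
      congr 1
      rw [Real.rpow_neg (by positivity), ← Real.sqrt_eq_rpow, Real.sqrt_sq hne.le]
    simp only [z, norm_smul, hρr]
    simp
    exact inv_mul_cancel₀ hne.ne'
  have hfreq : ∃ᶠ t in 𝓝[≠] (0:ℂ), Ψ (z t) (z (conj t)) = 0 := by
    simpa using freq_real 0 (P := fun t => Ψ (z t) (z (conj t)) = 0) one_pos hreal
  have hres := ident1 isOpen_ball (convex_ball (0:ℂ) 2).isPreconnected hD (by simp) hfreq
    (t := Complex.I) (by simp)
  have hNI : N Complex.I = 1 := by
    simp only [N, Complex.conj_I]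
    rw [hzI, hwI, h1]
  have hNI' : N (-Complex.I) = 1 := by
    simp only [N, map_neg, Complex.conj_I, neg_neg]
    rw [hzI, hwI, ← inner_conj_symm, h1, map_one]
  have e1 : z Complex.I = z1 := by
    simp only [z, ρ, hNI, hzI, Complex.one_cpow, one_smul]
  have e2 : z (conj Complex.I) = w1 := by
    simp only [z, ρ, hNI', hwI, Complex.one_cpow, one_smul, Complex.conj_I]
  simp only [e1, e2] at hres
  exact hres

end partB

section partC
open Metric Set Filter Topology
open scoped ComplexConjugate

theorem inner_self_c {V : Type*} [NormedAddCommGroup V] [InnerProductSpace ℂ V] (v : V) :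
    inner ℂ v v = (Complex.ofReal ‖v‖)^2 := by
  rw [inner_self_eq_norm_sq_to_K]; rfl

theorem finrank_inf_orth {V : Type*} [NormedAddCommGroup V] [InnerProductSpace ℂ V]
    [FiniteDimensional ℂ V] (D : Submodule ℂ V) {x : V} (hx : x ∈ D) (h0 : x ≠ 0) :
    Module.finrank ℂ (D ⊓ (ℂ ∙ x)ᗮ : Submodule ℂ V) + 1 = Module.finrank ℂ D := by
  have h1 : (ℂ ∙ x) ≤ D := by
    rw [Submodule.span_singleton_le_iff_mem]; exact hx
  have h2 := Submodule.finrank_add_inf_finrank_orthogonal h1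
  rw [finrank_span_singleton h0, inf_comm] at h2
  omega

theorem huang1 {V W : Type*} [NormedAddCommGroup V] [InnerProductSpace ℂ V]
    [FiniteDimensional ℂ V] [NormedAddCommGroup W] [InnerProductSpace ℂ W]
    [FiniteDimensional ℂ W] {h : V → W} {r : ℝ} (hd : DifferentiableOn ℂ h (ball 0 r)) (n : ℕ) :
    ∀ (D : Submodule ℂ V) (C : Submodule ℂ W), Module.finrank ℂ C = n → n < Module.finrank ℂ D →
    (∀ e ∈ D, ‖e‖ < r → h e ∈ C) →
    (∀ e ∈ D, ∀ e' ∈ D, ‖e‖ < r → ‖e'‖ < r → inner ℂ e e' = 0 → inner ℂ (h e) (h e') = 0) →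
    ∀ e ∈ D, ‖e‖ < r → h e = 0 := by
  induction n with
  | zero =>
    intro D C hC _ hm _ e he her
    have : C = ⊥ := Submodule.finrank_eq_zero.1 hC
    have := hm e he her
    simp_all
  | succ n ih =>
    intro D C hC hD hm ho
    have key : ∀ e ∈ D, ‖e‖ < r → h e ≠ 0 → ∀ g ∈ D, ‖g‖ < r → inner ℂ e g = 0 → h g = 0 := by
      intro e he her hne g hg hgr heg
      have he0 : e ≠ 0 := by
        rintro rfl
        exact hne (inner_self_eq_zero.1 (ho 0 he 0 he her her (by simp)))
      have f1 := finrank_inf_orth D he he0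
      have f2 := finrank_inf_orth C (hm e he her) hne
      refine ih (D ⊓ (ℂ ∙ e)ᗮ) (C ⊓ (ℂ ∙ (h e))ᗮ) (by omega) (by omega) ?_ ?_ g
        ⟨hg, Submodule.mem_orthogonal_singleton_iff_inner_right.2 heg⟩ hgr
      · rintro x ⟨hx1, hx2⟩ hxr
        refine ⟨hm x hx1 hxr, Submodule.mem_orthogonal_singleton_iff_inner_right.2 ?_⟩
        exact ho e he x hx1 her hxr (Submodule.mem_orthogonal_singleton_iff_inner_right.1 hx2)
      · rintro x ⟨hx1, _⟩ x' ⟨hx1', _⟩ 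
        exact ho x hx1 x' hx1'
    intro e0 he0 her0
    by_contra hne
    have he00 : e0 ≠ 0 := by
      rintro rfl
      exact hne (inner_self_eq_zero.1 (ho 0 he0 0 he0 her0 her0 (by simp)))
    have f1 := finrank_inf_orth D he0 he00
    have hnb : (D ⊓ (ℂ ∙ e0)ᗮ : Submodule ℂ V) ≠ ⊥ := by
      intro hb
      rw [hb] at f1
      simp at f1; omega
    obtain ⟨f, ⟨hfD, hfe⟩, hf0⟩ := Submodule.exists_mem_ne_zero_of_ne_bot hnb
    have hef : inner ℂ e0 f = 0 := Submodule.mem_orthogonal_singleton_iff_inner_right.1 hfe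
    have hfe' : inner ℂ f e0 = 0 := by rw [← inner_conj_symm, hef, map_zero]
    have hrpos : 0 < r := (norm_nonneg _).trans_lt her0
    -- neighborhood
    have hnb1 : ∀ᶠ x in 𝓝 e0, x ∈ ball (0:V) r ∧ h x ≠ 0 := by
      have hb : ball (0:V) r ∈ 𝓝 e0 := isOpen_ball.mem_nhds (by simpa using her0)
      have hc : ContinuousAt h e0 := hd.continuousOn.continuousAt hb
      exact Filter.Eventually.and hb (hc.eventually_ne hne)
    have hnb2 : ∀ᶠ t : ℝ in 𝓝 0, (e0 + (t:ℂ) • f ∈ ball (0:V) r ∧ h (e0 + (t:ℂ) • f) ≠ 0) ∧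
        (t:ℂ) • f ∈ ball (0:V) r := by
      apply Filter.Eventually.and
      · have : Tendsto (fun t : ℝ => e0 + (t:ℂ) • f) (𝓝 0) (𝓝 e0) := by
          have : Continuous (fun t : ℝ => e0 + (t:ℂ) • f) := by fun_prop
          simpa using this.tendsto 0
        exact this.eventually hnb1
      · have : Tendsto (fun t : ℝ => (t:ℂ) • f) (𝓝 0) (𝓝 0) := by
          have : Continuous (fun t : ℝ => (t:ℂ) • f) := by fun_prop
          simpa using this.tendsto 0
        exact this.eventually (isOpen_ball.mem_nhds (by simpa using hrpos))
    rw [Metric.eventually_nhds_iff] at hnb2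
    obtain ⟨ε, hε, hE⟩ := hnb2
    simp only [dist_zero_right, Real.norm_eq_abs] at hE
    let t : ℝ := ε/2
    have ht : 0 < t := by positivity
    have hT := hE (y := t) (by rw [abs_of_pos ht]; simp only [t]; linarith)
    let ℓ : ℂ → V := fun μ => (t:ℂ) • f + μ • e0
    have hℓ : Differentiable ℂ ℓ := by fun_prop
    have hop : IsOpen (ℓ ⁻¹' (ball 0 r)) := isOpen_ball.preimage hℓ.continuous
    have hconv : Convex ℝ (ℓ ⁻¹' (ball 0 r)) := by
      intro a ha b hb' u v hu hv huv
      have := (convex_ball (0:V) r) ha hb' hu hv huv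
      simp only [mem_preimage]
      convert this using 1
      simp only [ℓ]
      have hu' : (u:ℂ) + v = 1 := by exact_mod_cast huv
      rw [← Complex.coe_smul u ((t:ℂ) • f + a • e0), ← Complex.coe_smul v ((t:ℂ) • f + b • e0)]
      simp only [Complex.real_smul]
      have e3 : (t:ℂ) • f = ((u:ℂ) + v) • ((t:ℂ) • f) := by rw [hu', one_smul]
      nth_rewrite 1 [e3]
      module
    have hdd : DifferentiableOn ℂ (fun μ => h (ℓ μ)) (ℓ ⁻¹' (ball 0 r)) :=
      hd.comp hℓ.differentiableOn (fun t ht => ht)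
    have m0 : (0:ℂ) ∈ ℓ ⁻¹' (ball 0 r) := by
      simp only [mem_preimage, ℓ, zero_smul, add_zero]; exact hT.2
    have m1 : (1:ℂ) ∈ ℓ ⁻¹' (ball 0 r) := by
      simp only [mem_preimage, ℓ, one_smul]; rw [add_comm]; exact hT.1.1
    have hnear : ∀ᶠ μ : ℝ in 𝓝 0, h (ℓ μ) = 0 := by
      have c1 : ∀ᶠ μ : ℝ in 𝓝 0, ℓ μ ∈ ball (0:V) r := by
        have : Continuous (fun μ : ℝ => ℓ μ) := hℓ.continuous.comp Complex.continuous_ofReal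
        exact this.continuousAt.eventually_mem (isOpen_ball.mem_nhds (by simpa [ℓ] using hT.2))
      have c2 : ∀ᶠ μ : ℝ in 𝓝 0, |(-μ * ‖e0‖^2/(t * ‖f‖^2))| < ε := by
        have : Continuous (fun μ : ℝ => |(-μ * ‖e0‖^2/(t * ‖f‖^2))|) := by fun_prop
        have := this.tendsto 0
        simp only [neg_zero, zero_mul, zero_div, abs_zero] at this
        exact this.eventually (gt_mem_nhds hε)
      filter_upwards [c1, c2] with μ h1 h2
      have h3 := hE h2
      refine key (e0 + ((-μ * ‖e0‖^2/(t * ‖f‖^2) : ℝ):ℂ) • f) 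
        (D.add_mem he0 (D.smul_mem _ hfD)) (by simpa using h3.1.1) h3.1.2 (ℓ μ) 
        (D.add_mem (D.smul_mem _ hfD) (D.smul_mem _ he0)) (by simpa using h1) ?_
      simp only [ℓ, inner_add_left, inner_add_right, inner_smul_left, inner_smul_right, hef, hfe',
        inner_self_eq_norm_sq_to_K, Complex.conj_ofReal]
      have hfn : (‖f‖:ℂ) ≠ 0 := by simpa using hf0
      have htn : (t:ℂ) ≠ 0 := by exact_mod_cast ht.ne'
      push_cast
      simp only [Complex.coe_algebraMap]
      field_simp
      ring
    have hfreq : ∃ᶠ μ in 𝓝[≠] (0:ℂ), h (ℓ μ) = 0 := by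
      rw [Metric.eventually_nhds_iff] at hnear
      obtain ⟨ε', hε', hE'⟩ := hnear
      have := freq_real 0 (P := fun μ => h (ℓ μ) = 0) hε' (fun r h0 h1 => hE' (by
        simp only [dist_zero_right, Real.norm_eq_abs]; rw [abs_of_pos h0]; linarith))
      simpa using this
    have hfin := ident1 hop hconv.isPreconnected hdd m0 hfreq m1
    apply hT.1.2
    rw [← hfin]
    simp only [ℓ, one_smul, add_comm]

theorem sesq {V W : Type*} [NormedAddCommGroup V] [InnerProductSpace ℂ V]
    [NormedAddCommGroup W] [InnerProductSpace ℂ W] (L : V →ₗ[ℂ] W) (D : Submodule ℂ V)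
    (ho : ∀ e ∈ D, ∀ e' ∈ D, inner ℂ e e' = 0 → inner ℂ (L e) (L e') = 0)
    {u : V} (hu : u ∈ D) (hLu : L u ≠ 0) :
    ∃ μ : ℝ, 0 < μ ∧ ∀ e ∈ D, ∀ e' ∈ D, inner ℂ (L e) (L e') = μ * inner ℂ e e' := by
  have hu0 : u ≠ 0 := by rintro rfl; simp at hLu
  have hun : (‖u‖:ℂ) ≠ 0 := by simpa using hu0
  let μ : ℝ := ‖L u‖^2 / ‖u‖^2
  have hμ : 0 < μ := by
    have : 0 < ‖u‖ := norm_pos_iff.2 hu0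
    have : 0 < ‖L u‖ := norm_pos_iff.2 hLu
    positivity
  have hqu : inner ℂ (L u) (L u) = μ * inner ℂ u u := by
    simp only [inner_self_eq_norm_sq_to_K, μ]
    push_cast
    simp only [Complex.coe_algebraMap]
    field_simp
  have dec : ∀ e ∈ D, e ≠ 0 → ∀ e' ∈ D, ∃ a : ℂ, ∃ g ∈ D, e' = a • e + g ∧ inner ℂ e g = 0 ∧
      inner ℂ g e = 0 := by
    intro e he he0 e' he'
    have hn : (‖e‖:ℂ) ≠ 0 := by simpa using he0
    have hz : inner ℂ e (e' - (inner ℂ e e' / ‖e‖^2) • e) = 0 := by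
      rw [inner_sub_right, inner_smul_right, inner_self_eq_norm_sq_to_K]
      simp only [Complex.coe_algebraMap]
      field_simp
      ring
    refine ⟨inner ℂ e e' / ‖e‖^2, e' - (inner ℂ e e' / ‖e‖^2) • e, 
      D.sub_mem he' (D.smul_mem _ he), by abel, hz, ?_⟩
    rw [← inner_conj_symm, hz, map_zero]
  have hqg : ∀ g ∈ D, inner ℂ u g = 0 → inner ℂ (L g) (L g) = μ * inner ℂ g g := by
    intro g hg hug
    have hgu : inner ℂ g u = 0 := by rw [← inner_conj_symm, hug, map_zero]
    have h1 := ho ((‖g‖:ℂ) • u + (‖u‖:ℂ) • g) (D.add_mem (D.smul_mem _ hu) (D.smul_mem _ hg))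
      ((‖g‖:ℂ) • u - (‖u‖:ℂ) • g) (D.sub_mem (D.smul_mem _ hu) (D.smul_mem _ hg)) (by
        simp only [inner_add_left, inner_sub_right, inner_smul_left, inner_smul_right, hug, hgu,
          inner_self_eq_norm_sq_to_K, Complex.conj_ofReal]
        simp only [Complex.coe_algebraMap]
        ring)
    have h2 := ho u hu g hg hug
    have h3 := ho g hg u hu hgu
    simp only [map_add, map_sub, map_smul, inner_add_left, inner_sub_right, inner_smul_left,
      inner_smul_right, h2, h3, Complex.conj_ofReal, hqu] at h1
    rw [inner_self_c u] at h1
    rw [inner_self_c g]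
    have : (‖u‖:ℂ)^2 * (inner ℂ (L g) (L g) - μ * ‖g‖^2) = 0 := by linear_combination -h1
    rcases mul_eq_zero.1 this with h | h
    · exact absurd h (pow_ne_zero _ hun)
    · linear_combination h
  have hq : ∀ e ∈ D, inner ℂ (L e) (L e) = μ * inner ℂ e e := by
    intro e he
    obtain ⟨a, g, hg, rfl, h1, h2⟩ := dec u hu hu0 e he
    simp only [map_add, map_smul, inner_add_left, inner_add_right, inner_smul_left,
      inner_smul_right, h1, h2, ho u hu g hg h1, ho g hg u hu h2, hqu, hqg g hg h1]
    ring
  refine ⟨μ, hμ, ?_⟩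
  intro e he e' he'
  by_cases he0 : e = 0
  · simp [he0]
  obtain ⟨a, g, hg, rfl, h1, h2⟩ := dec e he he0 e' he'
  simp only [map_add, map_smul, inner_add_right, inner_smul_right, h1, ho e he g hg h1, hq e he]
  ring

end partC

section partD
open Metric Set Filter Topology
open scoped ComplexConjugate

theorem horiz_nonzero {V W : Type*} [NormedAddCommGroup V] [InnerProductSpace ℂ V]
    [FiniteDimensional ℂ V] [NormedAddCommGroup W] [InnerProductSpace ℂ W]
    [FiniteDimensional ℂ W] (hV : 2 ≤ Module.finrank ℂ V) {U : Set V} (hU : IsOpen U)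
    (hc : IsPreconnected U) {f : V → W} (hf : DifferentiableOn ℂ f U)
    (hn : ∃ z ∈ U, ∃ w ∈ U, f z ≠ f w) {p : V} (hpU : p ∈ U) (hp : ‖p‖ = 1) {ε : ℝ}
    (hε : 0 < ε) :
    ∃ q ∈ ball p ε, q ∈ U ∧ ‖q‖ = 1 ∧ ∃ e, inner ℂ q e = 0 ∧ fderiv ℂ f q e ≠ 0 := by
  by_contra hcon
  push Not at hcon
  obtain ⟨ε1, hε1, hb1⟩ := Metric.isOpen_iff.1 hU p hpU
  let δ := min ε ε1
  have hδ : 0 < δ := by positivity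
  have hbU : ball p δ ⊆ U := (ball_subset_ball (min_le_right _ _)).trans hb1
  have hz : ∀ q ∈ ball p δ, ‖q‖ = 1 → ∀ e, inner ℂ q e = 0 → fderiv ℂ f q e = 0 :=
    fun q hq h1 => hcon q (ball_subset_ball (min_le_left _ _) hq) (hbU hq) h1
  have hpp : inner ℂ p p = (1:ℂ) := by rw [inner_self_c, hp]; simp
  have hτ : ∃ τ > 0, τ < 1 ∧ ∀ t : ℝ, |t| < τ → |Real.cos t - 1| + 2 * |Real.sin t| < δ := by
    have : Continuous (fun t : ℝ => |Real.cos t - 1| + 2 * |Real.sin t|) := by fun_prop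
    have h2 := (this.tendsto 0)
    simp only [Real.cos_zero, Real.sin_zero, sub_self, abs_zero, mul_zero, add_zero] at h2
    have h3 := h2.eventually (gt_mem_nhds hδ)
    rw [Metric.eventually_nhds_iff] at h3
    obtain ⟨τ, h0, h4⟩ := h3
    refine ⟨min τ (1/2), by positivity, by
      have := min_le_right τ (1/2); linarith, ?_⟩
    intro t ht
    apply h4
    simp only [dist_zero_right, Real.norm_eq_abs]
    exact ht.trans_le (min_le_left _ _)
  obtain ⟨τ, hτ0, hτ1, hτ⟩ := hτ
  have hmem : ∀ e : V, ‖e‖ = 1 → ∀ t : ℝ, |t| < τ → ∀ ω : ℂ, ‖ω‖ ≤ 2 →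
      (Real.cos t : ℂ) • p + (ω * Real.sin t) • e ∈ ball p δ := by
    intro e he t ht ω hω
    rw [mem_ball, dist_eq_norm]
    have e1 : (Real.cos t : ℂ) • p + (ω * Real.sin t) • e - p = 
      ((Real.cos t - 1 : ℝ) : ℂ) • p + (ω * Real.sin t) • e := by
      push_cast; module
    rw [e1]
    refine (norm_add_le _ _).trans_lt ?_
    rw [norm_smul, norm_smul, he, hp, norm_mul, Complex.norm_real, Complex.norm_real]
    have := hτ t ht
    have h3 : ‖ω‖ * |Real.sin t| ≤ 2 * |Real.sin t| :=
      mul_le_mul_of_nonneg_right hω (abs_nonneg _)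
    simp only [Real.norm_eq_abs]
    linarith
  -- real circles
  have s0 : ∀ e : V, ‖e‖ = 1 → inner ℂ p e = 0 → ∀ t : ℝ, |t| < τ →
      f ((Real.cos t : ℂ) • p + (Real.sin t : ℂ) • e) = f p := by
    intro e he hpe t ht
    have hep : inner ℂ e p = 0 := by rw [← inner_conj_symm, hpe, map_zero]
    have hee : inner ℂ e e = (1:ℂ) := by rw [inner_self_c, he]; simp
    let c : ℝ → V := fun t => (Real.cos t : ℂ) • p + (Real.sin t : ℂ) • e
    have hcm : ∀ t : ℝ, |t| < τ → c t ∈ ball p δ := by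
      intro t ht
      simpa [c] using hmem e he t ht 1 (by simp)
    have hcd : ∀ t : ℝ, HasDerivAt c ((-Real.sin t : ℂ) • p + (Real.cos t : ℂ) • e) t := by
      intro t
      have h1 := ((Real.hasDerivAt_cos t).ofReal_comp).smul_const p
      have h2 := ((Real.hasDerivAt_sin t).ofReal_comp).smul_const e
      simpa [c] using h1.fun_add h2
    have hsc : ∀ t : ℝ, (Real.cos t : ℂ)^2 + (Real.sin t : ℂ)^2 = 1 := by
      intro t
      have := Real.cos_sq_add_sin_sq t
      exact_mod_cast this
    have hcn : ∀ t : ℝ, ‖c t‖ = 1 := by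
      intro t
      have h1 : inner ℂ (c t) (c t) = (1:ℂ) := by
        simp only [c, inner_add_left, inner_add_right, inner_smul_left, inner_smul_right, hpe, hep,
          hpp, hee, Complex.conj_ofReal]
        linear_combination hsc t
      rw [inner_self_c] at h1
      have h2 : ‖c t‖^2 = 1 := by exact_mod_cast h1
      have := norm_nonneg (c t)
      nlinarith
    have hfd : ∀ t : ℝ, |t| < τ → HasDerivAt (fun t => f (c t)) 0 t := by
      intro t ht
      have h1 : HasFDerivAt f (fderiv ℂ f (c t)) (c t) :=
        (hf.differentiableAt (hU.mem_nhds (hbU (hcm t ht)))).hasFDerivAt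
      have h2 := (h1.restrictScalars ℝ).comp_hasDerivAt t (hcd t)
      have h3 := hz (c t) (hcm t ht) (hcn t) ((-Real.sin t : ℂ) • p + (Real.cos t : ℂ) • e) (by
        simp only [c, inner_add_left, inner_add_right, inner_smul_left, inner_smul_right, hpe, hep,
          hpp, hee, Complex.conj_ofReal]
        ring)
      simp only [ContinuousLinearMap.coe_restrictScalars', h3] at h2
      exact h2
    have := (isOpen_ball (x := (0:ℝ)) (ε := τ)).is_const_of_deriv_eq_zero (f := fun t => f (c t))
      (convex_ball (0:ℝ) τ).isPreconnected
      (fun t ht => (hfd t (by simpa using ht)).differentiableAt.differentiableWithinAt)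
      (fun t ht => (hfd t (by simpa using ht)).deriv) (x := t) (y := 0) (by simpa using ht)
      (by simpa using hτ0)
    simpa [c] using this
  have s1 : ∀ e : V, ‖e‖ = 1 → inner ℂ p e = 0 → ∀ t : ℝ, |t| < τ → ∀ a : ℝ, 0 < a → a ≤ 1 →
      f ((Real.cos t : ℂ) • p + ((a:ℂ) * Real.sin t : ℂ) • e) = f p := by
    intro e he hpe t ht a ha0 ha1
    let H : Set ℂ := {ζ | -(1/2) < ζ.im}
    have hHo : IsOpen H := isOpen_lt continuous_const Complex.continuous_im
    have hHc : Convex ℝ H := convex_halfSpace_im_gt _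
    have hexp : ∀ ζ ∈ H, ‖Complex.exp (Complex.I * ζ)‖ ≤ 2 := by
      intro ζ hζ
      rw [Complex.norm_exp]
      simp
      have h1 : -ζ.im ≤ 1/2 := by have : -(1/2) < ζ.im := hζ; linarith
      refine (Real.exp_le_exp.2 h1).trans ?_
      have h2 : Real.exp (1/2) ^ 2 = Real.exp 1 := by rw [← Real.exp_nat_mul]; norm_num
      have h3 := Real.exp_one_lt_d9
      nlinarith [Real.exp_pos (1/2)]
    let φ : ℂ → W := fun ζ =>
      f ((Real.cos t : ℂ) • p + (Complex.exp (Complex.I * ζ) * Real.sin t) • e) - f p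
    have hφ : DifferentiableOn ℂ φ H := by
      apply DifferentiableOn.sub_const
      apply hf.comp (t := U)
      · apply Differentiable.differentiableOn
        fun_prop
      · intro ζ hζ
        exact hbU (hmem e he t ht _ (hexp ζ hζ))
    have hfr : ∃ᶠ ζ in 𝓝[≠] ((0:ℝ):ℂ), φ ζ = 0 := by
      apply freq_real 0 one_pos
      intro r _ _
      have hu : ‖Complex.exp (Complex.I * r)‖ = 1 := by
        rw [mul_comm]; exact Complex.norm_exp_ofReal_mul_I r
      have := s0 (Complex.exp (Complex.I * r) • e) (by rw [norm_smul, hu, he, mul_one])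
        (by rw [inner_smul_right, hpe, mul_zero]) t ht
      simp only [φ]
      rw [smul_smul, mul_comm] at this
      rw [this, sub_self]
    have := ident1 hHo hHc.isPreconnected hφ (t₀ := ((0:ℝ):ℂ)) (by simp [H]) hfr
      (t := -Complex.I * (Real.log a : ℝ)) (by
        have := Real.log_nonpos ha0.le ha1
        simp [H]; linarith)
    simp only [φ] at this
    have he1 : Complex.exp (Complex.I * (-Complex.I * (Real.log a : ℝ))) = a := by
      have : Complex.I * (-Complex.I * (Real.log a : ℝ)) = (Real.log a : ℝ) := by
        linear_combination (-(Real.log a : ℂ)) * Complex.I_sq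
      rw [this, ← Complex.ofReal_exp, Real.exp_log ha0]
    rw [he1] at this
    exact sub_eq_zero.1 this
  have s2 : ∀ e : V, ‖e‖ = 1 → inner ℂ p e = 0 → ∀ t : ℝ, 0 < t → t < τ → ∀ x : ℂ,
      x • p + (Real.sin t : ℂ) • e ∈ ball p δ → f (x • p + (Real.sin t : ℂ) • e) = f p := by
    intro e he hpe t ht0 ht x hx
    let ℓ : ℂ → V := fun x => x • p + (Real.sin t : ℂ) • e
    have hℓ : Differentiable ℂ ℓ := by fun_prop
    have hop : IsOpen (ℓ ⁻¹' (ball p δ)) := isOpen_ball.preimage hℓ.continuous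
    have hconv : Convex ℝ (ℓ ⁻¹' (ball p δ)) := by
      intro a ha b hb' u v hu hv huv
      have := (convex_ball p δ) ha hb' hu hv huv
      simp only [mem_preimage]
      convert this using 1
      simp only [ℓ]
      have hu' : (u:ℂ) + v = 1 := by exact_mod_cast huv
      rw [← Complex.coe_smul u (a • p + (Real.sin t : ℂ) • e), 
        ← Complex.coe_smul v (b • p + (Real.sin t : ℂ) • e)]
      simp only [Complex.real_smul]
      have e3 : (Real.sin t : ℂ) • e = ((u:ℂ) + v) • ((Real.sin t : ℂ) • e) := by 
        rw [hu', one_smul]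
      nth_rewrite 1 [e3]
      module
    have hdd : DifferentiableOn ℂ (fun μ => f (ℓ μ) - f p) (ℓ ⁻¹' (ball p δ)) := by
      apply DifferentiableOn.sub_const
      exact hf.comp hℓ.differentiableOn (fun t ht => hbU ht)
    have hsinpos : ∀ t : ℝ, 0 < t → t < τ → 0 < Real.sin t := fun t h0 h1 =>
      Real.sin_pos_of_pos_of_lt_pi h0 (by linarith [Real.pi_gt_three])
    have hcosmem : ∀ t' : ℝ, t ≤ t' → t' < τ → ((Real.cos t' : ℝ):ℂ) ∈ ℓ ⁻¹' (ball p δ) ∧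
        f (ℓ (Real.cos t' : ℝ)) - f p = 0 := by
      intro t' h1 h2
      have hs' := hsinpos t' (by linarith) h2
      have hs := hsinpos t ht0 ht
      have hle : Real.sin t / Real.sin t' ≤ 1 := by
        rw [div_le_one hs']
        apply Real.sin_le_sin_of_le_of_le_pi_div_two _ _ h1
        · linarith [Real.pi_gt_three]
        · linarith [Real.pi_gt_three]
      have habs : |t'| < τ := by rw [abs_of_pos (by linarith)]; exact h2
      have e1 : (((Real.sin t / Real.sin t' : ℝ):ℂ) * Real.sin t') = Real.sin t := by
        rw [← Complex.ofReal_mul, div_mul_cancel₀ _ hs'.ne']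
      constructor
      · have := hmem e he t' habs ((Real.sin t / Real.sin t' : ℝ):ℂ) (by
          rw [Complex.norm_real, Real.norm_eq_abs, abs_of_pos (by positivity)]; linarith)
        rw [e1] at this
        exact this
      · have := s1 e he hpe t' habs (Real.sin t / Real.sin t') (by positivity) hle
        rw [e1] at this
        simp only [ℓ]
        rw [this, sub_self]
    let t1 := (t + τ)/2
    have hfr : ∃ᶠ x in 𝓝[≠] ((Real.cos t1 : ℝ):ℂ), f (ℓ x) - f p = 0 := by
      have hcl : Real.cos t1 < Real.cos t := by
        apply Real.cos_lt_cos_of_nonneg_of_le_pi_div_two ht0.le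
        · simp only [t1]; linarith [Real.pi_gt_three]
        · simp only [t1]; linarith
      apply freq_real (Real.cos t1) (ε := Real.cos t - Real.cos t1) (by linarith)
      intro r hr1 hr2
      have hr3 : r < Real.cos t := by linarith
      have hrm : -1 ≤ r := (Real.neg_one_le_cos t1).trans hr1.le
      have hrM : r ≤ 1 := hr3.le.trans (Real.cos_le_one t)
      have e1 : r = Real.cos (Real.arccos r) := (Real.cos_arccos hrm hrM).symm
      have a1 : t ≤ Real.arccos r := by
        by_contra h
        push Not at h
        have := Real.cos_lt_cos_of_nonneg_of_le_pi_div_two (Real.arccos_nonneg r) 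
          (by linarith [Real.pi_gt_three]) h
        linarith
      have a2 : Real.arccos r < τ := by
        by_contra h
        push Not at h
        have ht1 : t1 ≤ Real.arccos r := by simp only [t1]; linarith
        have := Real.cos_le_cos_of_nonneg_of_le_pi (by simp only [t1]; linarith) 
          (Real.arccos_le_pi r) ht1
        linarith
      have := (hcosmem _ a1 a2).2
      rw [← e1] at this
      exact this
    have := ident1 hop hconv.isPreconnected hdd
      (hcosmem t1 (by simp only [t1]; linarith) (by simp only [t1]; linarith)).1 hfr hx
    exact sub_eq_zero.1 this
  let ε' := min δ (Real.sin τ)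
  have hε' : 0 < ε' := by
    have : 0 < Real.sin τ := Real.sin_pos_of_pos_of_lt_pi hτ0 (by linarith [Real.pi_gt_three])
    positivity
  have s3 : ∀ z ∈ ball p ε', z - (inner ℂ p z : ℂ) • p ≠ 0 → f z = f p := by
    intro z hz hne
    set g := z - (inner ℂ p z : ℂ) • p with hg
    have hpg : inner ℂ p g = 0 := by
      rw [hg, inner_sub_right, inner_smul_right, hpp]; ring
    have hzd : ‖z - p‖ < ε' := by rwa [mem_ball, dist_eq_norm] at hz
    have hgn : ‖g‖ ≤ ‖z - p‖ := by
      have e1 : z - p = (inner ℂ p z - 1 : ℂ) • p + g := by rw [hg]; module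
      have := norm_add_sq_eq_norm_sq_add_norm_sq_of_inner_eq_zero 
        ((inner ℂ p z - 1 : ℂ) • p) g (by rw [inner_smul_left, hpg, mul_zero])
      rw [← e1] at this
      nlinarith [norm_nonneg (z-p), norm_nonneg g, norm_nonneg ((inner ℂ p z - 1 : ℂ) • p)]
    have hg0 : 0 < ‖g‖ := norm_pos_iff.2 hne
    have hgs : ‖g‖ < Real.sin τ := (hgn.trans_lt hzd).trans_le (min_le_right _ _)
    have hg1 : ‖g‖ ≤ 1 := hgs.le.trans (Real.sin_le_one _)
    have hsin : Real.sin (Real.arcsin ‖g‖) = ‖g‖ := Real.sin_arcsin (by linarith) hg1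
    have ht0 : 0 < Real.arcsin ‖g‖ := Real.arcsin_pos.2 hg0
    have htτ : Real.arcsin ‖g‖ < τ := by
      rw [Real.arcsin_lt_iff_lt_sin' ⟨by linarith [Real.pi_gt_three], by linarith [Real.pi_gt_three]⟩]
      exact hgs
    have hzeq : (inner ℂ p z : ℂ) • p + (‖g‖ : ℂ) • ((‖g‖⁻¹ : ℂ) • g) = z := by
      rw [smul_smul, mul_inv_cancel₀ (by exact_mod_cast hg0.ne'), one_smul, hg]; module
    have := s2 ((‖g‖⁻¹ : ℂ) • g) (by
        rw [norm_smul]; simp; exact inv_mul_cancel₀ hg0.ne') (by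
        rw [inner_smul_right, hpg, mul_zero]) (Real.arcsin ‖g‖) ht0 htτ (inner ℂ p z) (by
        rw [hsin, hzeq]
        exact ball_subset_ball (min_le_left _ _) hz)
    rw [hsin, hzeq] at this
    exact this
  -- conclude
  have hconst : ∀ z ∈ U, f z - f p = 0 := by
    apply identU hU hc (hf.sub_const (f p)) 
      (O := ball p ε' ∩ {z | z - (inner ℂ p z : ℂ) • p ≠ 0})
    · apply isOpen_ball.inter
      apply isOpen_ne_fun _ continuous_const
      fun_prop
    · have hnb : ((ℂ ∙ p)ᗮ : Submodule ℂ V) ≠ ⊥ := by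
        intro hb
        have hp0 : p ≠ 0 := by rintro rfl; simp at hp
        have f1 := finrank_inf_orth (⊤ : Submodule ℂ V) (x := p) trivial hp0
        rw [hb, inf_bot_eq, finrank_bot, finrank_top] at f1
        omega
      obtain ⟨e, he, he0⟩ := Submodule.exists_mem_ne_zero_of_ne_bot hnb
      have hpe : inner ℂ p e = 0 := Submodule.mem_orthogonal_singleton_iff_inner_right.1 he
      have hen : 0 < ‖e‖ := norm_pos_iff.2 he0
      have hm : p + ((ε'/2/‖e‖ : ℝ) : ℂ) • e ∈ ball p ε' := by
        rw [mem_ball, dist_eq_norm, add_sub_cancel_left, norm_smul, Complex.norm_real, 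
          Real.norm_eq_abs, abs_of_pos (by positivity), div_mul_cancel₀ _ hen.ne']
        linarith
      refine ⟨p + ((ε'/2/‖e‖ : ℝ) : ℂ) • e, hbU (ball_subset_ball (min_le_left _ _) hm), hm, ?_⟩
      simp only [mem_ofPred_eq, inner_add_right, inner_smul_right, hpe, hpp, mul_zero, add_zero,
        one_smul, add_sub_cancel_left]
      apply smul_ne_zero _ he0
      rw [Ne, Complex.ofReal_eq_zero]
      positivity
    · rintro z ⟨_, hz1, hz2⟩
      rw [s3 z hz1 hz2, sub_self]
  obtain ⟨z, hzU, w, hwU, hne⟩ := hn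
  exact hne ((sub_eq_zero.1 (hconst z hzU)).trans (sub_eq_zero.1 (hconst w hwU)).symm)

end partD

section partE
open Metric Set Filter Topology
open scoped ComplexConjugate

theorem seven {V W ι : Type*} [NormedAddCommGroup V] [InnerProductSpace ℂ V]
    [FiniteDimensional ℂ V] [NormedAddCommGroup W] [InnerProductSpace ℂ W]
    [FiniteDimensional ℂ W] [Fintype ι] [DecidableEq ι] (f : ι → V → W) {q : V} {r : ℝ}
    (hq : ‖q‖ = 1) (hdim : Module.finrank ℂ W + 2 < Fintype.card ι + 2 * Module.finrank ℂ V)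
    (hd : ∀ i, DifferentiableOn ℂ (f i) (ball q r))
    (hK : ∀ z ∈ ball q r, ∀ w ∈ ball q r, inner ℂ w z = (1:ℂ) → ∀ i j,
      inner ℂ (f j w) (f i z) = if i = j then (1:ℂ) else 0)
    {i0 : ι} {e0 : V} (he0 : inner ℂ q e0 = 0) (hL0 : fderiv ℂ (f i0) q e0 ≠ 0) :
    ∀ z ∈ ball q r, ∀ w ∈ ball q r, ∀ z' ∈ ball q r, ∀ w' ∈ ball q r,
      inner ℂ q z = (1:ℂ) → inner ℂ q w = (1:ℂ) → inner ℂ q z' = (1:ℂ) → inner ℂ q w' = (1:ℂ) →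
      ∀ i j k l,
      (inner ℂ (f j w) (f i z) - if i = j then (1:ℂ) else 0) *
      (inner ℂ (f l w') (f k z') - if k = l then (1:ℂ) else 0) *
      (inner ℂ w' z - 1) * (inner ℂ w z' - 1) =
      (inner ℂ (f l w') (f i z) - if i = l then (1:ℂ) else 0) *
      (inner ℂ (f j w) (f k z') - if k = j then (1:ℂ) else 0) *
      (inner ℂ w z - 1) * (inner ℂ w' z' - 1) := by
  intro z0 hz0
  have hr : 0 < r := pos_of_mem_ball hz0
  revert z0
  have hq0 : q ≠ 0 := by rintro rfl; simp at hq
  have hqq : inner ℂ q q = (1:ℂ) := by rw [inner_self_c, hq]; simp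
  have hqm : q ∈ ball q r := mem_ball_self hr
  let D : Submodule ℂ V := (ℂ ∙ q)ᗮ
  have hDm : ∀ e, e ∈ D ↔ inner ℂ q e = 0 := fun e =>
    Submodule.mem_orthogonal_singleton_iff_inner_right
  have hDm' : ∀ e ∈ D, inner ℂ e q = 0 := fun e he => by
    rw [← inner_conj_symm, (hDm e).1 he, map_zero]
  have hDf : Module.finrank ℂ D + 1 = Module.finrank ℂ V := by
    have := finrank_inf_orth (⊤ : Submodule ℂ V) (x := q) trivial hq0
    rwa [top_inf_eq, finrank_top] at this
  let g : ι → V → W := fun i e => f i (q + e) - f i q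
  have hmem : ∀ e : V, ‖e‖ < r → q + e ∈ ball q r := by
    intro e he; simpa [mem_ball, dist_eq_norm] using he
  have hg0 : ∀ i, g i 0 = 0 := by intro i; simp [g]
  have hfg : ∀ e ∈ D, ‖e‖ < r → ∀ i j, inner ℂ (f j q) (g i e) = 0 := by
    intro e he her i j
    simp only [g, inner_sub_right]
    rw [hK _ (hmem e her) q hqm (by rw [inner_add_right, hqq, (hDm e).1 he, add_zero]),
      hK q hqm q hqm hqq, sub_self]
  have hgg : ∀ e ∈ D, ‖e‖ < r → ∀ e' ∈ D, ‖e'‖ < r → ∀ i j, 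
      inner ℂ (g j e') (g i e) = inner ℂ (f j (q+e')) (f i (q+e)) - if i = j then (1:ℂ) else 0 := by
    intro e he her e' he' her' i j
    have h1 := hfg e he her i j
    have : inner ℂ (g j e') (g i e) = inner ℂ (f j (q+e')) (g i e) - inner ℂ (f j q) (g i e) := by
      simp only [g, inner_sub_left]
    rw [this, h1, sub_zero]
    simp only [g, inner_sub_right]
    rw [hK q hqm _ (hmem e' her') (by rw [inner_add_left, hqq, hDm' e' he', add_zero])]
  have hggo : ∀ e ∈ D, ‖e‖ < r → ∀ e' ∈ D, ‖e'‖ < r → inner ℂ e' e = 0 → ∀ i j,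
      inner ℂ (g j e') (g i e) = 0 := by
    intro e he her e' he' her' ho i j
    rw [hgg e he her e' he' her', hK _ (hmem e her) _ (hmem e' her'), sub_self]
    simp only [inner_add_left, inner_add_right, hqq, ho, (hDm e).1 he, hDm' e' he']
    ring
  let L : V →L[ℂ] W := fderiv ℂ (f i0) q
  have hsmall : ∀ e : V, ∀ᶠ t : ℂ in 𝓝 0, ‖t • e‖ < r := by
    intro e
    have : Continuous (fun t : ℂ => ‖t • e‖) := by fun_prop
    have := this.tendsto 0
    simp only [zero_smul, norm_zero] at this
    exact this.eventually (gt_mem_nhds hr)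
  have hLg : ∀ e : V, ∀ w : W, (∀ᶠ t : ℂ in 𝓝 0, inner ℂ w (g i0 (t • e)) = 0) →
      inner ℂ w (L e) = 0 := by
    intro e w hev
    have hl : HasDerivAt (fun t : ℂ => q + t • e) e 0 := by
      simpa using ((hasDerivAt_id (0:ℂ)).smul_const e).const_add q
    have h1 : HasFDerivAt (f i0) L (q + (0:ℂ) • e) := by
      simpa using ((hd i0).differentiableAt (isOpen_ball.mem_nhds hqm)).hasFDerivAt
    have h2 := (h1.comp_hasDerivAt (0:ℂ) hl).sub_const (f i0 q)
    have h3 : HasDerivAt (fun t : ℂ => inner ℂ w (g i0 (t • e))) (inner ℂ w (L e)) 0 := by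
      have h5 : HasFDerivAt (fun x => innerSL ℂ w x) (innerSL ℂ w)
          (f i0 (q + (0:ℂ) • e) - f i0 q) := (innerSL ℂ w).hasFDerivAt
      exact h5.comp_hasDerivAt (0:ℂ) h2
    have h4 : HasDerivAt (fun t : ℂ => inner ℂ w (g i0 (t • e))) 0 0 :=
      (hasDerivAt_const (0:ℂ) (0:ℂ)).congr_of_eventuallyEq hev
    exact h3.unique h4
  have hfL : ∀ e ∈ D, ∀ j, inner ℂ (f j q) (L e) = 0 := by
    intro e he j
    apply hLg
    filter_upwards [hsmall e] with t ht
    exact hfg _ (D.smul_mem _ he) ht _ _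
  have hgL : ∀ e ∈ D, ∀ e' ∈ D, ‖e'‖ < r → inner ℂ e' e = 0 → ∀ i, inner ℂ (g i e') (L e) = 0 := by
    intro e he e' he' her' ho i
    apply hLg
    filter_upwards [hsmall e] with t ht
    exact hggo _ (D.smul_mem _ he) ht _ he' her' (by rw [inner_smul_right, ho, mul_zero]) _ _
  have hLgi : ∀ e ∈ D, ∀ e' ∈ D, ‖e'‖ < r → inner ℂ e e' = 0 → ∀ i, 
      inner ℂ (L e) (g i e') = 0 := by
    intro e he e' he' her' ho i
    rw [← inner_conj_symm, hgL e he e' he' her' (by rw [← inner_conj_symm, ho, map_zero]), map_zero]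
  have hLL : ∀ e ∈ D, ∀ e' ∈ D, inner ℂ e e' = 0 → inner ℂ (L e) (L e') = 0 := by
    intro e he e' he' ho
    apply hLg
    filter_upwards [hsmall e'] with t ht
    exact hLgi _ he _ (D.smul_mem _ he') ht (by rw [inner_smul_right, ho, mul_zero]) _
  obtain ⟨μ, hμ, hμL⟩ := sesq (L : V →ₗ[ℂ] W) D hLL ((hDm e0).2 he0) hL0
  simp only [ContinuousLinearMap.coe_coe] at hμL
  have hμ0 : (μ:ℂ) ≠ 0 := by exact_mod_cast hμ.ne'
  let Rg : Submodule ℂ W := D.map (L : V →ₗ[ℂ] W)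
  have hRgf : Module.finrank ℂ Rg = Module.finrank ℂ D := by
    have h1 : Function.Injective ((L : V →ₗ[ℂ] W).domRestrict D) := by
      rw [← LinearMap.ker_eq_bot, LinearMap.ker_eq_bot']
      rintro ⟨e, he⟩ h
      have h2 : L e = 0 := h
      have h3 := hμL e he e he
      rw [h2, inner_zero_left] at h3
      have h4 := (mul_eq_zero.1 h3.symm).resolve_left hμ0
      exact Subtype.ext (inner_self_eq_zero.1 h4)
    have h2 := LinearMap.finrank_range_of_inj h1
    rwa [LinearMap.range_domRestrict] at h2
  let Sp : Submodule ℂ W := Submodule.span ℂ (range fun j => f j q)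
  have hSpf : Module.finrank ℂ Sp = Fintype.card ι := by
    have : Orthonormal ℂ (fun j => f j q) := by
      rw [orthonormal_iff_ite]
      intro i j
      rw [hK q hqm q hqm hqq]
      simp [eq_comm]
    exact finrank_span_eq_card this.linearIndependent
  have hSpo : ∀ w, w ∈ Spᗮ ↔ ∀ j, inner ℂ (f j q) w = 0 := by
    intro w
    constructor
    · intro h j
      exact (Submodule.mem_orthogonal _ _).1 h _ (Submodule.subset_span ⟨j, rfl⟩)
    · intro h
      rw [Submodule.mem_orthogonal]
      intro u hu
      induction hu using Submodule.span_induction with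
      | mem x hx => obtain ⟨j, rfl⟩ := hx; exact h j
      | zero => simp
      | add x y _ _ hx hy => rw [inner_add_left, hx, hy, add_zero]
      | smul a x _ hx => rw [inner_smul_left, hx, mul_zero]
  have hRgSp : Rg ≤ Spᗮ := by
    rintro _ ⟨e, he, rfl⟩
    exact (hSpo _).2 (hfL e he)
  let C : Submodule ℂ W := (Sp ⊔ Rg)ᗮ
  have hCm : ∀ w, w ∈ C ↔ w ∈ Spᗮ ∧ w ∈ Rgᗮ := by
    intro w
    simp only [C, ← Submodule.inf_orthogonal, Submodule.mem_inf]
  have hCf : Module.finrank ℂ C < Module.finrank ℂ D := by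
    have h1 := Submodule.finrank_sup_add_finrank_inf_eq Sp Rg
    have h2 : Sp ⊓ Rg = ⊥ := by
      rw [← le_bot_iff]
      exact (inf_le_inf_left _ hRgSp).trans (Submodule.inf_orthogonal_eq_bot Sp).le
    rw [h2, finrank_bot] at h1
    have h3 := Submodule.finrank_add_finrank_orthogonal (Sp ⊔ Rg)
    change _ + Module.finrank ℂ C = _ at h3
    omega
  let P : W →L[ℂ] W := Rg.starProjection
  have hPm : ∀ w, P w ∈ Rg := fun w => Submodule.starProjection_apply_mem Rg w
  have hPo : ∀ w, w - P w ∈ Rgᗮ := fun w => Submodule.sub_starProjection_mem_orthogonal w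
  have hPi : ∀ u ∈ Rg, ∀ w, inner ℂ u w = inner ℂ u (P w) := by
    intro u hu w
    have := (Submodule.mem_orthogonal _ _).1 (hPo w) u hu
    rw [inner_sub_right] at this
    exact sub_eq_zero.1 this
  have hc : ∀ i, ∀ e ∈ D, ‖e‖ < r → ∃ c : ℂ, P (g i e) = c • L e := by
    intro i e he her
    by_cases hez : e = 0
    · refine ⟨0, ?_⟩
      rw [hez, hg0]; simp
    obtain ⟨u, hu, hLu⟩ := hPm (g i e)
    have hLu : L u = P (g i e) := hLu
    have hn : (‖e‖:ℂ) ≠ 0 := by simpa using hez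
    set v := u - (inner ℂ e u / ‖e‖^2 : ℂ) • e with hv
    have hvD : v ∈ D := D.sub_mem hu (D.smul_mem _ he)
    have hev : inner ℂ e v = 0 := by
      rw [hv, inner_sub_right, inner_smul_right, inner_self_c]
      field_simp
      ring
    have hve : inner ℂ v e = 0 := by rw [← inner_conj_symm, hev, map_zero]
    have h1 := hLgi v hvD e he her hve i
    rw [hPi (L v) ⟨v, hvD, rfl⟩, ← hLu, hμL v hvD u hu] at h1
    have h2 := (mul_eq_zero.1 h1).resolve_left hμ0
    have h3 : u = v + (inner ℂ e u / ‖e‖^2 : ℂ) • e := by rw [hv]; abel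
    rw [h3, inner_add_right, inner_smul_right, hve, mul_zero, add_zero] at h2
    have h4 : v = 0 := inner_self_eq_zero.1 h2
    refine ⟨inner ℂ e u / ‖e‖^2, ?_⟩
    rw [← hLu]
    nth_rewrite 1 [h3]
    rw [h4, zero_add, map_smul]
  have hh0 : ∀ i, ∀ e ∈ D, ‖e‖ < r → g i e - P (g i e) = 0 := by
    intro i
    have hdh : DifferentiableOn ℂ (fun e => g i e - P (g i e)) (ball 0 r) := by
      have hgd : DifferentiableOn ℂ (g i) (ball 0 r) := by
        apply DifferentiableOn.sub_const
        apply (hd i).comp (by fun_prop)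
        intro e he
        exact hmem e (by simpa using he)
      exact hgd.sub (P.differentiable.comp_differentiableOn hgd)
    apply huang1 hdh _ D C rfl hCf
    · intro e he her
      rw [hCm]
      refine ⟨Submodule.sub_mem _ ((hSpo _).2 fun j => hfg e he her i j) (hRgSp (hPm _)), hPo _⟩
    · intro e he e' he' her her' ho
      have h1 := hggo e' he' her' e he her ho i i
      obtain ⟨c, hc1⟩ := hc i e he her
      obtain ⟨c', hc1'⟩ := hc i e' he' her'
      have h2 : inner ℂ (P (g i e)) (P (g i e')) = 0 := by
        rw [hc1, hc1', inner_smul_left, inner_smul_right, hμL e he e' he', ho]; ring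
      have h3 : inner ℂ (P (g i e)) (g i e' - P (g i e')) = 0 := by
        rw [inner_sub_right, hPi _ (hPm _), sub_self]
      have h4 : inner ℂ (g i e - P (g i e)) (P (g i e')) = 0 := by
        rw [← inner_conj_symm, inner_sub_right, hPi _ (hPm _), sub_self, map_zero]
      rw [inner_sub_right, h4, sub_zero]
      rw [inner_sub_left, h1, hPi _ (hPm _), h2, sub_zero]
  choose! c hcc using hc
  have hfin : ∀ e ∈ D, ‖e‖ < r → ∀ e' ∈ D, ‖e'‖ < r → ∀ i j, 
      inner ℂ (f j (q+e')) (f i (q+e)) - (if i = j then (1:ℂ) else 0) =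
        μ * c i e * conj (c j e') * inner ℂ e' e := by
    intro e he her e' he' her' i j
    rw [← hgg e he her e' he' her', sub_eq_zero.1 (hh0 i e he her), 
      sub_eq_zero.1 (hh0 j e' he' her'), hcc i e he her, hcc j e' he' her',
      inner_smul_left, inner_smul_right, hμL e' he' e he]
    ring
  have hrep : ∀ z ∈ ball q r, inner ℂ q z = (1:ℂ) → ∃ e ∈ D, ‖e‖ < r ∧ z = q + e := by
    intro z hz h1
    refine ⟨z - q, ?_, by rwa [mem_ball, dist_eq_norm] at hz, by abel⟩
    rw [hDm, inner_sub_right, h1, hqq, sub_self]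
  intro z hz w hw z' hz' w' hw' h1 h2 h3 h4 i j k l
  obtain ⟨e1, he1, hr1, rfl⟩ := hrep z hz h1
  obtain ⟨e2, he2, hr2, rfl⟩ := hrep w hw h2
  obtain ⟨e3, he3, hr3, rfl⟩ := hrep z' hz' h3
  obtain ⟨e4, he4, hr4, rfl⟩ := hrep w' hw' h4
  rw [hfin e1 he1 hr1 e2 he2 hr2, hfin e3 he3 hr3 e4 he4 hr4, hfin e1 he1 hr1 e4 he4 hr4,
    hfin e3 he3 hr3 e2 he2 hr2]
  simp only [inner_add_left, inner_add_right, hqq, (hDm _).1 he1, (hDm _).1 he3, hDm' _ he2,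
    hDm' _ he4]
  ring

end partE

section partF
open Metric Set Filter Topology
open scoped ComplexConjugate

noncomputable def Kf {V W ι : Type*} [NormedAddCommGroup V] [InnerProductSpace ℂ V] [NormedAddCommGroup W]
    [InnerProductSpace ℂ W] [DecidableEq ι] (f : ι → V → W) (i j : ι) (z w : V) : ℂ :=
  inner ℂ (f j w) (f i z) - if i = j then (1:ℂ) else 0

noncomputable def Qf {V W ι : Type*} [NormedAddCommGroup V] [InnerProductSpace ℂ V] [NormedAddCommGroup W]
    [InnerProductSpace ℂ W] [DecidableEq ι] (f : ι → V → W) (i j k l : ι) (z w z' w' : V) : ℂ :=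
  Kf f i j z w * Kf f k l z' w' * (inner ℂ w' z - 1) * (inner ℂ w z' - 1) -
  Kf f i l z w' * Kf f k j z' w * (inner ℂ w z - 1) * (inner ℂ w' z' - 1)

theorem Kf_diff {V W ι : Type*} [NormedAddCommGroup V] [InnerProductSpace ℂ V]
    [NormedAddCommGroup W] [InnerProductSpace ℂ W]
    [FiniteDimensional ℂ W] [DecidableEq ι] (f : ι → V → W) {S : Set V}
    (hf : ∀ i, DifferentiableOn ℂ (f i) S) {R : ℝ} {z w : ℂ → V}
    (hz : DifferentiableOn ℂ z (ball 0 R)) (hw : DifferentiableOn ℂ (fun t => w (conj t)) (ball 0 R))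
    (hzS : ∀ t ∈ ball (0:ℂ) R, z t ∈ S) (hwS : ∀ t ∈ ball (0:ℂ) R, w t ∈ S) (i j : ι) :
    DifferentiableOn ℂ (fun t => Kf f i j (z t) (w t)) (ball 0 R) := by
  apply DifferentiableOn.sub_const
  apply diffOn_inner_conj (g := fun t => f j (w t)) (h := fun t => f i (z t))
  · exact (hf j).comp hw (fun t ht => hwS _ (by simpa using ht))
  · exact (hf i).comp hz hzS

theorem lam_diff {V : Type*} [NormedAddCommGroup V] [InnerProductSpace ℂ V] [FiniteDimensional ℂ V]
    {R : ℝ} {z w : ℂ → V}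
    (hz : DifferentiableOn ℂ z (ball 0 R)) 
    (hw : DifferentiableOn ℂ (fun t => w (conj t)) (ball 0 R)) :
    DifferentiableOn ℂ (fun t => inner ℂ (w t) (z t) - (1:ℂ)) (ball 0 R) :=
  (diffOn_inner_conj hw hz).sub_const _

theorem scale_near {V : Type*} [NormedAddCommGroup V] [InnerProductSpace ℂ V] {p : V}
    (hp : ‖p‖ = 1) {δ : ℝ} (hδ : 0 < δ) : ∃ δ2 > 0, ∀ q ∈ ball p δ2, ∀ x ∈ ball p δ2,
      inner ℂ q x ≠ (0:ℂ) ∧ (inner ℂ q x : ℂ)⁻¹ • x ∈ ball p δ := by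
  have hpp : inner ℂ p p = (1:ℂ) := by rw [inner_self_c, hp]; simp
  have hc1 : ContinuousAt (fun a : V × V => (inner ℂ a.1 a.2 : ℂ)) (p, p) := by fun_prop
  have hc2 : ContinuousAt (fun a : V × V => (inner ℂ a.1 a.2 : ℂ)⁻¹ • a.2) (p, p) := by
    apply ContinuousAt.smul _ continuousAt_snd
    apply hc1.inv₀
    simp only [hpp]; exact one_ne_zero
  have h1 : ∀ᶠ a : V × V in 𝓝 (p, p), (inner ℂ a.1 a.2 : ℂ) ≠ 0 :=
    hc1.eventually_ne (by simp only [hpp]; exact one_ne_zero)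
  have h2 : ∀ᶠ a : V × V in 𝓝 (p, p), (inner ℂ a.1 a.2 : ℂ)⁻¹ • a.2 ∈ ball p δ := by
    apply hc2.eventually_mem
    simp only [hpp, inv_one, one_smul]
    exact ball_mem_nhds p hδ
  have h3 := h1.and h2
  rw [Metric.eventually_nhds_iff] at h3
  obtain ⟨δ2, hδ2, h⟩ := h3
  refine ⟨δ2, hδ2, fun q hq x hx => ?_⟩
  exact h (y := (q, x)) (by rw [Prod.dist_eq]; exact max_lt hq hx)

theorem eight {V W ι : Type*} [NormedAddCommGroup V] [InnerProductSpace ℂ V]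
    [FiniteDimensional ℂ V] [NormedAddCommGroup W] [InnerProductSpace ℂ W]
    [FiniteDimensional ℂ W] [DecidableEq ι] (f : ι → V → W) {p : V} {δ : ℝ} (hδ : 0 < δ)
    (hp : ‖p‖ = 1)
    (hd : ∀ i, DifferentiableOn ℂ (f i) (ball p δ))
    (h7 : ∀ q ∈ ball p δ, ‖q‖ = 1 → ∀ z ∈ ball p δ, ∀ w ∈ ball p δ, ∀ z' ∈ ball p δ,
      ∀ w' ∈ ball p δ, inner ℂ q z = (1:ℂ) → inner ℂ q w = (1:ℂ) → inner ℂ q z' = (1:ℂ) → 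
      inner ℂ q w' = (1:ℂ) → ∀ i j k l, Qf f i j k l z w z' w' = 0) :
    ∃ δ' > 0, δ' ≤ δ ∧ ∀ q ∈ ball p δ', ∀ q' ∈ ball p δ', inner ℂ q' q = (1:ℂ) →
      ∀ z ∈ ball p δ', ∀ w ∈ ball p δ', ∀ z' ∈ ball p δ',
      ∀ w' ∈ ball p δ', inner ℂ q' z = (1:ℂ) → inner ℂ q w = (1:ℂ) → inner ℂ q' z' = (1:ℂ) → 
      inner ℂ q w' = (1:ℂ) → ∀ i j k l, Qf f i j k l z w z' w' = 0 := by
  obtain ⟨δ1, hδ1, hsc⟩ := scale_near hp hδ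
  obtain ⟨δ', hδ', hle, hpol⟩ := polar_lemma p hp (δ := min δ δ1) (by positivity)
  refine ⟨δ', hδ', hle.trans (min_le_left _ _), ?_⟩
  have hsub1 : ball p (min δ δ1) ⊆ ball p δ := ball_subset_ball (min_le_left _ _)
  have hsub2 : ball p (min δ δ1) ⊆ ball p δ1 := ball_subset_ball (min_le_right _ _)
  have hsub3 : ball p δ' ⊆ ball p δ1 := (ball_subset_ball hle).trans hsub2
  intro q hq q' hq' hqq' x hx y hy x' hx' y' hy' h1 h2 h3 h4 i j k l
  let N : V → V → V := fun q x => (inner ℂ q x : ℂ)⁻¹ • x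
  have hN1 : ∀ q x, inner ℂ q x = (1:ℂ) → N q x = x := by
    intro q x h; simp only [N, h, inv_one, one_smul]
  have hN2 : ∀ q x, inner ℂ q x ≠ (0:ℂ) → inner ℂ q (N q x) = (1:ℂ) := by
    intro q x h; simp only [N, inner_smul_right]; exact inv_mul_cancel₀ h
  have hNd : ∀ (c : ℂ → V), DifferentiableOn ℂ (fun t => c (conj t)) (ball 0 2) →
      (∀ t ∈ ball (0:ℂ) 2, c t ∈ ball p (min δ δ1)) → ∀ x ∈ ball p δ1,
      DifferentiableOn ℂ (fun t => N (c t) x) (ball 0 2) := by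
    intro c hc hcb x hx
    apply DifferentiableOn.smul_const
    apply DifferentiableOn.inv
    · exact diffOn_inner_conj (h := fun _ => x) hc (by fun_prop)
    · intro t ht
      exact (hsc _ (hsub2 (hcb t ht)) x hx).1
  have hNb : ∀ (c : ℂ → V), 
      (∀ t ∈ ball (0:ℂ) 2, c t ∈ ball p (min δ δ1)) → ∀ x ∈ ball p δ1,
      ∀ t ∈ ball (0:ℂ) 2, N (c t) x ∈ ball p δ := by
    intro c hcb x hx t ht
    exact (hsc _ (hsub2 (hcb t ht)) x hx).2
  have := hpol (fun q q' => Qf f i j k l (N q' x) (N q y) (N q' x') (N q y')) ?_ ?_ q hq q' hq' hqq'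
  · simp only [hN1 _ _ h1, hN1 _ _ h2, hN1 _ _ h3, hN1 _ _ h4] at this
    exact this
  · intro z w hz hw hzb hwb
    have a1 := hNd w hw hwb x (hsub3 hx)
    have a2 := hNd w hw hwb x' (hsub3 hx')
    have hcb : ∀ t ∈ ball (0:ℂ) 2, conj t ∈ ball (0:ℂ) 2 := by intro t ht; simpa using ht
    have a3 := hNd (fun t => z (conj t)) (by simpa using hz) (fun t ht => hzb _ (hcb t ht)) y
      (hsub3 hy)
    have a4 := hNd (fun t => z (conj t)) (by simpa using hz) (fun t ht => hzb _ (hcb t ht)) y'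
      (hsub3 hy')
    have b1 := hNb w hwb x (hsub3 hx)
    have b2 := hNb w hwb x' (hsub3 hx')
    have b3 := hNb z hzb y (hsub3 hy)
    have b4 := hNb z hzb y' (hsub3 hy')
    refine DifferentiableOn.sub (((DifferentiableOn.mul ?_ ?_).mul ?_).mul ?_)
      (((DifferentiableOn.mul ?_ ?_).mul ?_).mul ?_)
    · exact Kf_diff f hd (z := fun t => N (w t) x) (w := fun t => N (z t) y) a1 a3 b1 b3 _ _
    · exact Kf_diff f hd (z := fun t => N (w t) x') (w := fun t => N (z t) y') a2 a4 b2 b4 _ _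
    · exact lam_diff (z := fun t => N (w t) x) (w := fun t => N (z t) y') a1 a4
    · exact lam_diff (z := fun t => N (w t) x') (w := fun t => N (z t) y) a2 a3
    · exact Kf_diff f hd (z := fun t => N (w t) x) (w := fun t => N (z t) y') a1 a4 b1 b4 _ _
    · exact Kf_diff f hd (z := fun t => N (w t) x') (w := fun t => N (z t) y) a2 a3 b2 b3 _ _
    · exact lam_diff (z := fun t => N (w t) x) (w := fun t => N (z t) y) a1 a3
    · exact lam_diff (z := fun t => N (w t) x') (w := fun t => N (z t) y') a2 a4
  · intro q hq hqn
    have n : ∀ x ∈ ball p δ', inner ℂ q (N q x) = (1:ℂ) ∧ N q x ∈ ball p δ := fun x hx =>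
      ⟨hN2 _ _ (hsc q (hsub2 hq) x (hsub3 hx)).1, (hsc q (hsub2 hq) x (hsub3 hx)).2⟩
    exact h7 q (hsub1 hq) hqn _ (n x hx).2 _ (n y hy).2 _ (n x' hx').2 _ (n y' hy').2
      (n x hx).1 (n y hy).1 (n x' hx').1 (n y' hy').1 i j k l

end partF

section partG
open Metric Set Filter Topology
open scoped ComplexConjugate

theorem open_perp {V : Type*} [NormedAddCommGroup V] [InnerProductSpace ℂ V] {q a z0 : V}
    (hq0 : q ≠ 0) (haq : inner ℂ a q = (1:ℂ)) (haz : inner ℂ a z0 = (1:ℂ))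
    (hπ : z0 - (inner ℂ q z0 / inner ℂ q q : ℂ) • q ≠ 0) {N : Set V} (hN : N ∈ 𝓝 a) :
    ∀ᶠ z in 𝓝 z0, ∃ b ∈ N, inner ℂ b q = (1:ℂ) ∧ inner ℂ b z = (1:ℂ) := by
  let π : V → V := fun z => z - (inner ℂ q z / inner ℂ q q : ℂ) • q
  have hqq : inner ℂ q q ≠ (0:ℂ) := by simpa using hq0
  have hπc : Continuous π := by
    simp only [π]
    fun_prop
  have hqπ : ∀ z, inner ℂ q (π z) = (0:ℂ) := by
    intro z
    simp only [π, inner_sub_right, inner_smul_right]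
    rw [div_mul_cancel₀ _ hqq, sub_self]
  have hπq : ∀ z, inner ℂ (π z) q = (0:ℂ) := by
    intro z; rw [← inner_conj_symm, hqπ, map_zero]
  have hππ : ∀ z, inner ℂ (π z) z = inner ℂ (π z) (π z) := by
    intro z
    have h : π z = z - (inner ℂ q z / inner ℂ q q : ℂ) • q := rfl
    have h2 : inner ℂ (π z) (π z) = inner ℂ (π z) (z - (inner ℂ q z / inner ℂ q q : ℂ) • q) := by
      rw [← h]
    rw [h2, inner_sub_right, inner_smul_right, hπq, mul_zero, sub_zero]
  have hne : ∀ᶠ z in 𝓝 z0, π z ≠ 0 := hπc.continuousAt.eventually_ne hπ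
  let b : V → V := fun z => a + ((1 - inner ℂ z a) / inner ℂ (π z) (π z) : ℂ) • π z
  have hbc : ContinuousAt b z0 := by
    apply continuousAt_const.add
    apply ContinuousAt.smul _ hπc.continuousAt
    apply ContinuousAt.div
    · fun_prop
    · have : Continuous (fun z => (inner ℂ (π z) (π z) : ℂ)) := by fun_prop
      exact this.continuousAt
    · rw [Ne, inner_self_eq_zero]; exact hπ
  have hb0 : b z0 = a := by
    have : inner ℂ z0 a = (1:ℂ) := by rw [← inner_conj_symm, haz, map_one]
    simp only [b, this, sub_self, zero_div, zero_smul, add_zero]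
  have hbN : ∀ᶠ z in 𝓝 z0, b z ∈ N := hbc.eventually_mem (by rwa [hb0])
  filter_upwards [hne, hbN] with z h1 h2
  refine ⟨b z, h2, ?_, ?_⟩
  · simp only [b, inner_add_left, inner_smul_left, hπq, haq, mul_zero, add_zero]
  · have h3 : inner ℂ (π z) (π z) ≠ (0:ℂ) := by simpa using h1
    simp only [b, inner_add_left, inner_smul_left, hππ, map_div₀, map_sub, map_one,
      inner_conj_symm]
    rw [div_mul_cancel₀ _ h3]; ring

noncomputable def Bf {V W ι : Type*} [NormedAddCommGroup V] [InnerProductSpace ℂ V] [NormedAddCommGroup W]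
    [InnerProductSpace ℂ W] (f : ι → V → W) (i j : ι) (q w : V) : ℂ :=
  inner ℂ (f j w) (fderiv ℂ (f i) q q)

theorem inner_hasDeriv {V W : Type*} [NormedAddCommGroup V] [InnerProductSpace ℂ V]
    [NormedAddCommGroup W] [InnerProductSpace ℂ W] {f : V → W} {q : V}
    (hf : DifferentiableAt ℂ f q) (x : V) (w : W) :
    HasDerivAt (fun t : ℂ => inner ℂ w (f (q + t • x))) (inner ℂ w (fderiv ℂ f q x)) 0 := by
  have hl : HasDerivAt (fun t : ℂ => q + t • x) x 0 := by
    simpa using ((hasDerivAt_id (0:ℂ)).smul_const x).const_add q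
  have h1 : HasFDerivAt f (fderiv ℂ f q) (q + (0:ℂ) • x) := by
    simpa using hf.hasFDerivAt
  have h2 := h1.comp_hasDerivAt (0:ℂ) hl
  have h5 : HasFDerivAt (fun y => innerSL ℂ w y) (innerSL ℂ w)
          (f (q + (0:ℂ) • x)) := (innerSL ℂ w).hasFDerivAt
  exact h5.comp_hasDerivAt (0:ℂ) h2

theorem near_line {V : Type*} [NormedAddCommGroup V] [NormedSpace ℂ V] {q : V} {S : Set V}
    (hS : S ∈ 𝓝 q) (x : V) : ∀ᶠ t : ℂ in 𝓝 0, q + t • x ∈ S := by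
  have : Continuous (fun t : ℂ => q + t • x) := by fun_prop
  have := this.tendsto 0
  simp only [zero_smul, add_zero] at this
  exact this.eventually_mem hS

theorem D_K {V W ι : Type*} [NormedAddCommGroup V] [InnerProductSpace ℂ V]
    [NormedAddCommGroup W] [InnerProductSpace ℂ W]
    [DecidableEq ι] (f : ι → V → W) {p : V} {δ : ℝ}
    (hd : ∀ i, DifferentiableOn ℂ (f i) (ball p δ))
    (hK : ∀ z ∈ ball p δ, ∀ w ∈ ball p δ, inner ℂ w z = (1:ℂ) → ∀ i j, Kf f i j z w = 0) 
    {q w : V} (hq : q ∈ ball p δ) (hw : w ∈ ball p δ) (hwq : inner ℂ w q = (1:ℂ)) (i j : ι) (x : V) :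
    inner ℂ (f j w) (fderiv ℂ (f i) q x) = inner ℂ w x * Bf f i j q w := by
  have hdq : DifferentiableAt ℂ (f i) q := (hd i).differentiableAt (isOpen_ball.mem_nhds hq)
  have key : ∀ x, inner ℂ w x = (0:ℂ) → inner ℂ (f j w) (fderiv ℂ (f i) q x) = 0 := by
    intro x hx
    have h1 := (inner_hasDeriv hdq x (f j w)).sub_const (if i = j then (1:ℂ) else 0)
    have h2 : HasDerivAt (fun t : ℂ => inner ℂ (f j w) (f i (q + t • x)) - if i = j then (1:ℂ) else 0)
        0 0 := by
      apply (hasDerivAt_const (0:ℂ) (0:ℂ)).congr_of_eventuallyEq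
      filter_upwards [near_line (isOpen_ball.mem_nhds hq) x] with t ht
      exact hK _ ht w hw (by rw [inner_add_right, inner_smul_right, hx, hwq]; ring) i j
    exact h1.unique h2
  have := key (x - (inner ℂ w x : ℂ) • q) (by
    rw [inner_sub_right, inner_smul_right, hwq]; ring)
  rw [map_sub, map_smul, inner_sub_right, inner_smul_right] at this
  simp only [Bf]
  linear_combination this

theorem nineA {V W ι : Type*} [NormedAddCommGroup V] [InnerProductSpace ℂ V]
    [NormedAddCommGroup W] [InnerProductSpace ℂ W]
    [DecidableEq ι] (f : ι → V → W) {p : V} {δ : ℝ} 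
    (hd : ∀ i, DifferentiableOn ℂ (f i) (ball p δ))
    (hK : ∀ z ∈ ball p δ, ∀ w ∈ ball p δ, inner ℂ w z = (1:ℂ) → ∀ i j, Kf f i j z w = 0) 
    (h8 : ∀ q ∈ ball p δ, ∀ q' ∈ ball p δ, inner ℂ q' q = (1:ℂ) →
      ∀ z ∈ ball p δ, ∀ w ∈ ball p δ, ∀ z' ∈ ball p δ,
      ∀ w' ∈ ball p δ, inner ℂ q' z = (1:ℂ) → inner ℂ q w = (1:ℂ) → inner ℂ q' z' = (1:ℂ) → 
      inner ℂ q w' = (1:ℂ) → ∀ i j k l, Qf f i j k l z w z' w' = 0)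
    {q q' z' w w' : V} (hq : q ∈ ball p δ) (hq' : q' ∈ ball p δ) (hz' : z' ∈ ball p δ)
    (hw : w ∈ ball p δ) (hw' : w' ∈ ball p δ) (hqq' : inner ℂ q' q = (1:ℂ))
    (hq'z' : inner ℂ q' z' = (1:ℂ)) (hqw : inner ℂ q w = (1:ℂ)) (hqw' : inner ℂ q w' = (1:ℂ))
    (hne : q' ≠ w) (hne' : q' ≠ w') (i j k l : ι) :
    Bf f i j q w * Kf f k l z' w' * (inner ℂ w z' - 1) = 
      Bf f i l q w' * Kf f k j z' w * (inner ℂ w' z' - 1) := by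
  have hdq : ∀ i, DifferentiableAt ℂ (f i) q := fun i =>
    (hd i).differentiableAt (isOpen_ball.mem_nhds hq)
  have hwq : inner ℂ w q = (1:ℂ) := by rw [← inner_conj_symm, hqw, map_one]
  have hwq' : inner ℂ w' q = (1:ℂ) := by rw [← inner_conj_symm, hqw', map_one]
  -- choose x
  have hx : ∃ x : V, inner ℂ q' x = (0:ℂ) ∧ inner ℂ w x ≠ (0:ℂ) ∧ inner ℂ w' x ≠ (0:ℂ) := by
    have hy : ∃ y : V, inner ℂ (w - q') y ≠ (0:ℂ) ∧ inner ℂ (w' - q') y ≠ (0:ℂ) := by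
      have h1 : inner ℂ (w - q') (w - q') ≠ (0:ℂ) := by
        simpa [sub_eq_zero] using hne.symm
      have h2 : inner ℂ (w' - q') (w' - q') ≠ (0:ℂ) := by
        simpa [sub_eq_zero] using hne'.symm
      by_cases h : inner ℂ (w' - q') (w - q') = (0:ℂ)
      · have h' : inner ℂ (w - q') (w' - q') = (0:ℂ) := by rw [← inner_conj_symm, h, map_zero]
        refine ⟨(w - q') + (w' - q'), ?_, ?_⟩
        · rw [inner_add_right, h', add_zero]; exact h1
        · rw [inner_add_right, h, zero_add]; exact h2
      · exact ⟨w - q', h1, h⟩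
    obtain ⟨y, h1, h2⟩ := hy
    refine ⟨y - (inner ℂ q' y : ℂ) • q, ?_, ?_, ?_⟩
    · rw [inner_sub_right, inner_smul_right, hqq']; ring
    · rw [inner_sub_left] at h1
      rwa [inner_sub_right, inner_smul_right, hwq, mul_one]
    · rw [inner_sub_left] at h2
      rwa [inner_sub_right, inner_smul_right, hwq', mul_one]
  obtain ⟨x, hx0, hxw, hxw'⟩ := hx
  let a := Kf f k l z' w' * inner ℂ w' x * (inner ℂ w z' - 1)
  let b := Kf f k j z' w * inner ℂ w x * (inner ℂ w' z' - 1)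
  have h1 := ((inner_hasDeriv (hdq i) x (f j w)).sub_const (if i = j then (1:ℂ) else 0)).mul_const a
  have h2 := ((inner_hasDeriv (hdq i) x (f l w')).sub_const 
    (if i = l then (1:ℂ) else 0)).mul_const b
  have heq : ∀ᶠ t : ℂ in 𝓝 0, 
      (inner ℂ (f j w) (f i (q + t • x)) - if i = j then (1:ℂ) else 0) * a = 
      (inner ℂ (f l w') (f i (q + t • x)) - if i = l then (1:ℂ) else 0) * b := by
    filter_upwards [near_line (isOpen_ball.mem_nhds hq) x] with t ht
    by_cases ht0 : t = 0
    · have e1 := hK q hq w hw hwq i j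
      have e2 := hK q hq w' hw' hwq' i l
      simp only [Kf] at e1 e2
      simp only [ht0, zero_smul, add_zero, e1, e2, zero_mul]
    have := h8 q hq q' hq' hqq' (q + t • x) ht w hw z' hz' w' hw'
      (by rw [inner_add_right, inner_smul_right, hx0, hqq']; ring) hqw hq'z' hqw' i j k l
    simp only [Qf] at this
    rw [inner_add_right, inner_add_right, inner_smul_right, inner_smul_right, hwq, hwq'] at this
    change Kf f i j _ _ * a = Kf f i l _ _ * b
    simp only [a, b]
    apply mul_left_cancel₀ ht0
    linear_combination this
  have h3 := h1.unique (h2.congr_of_eventuallyEq heq)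
  rw [D_K f hd hK hq hw hwq, D_K f hd hK hq hw' hwq'] at h3
  apply mul_left_cancel₀ (mul_ne_zero hxw hxw')
  simp only [a, b] at h3
  linear_combination h3

theorem nine {V W ι : Type*} [NormedAddCommGroup V] [InnerProductSpace ℂ V] [FiniteDimensional ℂ V]
    [NormedAddCommGroup W] [InnerProductSpace ℂ W]
    [DecidableEq ι] (hV : 2 ≤ Module.finrank ℂ V) (f : ι → V → W) {p : V} (hp : ‖p‖ = 1) {δ : ℝ} 
    (hδ : 0 < δ)
    (hd : ∀ i, DifferentiableOn ℂ (f i) (ball p δ))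
    (hK : ∀ z ∈ ball p δ, ∀ w ∈ ball p δ, inner ℂ w z = (1:ℂ) → ∀ i j, Kf f i j z w = 0) 
    (h8 : ∀ q ∈ ball p δ, ∀ q' ∈ ball p δ, inner ℂ q' q = (1:ℂ) →
      ∀ z ∈ ball p δ, ∀ w ∈ ball p δ, ∀ z' ∈ ball p δ,
      ∀ w' ∈ ball p δ, inner ℂ q' z = (1:ℂ) → inner ℂ q w = (1:ℂ) → inner ℂ q' z' = (1:ℂ) → 
      inner ℂ q w' = (1:ℂ) → ∀ i j k l, Qf f i j k l z w z' w' = 0) :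
    ∃ δ' > 0, δ' ≤ δ ∧ ∀ q ∈ ball p δ', ∀ w ∈ ball p δ', ∀ w' ∈ ball p δ', inner ℂ q w = (1:ℂ) → 
      inner ℂ q w' = (1:ℂ) → ∀ z ∈ ball p δ, ∀ i j k l,
      Bf f i j q w * Kf f k l z w' * (inner ℂ w z - 1) = 
      Bf f i l q w' * Kf f k j z w * (inner ℂ w' z - 1) := by
  obtain ⟨δ1, hδ1, hsc⟩ := scale_near hp hδ
  refine ⟨min δ δ1, by positivity, min_le_left _ _, ?_⟩
  have hsub1 : ball p (min δ δ1) ⊆ ball p δ := ball_subset_ball (min_le_left _ _)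
  have hsub2 : ball p (min δ δ1) ⊆ ball p δ1 := ball_subset_ball (min_le_right _ _)
  intro q hq w hw w' hw' hqw hqw' z hz i j k l
  obtain ⟨hqq, hn⟩ := hsc q (hsub2 hq) q (hsub2 hq)
  have hq0 : q ≠ 0 := by rintro rfl; simp at hqq
  set n := (inner ℂ q q : ℂ)⁻¹ • q with hndef
  have hnq : inner ℂ n q = (1:ℂ) := by
    rw [hndef, inner_smul_left, map_inv₀, inner_conj_symm, inv_mul_cancel₀ hqq]
  have hu : ∃ u : V, u ≠ 0 ∧ inner ℂ q u = (0:ℂ) := by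
    have hnb : ((ℂ ∙ q)ᗮ : Submodule ℂ V) ≠ ⊥ := by
      intro hb
      have f1 := finrank_inf_orth (⊤ : Submodule ℂ V) (x := q) trivial hq0
      rw [hb, inf_bot_eq, finrank_bot, finrank_top] at f1
      omega
    obtain ⟨e, he, he0⟩ := Submodule.exists_mem_ne_zero_of_ne_bot hnb
    exact ⟨e, he0, Submodule.mem_orthogonal_singleton_iff_inner_right.1 he⟩
  obtain ⟨u, hu0, hqu⟩ := hu
  have huq : inner ℂ u q = (0:ℂ) := by rw [← inner_conj_symm, hqu, map_zero]
  have hc : ∃ c : ℝ, c ≠ 0 ∧ n + (c:ℂ) • u ∈ ball p δ ∧ 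
      (1 - (c:ℂ)^2 * inner ℂ u u) • q + (c:ℂ) • u ∈ ball p δ ∧ 
      n + (c:ℂ) • u ≠ w ∧ n + (c:ℂ) • u ≠ w' := by
    have c1 : Continuous (fun c : ℝ => n + (c:ℂ) • u) := by fun_prop
    have c2 : Continuous (fun c : ℝ => (1 - (c:ℂ)^2 * inner ℂ u u) • q + (c:ℂ) • u) := by fun_prop
    have t1 := c1.tendsto 0
    have t2 := c2.tendsto 0
    simp only [Complex.ofReal_zero, zero_smul, add_zero, ne_eq, OfNat.ofNat_ne_zero,
      not_false_eq_true, zero_pow, zero_mul, sub_zero, one_smul] at t1 t2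
    have a1 := t1.eventually_mem (isOpen_ball.mem_nhds hn)
    have a2 := t2.eventually_mem (isOpen_ball.mem_nhds (hsub1 hq))
    have a3 : ∀ w : V, ∀ᶠ c : ℝ in 𝓝[≠] 0, n + (c:ℂ) • u ≠ w := by
      intro w
      by_cases h : n = w
      · filter_upwards [self_mem_nhdsWithin] with c hc
        rw [← h]
        simp only [ne_eq, add_eq_left, smul_eq_zero, hu0, or_false, Complex.ofReal_eq_zero]
        exact hc
      · exact (t1.eventually_ne h).filter_mono nhdsWithin_le_nhds
    have a0 : ∀ᶠ c : ℝ in 𝓝[≠] (0:ℝ), c ∈ ({0}ᶜ : Set ℝ) := self_mem_nhdsWithin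
    have a4 := ((a0.and 
      (a1.filter_mono nhdsWithin_le_nhds)).and 
      (a2.filter_mono nhdsWithin_le_nhds)).and ((a3 w).and (a3 w'))
    obtain ⟨c, ⟨⟨h1, h2⟩, h3⟩, h4, h5⟩ := a4.exists
    exact ⟨c, h1, h2, h3, h4, h5⟩
  obtain ⟨c, hc0, hcb, hcz, hcw, hcw'⟩ := hc
  have hc0' : (c:ℂ) ≠ 0 := by exact_mod_cast hc0
  set a := n + (c:ℂ) • u with ha
  set z0 := (1 - (c:ℂ)^2 * inner ℂ u u) • q + (c:ℂ) • u with hz0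
  have hnu : inner ℂ n u = (0:ℂ) := by rw [hndef, inner_smul_left, hqu, mul_zero]
  have haq : inner ℂ a q = (1:ℂ) := by
    rw [ha, inner_add_left, hnq, inner_smul_left, huq]; ring
  have haz : inner ℂ a z0 = (1:ℂ) := by
    simp only [ha, hz0, inner_add_left, inner_add_right, inner_smul_left, inner_smul_right, huq, hnq,
      hnu, Complex.conj_ofReal]
    ring
  have hπ : z0 - (inner ℂ q z0 / inner ℂ q q : ℂ) • q ≠ 0 := by
    have : inner ℂ q z0 / inner ℂ q q = 1 - (c:ℂ)^2 * inner ℂ u u := by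
      rw [hz0, inner_add_right, inner_smul_right, inner_smul_right, hqu, mul_zero, add_zero,
        mul_div_assoc, div_self hqq, mul_one]
    rw [this, hz0, add_sub_cancel_left]
    exact smul_ne_zero hc0' hu0
  have hN : ball p δ ∩ {b | b ≠ w ∧ b ≠ w'} ∈ 𝓝 a := by
    apply (isOpen_ball.inter (IsOpen.and isOpen_ne isOpen_ne)).mem_nhds
    exact ⟨hcb, hcw, hcw'⟩
  have hev := (open_perp hq0 haq haz hπ hN).and (isOpen_ball.mem_nhds hcz)
  obtain ⟨O, hO1, hO2, hO3⟩ := _root_.mem_nhds_iff.1 hev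
  have hKd : ∀ i j, ∀ w, DifferentiableOn ℂ (fun z => Kf f i j z w) (ball p δ) := by
    intro i j w
    apply DifferentiableOn.sub_const
    exact (innerSL ℂ (f j w)).differentiable.comp_differentiableOn (hd i)
  have hId : ∀ w, DifferentiableOn ℂ (fun z => inner ℂ w z - (1:ℂ)) (ball p δ) := by
    intro w
    apply DifferentiableOn.sub_const
    exact (innerSL ℂ w).differentiable.differentiableOn
  have := identU (f := fun z => Bf f i j q w * Kf f k l z w' * (inner ℂ w z - 1) -
      Bf f i l q w' * Kf f k j z w * (inner ℂ w' z - 1)) isOpen_ball 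
      (convex_ball p δ).isPreconnected 
      ((((hKd _ _ _).const_mul _).mul (hId _)).sub (((hKd _ _ _).const_mul _).mul (hId _))) hO2
      ⟨z0, hcz, hO3⟩ (by
        rintro z ⟨hz1, hz2⟩
        obtain ⟨⟨b, ⟨hb1, hb2, hb3⟩, hb4, hb5⟩, _⟩ := hO1 hz2
        rw [sub_eq_zero]
        exact nineA f hd hK h8 (hsub1 hq) hb1 hz1 (hsub1 hw) (hsub1 hw') hb4 hb5 hqw hqw'
          hb2 hb3 i j k l) z hz
  exact sub_eq_zero.1 this

end partG

section partH
open Metric Set Filter Topology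
open scoped ComplexConjugate

theorem assemble {V W ι : Type*} [NormedAddCommGroup V] [InnerProductSpace ℂ V]
    [FiniteDimensional ℂ V] [NormedAddCommGroup W] [InnerProductSpace ℂ W]
    [FiniteDimensional ℂ W] [Fintype ι] [DecidableEq ι] (hV : 2 ≤ Module.finrank ℂ V)
    (hdim : Module.finrank ℂ W + 2 < Fintype.card ι + 2 * Module.finrank ℂ V)
    {U : Set V} (hU : IsOpen U) (hc : IsPreconnected U) (f : ι → V → W)
    (hf : ∀ i, DifferentiableOn ℂ (f i) U)
    (hS : ∀ q ∈ U, ‖q‖ = 1 → ∀ i j, Kf f i j q q = 0)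
    (i0 : ι) (hn : ∃ z ∈ U, ∃ w ∈ U, f i0 z ≠ f i0 w) (hm : ∃ z ∈ U, ‖z‖ = 1) :
    ∃ p ∈ U, ‖p‖ = 1 ∧ ∃ δ > 0, ball p δ ⊆ U ∧
      (∃ e, inner ℂ p e = (0:ℂ) ∧ fderiv ℂ (f i0) p e ≠ 0) ∧
      (∀ z ∈ ball p δ, ∀ w ∈ ball p δ, inner ℂ w z = (1:ℂ) → ∀ i j, Kf f i j z w = 0) ∧
      ∀ q ∈ ball p δ, ∀ w ∈ ball p δ, ∀ w' ∈ ball p δ, inner ℂ q w = (1:ℂ) → 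
      inner ℂ q w' = (1:ℂ) → ∀ z ∈ ball p δ, ∀ i j k l,
      Bf f i j q w * Kf f k l z w' * (inner ℂ w z - 1) = 
      Bf f i l q w' * Kf f k j z w * (inner ℂ w' z - 1) := by
  obtain ⟨p0, hp0U, hp0⟩ := hm
  obtain ⟨ε0, hε0, hb0⟩ := Metric.isOpen_iff.1 hU p0 hp0U
  obtain ⟨ε1, hε1, hle1, hpol⟩ := polar_lemma p0 hp0 hε0
  have hK0 : ∀ z ∈ ball p0 ε1, ∀ w ∈ ball p0 ε1, inner ℂ w z = (1:ℂ) → 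
      ∀ i j, Kf f i j z w = 0 := by
    intro z hz w hw hzw i j
    refine hpol (fun z w => Kf f i j z w) ?_ ?_ z hz w hw hzw
    · intro z w hz hw hzb hwb
      exact Kf_diff f (fun i => (hf i).mono hb0) hz hw hzb hwb i j
    · intro q hq hq1
      exact hS q (hb0 hq) hq1 i j
  obtain ⟨p, hpb, hpU, hp, e, hpe, hfe⟩ := horiz_nonzero hV hU hc (hf i0) hn hp0U hp0 hε1
  obtain ⟨ρ, hρ, hρb⟩ := Metric.isOpen_iff.1 isOpen_ball p hpb
  have hρU : ball p ρ ⊆ U := hρb.trans ((ball_subset_ball hle1).trans hb0)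
  have hcont : ContinuousAt (fun q => fderiv ℂ (f i0) q (e - (inner ℂ q e : ℂ) • q)) p := by
    have h1 : ContinuousAt (fderiv ℂ (f i0)) p :=
      (fderiv_cont hU (hf i0)).continuousAt (hU.mem_nhds hpU)
    apply h1.clm_apply
    fun_prop
  have hne : ∀ᶠ q in 𝓝 p, fderiv ℂ (f i0) q (e - (inner ℂ q e : ℂ) • q) ≠ 0 := by
    apply hcont.eventually_ne
    simp only [hpe, zero_smul, sub_zero]; exact hfe
  obtain ⟨ε2, hε2, hne⟩ := Metric.eventually_nhds_iff_ball.1 hne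
  have hδ : 0 < min (ρ/3) ε2 := by positivity
  have hδ3 : min (ρ/3) ε2 ≤ ρ/3 := min_le_left _ _
  have hδρ : ball p (min (ρ/3) ε2) ⊆ ball p ρ := ball_subset_ball (by linarith)
  have hd1 : ∀ i, DifferentiableOn ℂ (f i) (ball p (min (ρ/3) ε2)) := fun i =>
    (hf i).mono (hδρ.trans hρU)
  obtain ⟨δ1, hδ1, hδ1le, h8⟩ := eight f hδ hp hd1 (by
    intro q hq hq1 z hz w hw z' hz' w' hw' h1 h2 h3 h4 i j k l
    have hqs : ball q (2 * min (ρ/3) ε2) ⊆ ball p ρ := by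
      apply ball_subset_ball'
      rw [mem_ball] at hq
      linarith
    have hsub : ball p (min (ρ/3) ε2) ⊆ ball q (2 * min (ρ/3) ε2) := by
      apply ball_subset_ball'
      rw [mem_ball, dist_comm] at hq
      linarith
    have := seven f (r := 2 * min (ρ/3) ε2) hq1 hdim (fun i => (hf i).mono (hqs.trans hρU)) (by
      intro z hz w hw hzw i j
      exact sub_eq_zero.1 (hK0 z (hρb (hqs hz)) w (hρb (hqs hw)) hzw i j))
      (e0 := e - (inner ℂ q e : ℂ) • q) (by
        rw [inner_sub_right, inner_smul_right, inner_self_c, hq1]; simp)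
      (hne q (ball_subset_ball (min_le_right _ _) hq))
      z (hsub hz) w (hsub hw) z' (hsub hz') w' (hsub hw') h1 h2 h3 h4 i j k l
    exact sub_eq_zero.2 this)
  have hs1 : ball p δ1 ⊆ ball p ρ := (ball_subset_ball hδ1le).trans hδρ
  obtain ⟨δ2, hδ2, hδ2le, h9⟩ := nine hV f hp hδ1 (fun i => (hf i).mono (hs1.trans hρU))
    (fun z hz w hw => hK0 z (hρb (hs1 hz)) w (hρb (hs1 hw))) h8
  have hs2 : ball p δ2 ⊆ ball p δ1 := ball_subset_ball hδ2le
  refine ⟨p, hpU, hp, δ2, hδ2, hs2.trans (hs1.trans hρU), ⟨e, hpe, hfe⟩, 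
    (fun z hz w hw => hK0 z (hρb (hs1 (hs2 hz))) w (hρb (hs1 (hs2 hw)))), ?_⟩
  intro q hq w hw w' hw' h1 h2 z hz
  exact h9 q hq w hw w' hw' h1 h2 z (hs2 hz)

end partH

section partI
open Metric Set Filter Topology
open scoped ComplexConjugate

theorem Kf_symm {V W ι : Type*} [NormedAddCommGroup V] [InnerProductSpace ℂ V]
    [NormedAddCommGroup W] [InnerProductSpace ℂ W] [DecidableEq ι] (f : ι → V → W) (i j : ι)
    (z w : V) : conj (Kf f i j z w) = Kf f j i w z := by
  unfold Kf
  rw [map_sub, inner_conj_symm]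
  congr 1
  by_cases h : i = j
  · simp [h]
  · simp [h, Ne.symm h]

theorem ten {V W ι : Type*} [NormedAddCommGroup V] [InnerProductSpace ℂ V]
    [FiniteDimensional ℂ V] [NormedAddCommGroup W] [InnerProductSpace ℂ W]
    [FiniteDimensional ℂ W] [DecidableEq ι] (f : ι → V → W) {p : V} (hp : ‖p‖ = 1) {δ : ℝ}
    (hδ : 0 < δ) (hd : ∀ i, DifferentiableOn ℂ (f i) (ball p δ)) {i0 : ι} {e : V}
    (hpe : inner ℂ p e = (0:ℂ)) (hfe : fderiv ℂ (f i0) p e ≠ 0)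
    (hK : ∀ z ∈ ball p δ, ∀ w ∈ ball p δ, inner ℂ w z = (1:ℂ) → ∀ i j, Kf f i j z w = 0)
    (h9 : ∀ q ∈ ball p δ, ∀ w ∈ ball p δ, ∀ w' ∈ ball p δ, inner ℂ q w = (1:ℂ) → 
      inner ℂ q w' = (1:ℂ) → ∀ z ∈ ball p δ, ∀ i j k l,
      Bf f i j q w * Kf f k l z w' * (inner ℂ w z - 1) = 
      Bf f i l q w' * Kf f k j z w * (inner ℂ w' z - 1)) :
    ∃ O : Set V, IsOpen O ∧ O ⊆ ball p δ ∧ O.Nonempty ∧ ∃ α : ι → V → ℂ,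
      (∀ z ∈ O, α i0 z ≠ 0) ∧ ∀ z ∈ O, ∀ w ∈ O, ∀ i j,
        Kf f i j z w = (inner ℂ w z - 1) * α i z * conj (α j w) := by
  have hpb : p ∈ ball p δ := mem_ball_self hδ
  have hpp : inner ℂ p p = (1:ℂ) := by rw [inner_self_c, hp]; simp
  have hep : inner ℂ e p = (0:ℂ) := by rw [← inner_conj_symm, hpe, map_zero]
  have he0 : e ≠ 0 := by rintro rfl; simp at hfe
  have hdp : ∀ i, ∀ q ∈ ball p δ, DifferentiableAt ℂ (f i) q := fun i q hq =>
    (hd i).differentiableAt (isOpen_ball.mem_nhds hq)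
  obtain ⟨g, hg⟩ : ∃ g, g = fderiv ℂ (f i0) p e := ⟨_, rfl⟩
  have hg0 : g ≠ 0 := hg ▸ hfe
  have hφ0 : inner ℂ g (f i0 p) = (0:ℂ) := by
    rw [← inner_conj_symm, hg, D_K f hd hK hpb hpb hpp, hpe]; simp
  have hev : ∀ᶠ t : ℂ in 𝓝[≠] 0, inner ℂ g (f i0 (p + t • e)) ≠ (0:ℂ) := by
    have h1 := inner_hasDeriv (hdp i0 p hpb) e g
    rw [← hg] at h1
    exact h1.eventually_ne (by rw [inner_self_c]; simpa using hg0)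
  have hev2 : ∀ᶠ t : ℂ in 𝓝[≠] 0, p + t • e ∈ ball p δ :=
    (near_line (isOpen_ball.mem_nhds hpb) e).filter_mono nhdsWithin_le_nhds
  have hev3 := hev.and hev2
  rw [eventually_nhdsWithin_iff, Metric.eventually_nhds_iff_ball] at hev3
  obtain ⟨ε, hε, hev3⟩ := hev3
  have hpt : ∀ r : ℝ, 0 < r → r < ε → inner ℂ g (f i0 (p + (r:ℂ) • e)) ≠ (0:ℂ) ∧
      p + (r:ℂ) • e ∈ ball p δ := by
    intro r hr hre
    apply hev3
    · rw [mem_ball_zero_iff, Complex.norm_real, Real.norm_of_nonneg hr.le]; exact hre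
    · simpa using hr.ne'
  obtain ⟨hg1, hw1b⟩ := hpt (ε/2) (by positivity) (by linarith)
  obtain ⟨hg2, hz0b⟩ := hpt (ε/3) (by positivity) (by linarith)
  obtain ⟨w1, hw1⟩ : ∃ w1, w1 = p + ((ε/2 : ℝ):ℂ) • e := ⟨_, rfl⟩
  obtain ⟨z0, hz0⟩ : ∃ z0, z0 = p + ((ε/3 : ℝ):ℂ) • e := ⟨_, rfl⟩
  rw [← hw1] at hg1 hw1b
  rw [← hz0] at hg2 hz0b
  have hee : inner ℂ e e = ((‖e‖^2 : ℝ) : ℂ) := by rw [inner_self_c]; push_cast; rfl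
  have hpw1 : inner ℂ p w1 = (1:ℂ) := by
    rw [hw1, inner_add_right, inner_smul_right, hpp, hpe]; simp
  have hpz0 : inner ℂ p z0 = (1:ℂ) := by
    rw [hz0, inner_add_right, inner_smul_right, hpp, hpe]; simp
  have hw1p : inner ℂ w1 p = (1:ℂ) := by rw [← inner_conj_symm, hpw1, map_one]
  have hz0p : inner ℂ z0 p = (1:ℂ) := by rw [← inner_conj_symm, hpz0, map_one]
  have hlam1 : inner ℂ w1 z0 - (1:ℂ) = ((ε/2 * (ε/3) * ‖e‖^2 : ℝ):ℂ) := by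
    rw [hw1, hz0]
    simp only [inner_add_left, inner_add_right, inner_smul_right, inner_smul_left, hpp, hpe, hep, hee,
      Complex.conj_ofReal]
    push_cast; ring
  have hlam0 : inner ℂ z0 z0 - (1:ℂ) = ((ε/3 * (ε/3) * ‖e‖^2 : ℝ):ℂ) := by
    rw [hz0]
    simp only [inner_add_left, inner_add_right, inner_smul_right, inner_smul_left, hpp, hpe, hep, hee,
      Complex.conj_ofReal]
    push_cast; ring
  have hepos : 0 < ‖e‖ := norm_pos_iff.2 he0
  have hlam1' : inner ℂ w1 z0 - (1:ℂ) ≠ 0 := by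
    rw [hlam1]; exact Complex.ofReal_ne_zero.2 (by positivity)
  have hlam0' : inner ℂ z0 z0 - (1:ℂ) ≠ 0 := by
    rw [hlam0]; exact Complex.ofReal_ne_zero.2 (by positivity)
  have hB : Bf f i0 i0 p w1 ≠ 0 := by
    have h1 := D_K f hd hK hpb hw1b hw1p i0 i0 e
    intro h
    rw [h, mul_zero, ← hg, ← inner_conj_symm] at h1
    rw [inner_conj_symm] at h1
    exact hg1 (by rw [← inner_conj_symm, h1, map_zero])
  have hw10 : w1 ≠ 0 := by rintro h; rw [h] at hpw1; simp at hpw1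
  have hN : ball p δ ∩ {q | Bf f i0 i0 q w1 ≠ 0} ∈ 𝓝 p := by
    apply inter_mem (isOpen_ball.mem_nhds hpb)
    have h1 : ContinuousAt (fderiv ℂ (f i0)) p :=
      (fderiv_cont isOpen_ball (hd i0)).continuousAt (isOpen_ball.mem_nhds hpb)
    have h2 : ContinuousAt (fun q => Bf f i0 i0 q w1) p := by
      unfold Bf
      have := h1.clm_apply continuousAt_id
      exact ContinuousAt.inner (𝕜 := ℂ) continuousAt_const this
    exact h2.eventually_ne hB
  have hπ : z0 - (inner ℂ w1 z0 / inner ℂ w1 w1 : ℂ) • w1 ≠ 0 := by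
    intro h
    obtain ⟨c, hc⟩ : ∃ c : ℂ, c = inner ℂ w1 z0 / inner ℂ w1 w1 := ⟨_, rfl⟩
    rw [← hc, sub_eq_zero] at h
    have h1 := congrArg (fun x => (inner ℂ p x : ℂ)) h
    simp only [inner_smul_right, hpz0, hpw1, mul_one] at h1
    rw [← h1, one_smul] at h
    have h2 := congrArg (fun x => (inner ℂ e x : ℂ)) h
    simp only [hz0, hw1, inner_add_right, inner_smul_right, hep, hee, zero_add] at h2
    have h3 : (ε/3) * ‖e‖^2 = (ε/2) * ‖e‖^2 := by exact_mod_cast h2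
    have : 0 < ε * ‖e‖^2 := by positivity
    linarith
  have hperp := open_perp hw10 hpw1 hpz0 hπ hN
  -- K at z0
  have hKz0 : Kf f i0 i0 z0 z0 = ((‖f i0 z0 - f i0 p‖^2 : ℝ):ℂ) := by
    have a1 := hK p hpb p hpb hpp i0 i0
    have a2 := hK z0 hz0b p hpb hpz0 i0 i0
    have a3 := hK p hpb z0 hz0b hz0p i0 i0
    unfold Kf at a1 a2 a3 ⊢
    have : ((‖f i0 z0 - f i0 p‖^2 : ℝ):ℂ) = inner ℂ (f i0 z0 - f i0 p) (f i0 z0 - f i0 p) := by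
      rw [inner_self_c]; push_cast; rfl
    rw [this, inner_sub_left, inner_sub_right, inner_sub_right]
    simp only [if_true] at a1 a2 a3 ⊢
    linear_combination a3 + a2 - a1
  have hnz : f i0 z0 - f i0 p ≠ 0 := by
    intro h
    rw [sub_eq_zero] at h
    rw [h] at hg2; exact hg2 hφ0
  -- neighbourhoods
  have n1 : ∀ᶠ z in 𝓝 z0, inner ℂ w1 z - (1:ℂ) ≠ 0 := by
    have h : ContinuousAt (fun z => inner ℂ w1 z - (1:ℂ)) z0 := by fun_prop
    exact h.eventually_ne hlam1'
  have n2 : ∀ᶠ a : V × V in 𝓝 (z0, z0), inner ℂ a.2 a.1 - (1:ℂ) ≠ 0 := by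
    have h : ContinuousAt (fun a : V × V => inner ℂ a.2 a.1 - (1:ℂ)) (z0, z0) := by fun_prop
    exact h.eventually_ne hlam0'
  have n2' : ∃ s ∈ 𝓝 z0, ∀ z ∈ s, ∀ w ∈ s, inner ℂ w z - (1:ℂ) ≠ 0 := by
    rw [nhds_prod_eq, eventually_prod_self_iff'] at n2
    obtain ⟨t, ht, h⟩ := n2
    exact ⟨t, ht, fun z hz w hw => h z hz w hw⟩
  obtain ⟨s, hs, hsl⟩ := n2'
  have n4 : ∀ᶠ z in 𝓝 z0, Kf f i0 i0 z z0 ≠ 0 := by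
    have : ContinuousAt (fun z => Kf f i0 i0 z z0) z0 := by
      unfold Kf
      have h1 : ContinuousAt (fun z => inner ℂ (f i0 z0) (f i0 z) ) z0 :=
        ContinuousAt.inner (𝕜 := ℂ) continuousAt_const (hdp i0 z0 hz0b).continuousAt
      exact h1.sub continuousAt_const
    apply this.eventually_ne
    rw [hKz0]
    exact Complex.ofReal_ne_zero.2 (by have := norm_pos_iff.2 hnz; positivity)
  have hall : ∀ᶠ z in 𝓝 z0, z ∈ ball p δ ∧ (inner ℂ w1 z - (1:ℂ) ≠ 0) ∧ z ∈ s ∧ 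
      Kf f i0 i0 z z0 ≠ 0 ∧
      ∃ b ∈ ball p δ ∩ {q | Bf f i0 i0 q w1 ≠ 0}, inner ℂ b w1 = (1:ℂ) ∧ inner ℂ b z = (1:ℂ) := by
    filter_upwards [isOpen_ball.mem_nhds hz0b, n1, hs, n4, hperp] with z a b c d e
    exact ⟨a, b, c, d, e⟩
  obtain ⟨O, hO, hOo, hz0O⟩ := _root_.mem_nhds_iff.1 hall
  -- factorization
  let α : ι → V → ℂ := fun k z => Kf f k i0 z w1 / (inner ℂ w1 z - 1)
  have hβ : ∃ β : ι → V → ℂ, ∀ z ∈ O, ∀ w ∈ O, ∀ k l, 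
      Kf f k l z w = (inner ℂ w z - 1) * α k z * β l w := by
    have : ∀ w, ∃ b : ι → ℂ, w ∈ O → ∀ z ∈ O, ∀ k l, 
      Kf f k l z w = (inner ℂ w z - 1) * α k z * b l := by
      intro w
      by_cases hw : w ∈ O
      · obtain ⟨hwb, -, -, -, q, ⟨hqb, hqB⟩, hqw1, hqw⟩ := hO hw
        refine ⟨fun l => Bf f i0 l q w / Bf f i0 i0 q w1, fun _ z hz k l => ?_⟩
        obtain ⟨hzb, hz1, -⟩ := hO hz
        have := h9 q hqb w1 hw1b w hwb hqw1 hqw z hzb i0 i0 k l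
        have hqB : Bf f i0 i0 q w1 ≠ 0 := hqB
        simp only [α]
        field_simp
        linear_combination this
      · exact ⟨fun _ => 0, fun h => absurd h hw⟩
    choose b hb using this
    exact ⟨fun l w => b w l, fun z hz w hw k l => hb w hw z hz k l⟩
  obtain ⟨β, hβ⟩ := hβ
  have hsym : ∀ z ∈ O, ∀ w ∈ O, ∀ k l, α k z * β l w = conj (α l w) * conj (β k z) := by
    intro z hz w hw k l
    have h1 := Kf_symm f l k w z
    rw [hβ w hw z hz, hβ z hz w hw, map_mul, map_mul, map_sub, inner_conj_symm, map_one] at h1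
    have h2 := hsl z (hO hz).2.2.1 w (hO hw).2.2.1
    apply mul_left_cancel₀ h2
    linear_combination -h1
  have hKz0' := hβ z0 hz0O z0 hz0O i0 i0
  rw [hKz0, hlam0] at hKz0'
  have hα0 : α i0 z0 ≠ 0 := by
    intro h
    rw [h] at hKz0'
    simp only [mul_zero, zero_mul] at hKz0'
    exact hnz (by simpa using hKz0')
  have hαpos : 0 < ‖α i0 z0‖ := norm_pos_iff.2 hα0
  let k : ℝ := ‖f i0 z0 - f i0 p‖^2 / ((ε/3 * (ε/3) * ‖e‖^2) * ‖α i0 z0‖^2)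
  have hk : 0 < k := by have := norm_pos_iff.2 hnz; positivity
  have hβk : ∀ l, ∀ w ∈ O, β l w = (k:ℂ) * conj (α l w) := by
    intro l w hw
    have h1 := hsym z0 hz0O w hw i0 l
    have h2 : α i0 z0 * conj (α i0 z0) = ((‖α i0 z0‖^2 : ℝ):ℂ) := by
      rw [Complex.mul_conj, Complex.normSq_eq_norm_sq]
    have h3 : conj (β i0 z0) = (k:ℂ) * α i0 z0 := by
      have h4 : β i0 z0 = (k:ℂ) * conj (α i0 z0) := by
        have h5 : (k * ((ε/3 * (ε/3) * ‖e‖^2) * ‖α i0 z0‖^2) : ℝ) = ‖f i0 z0 - f i0 p‖^2 := by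
          simp only [k]; field_simp
        rw [← h5] at hKz0'
        rw [Complex.ofReal_mul, Complex.ofReal_mul (ε/3 * (ε/3) * ‖e‖^2), ← h2] at hKz0'
        have h6 : ((ε/3 * (ε/3) * ‖e‖^2 : ℝ):ℂ) * α i0 z0 ≠ 0 :=
          mul_ne_zero (Complex.ofReal_ne_zero.2 (by positivity)) hα0
        apply mul_left_cancel₀ h6
        linear_combination -hKz0'
      rw [h4]; simp
    rw [h3] at h1
    apply mul_left_cancel₀ hα0
    linear_combination h1
  refine ⟨O, hOo, fun z hz => (hO hz).1, ⟨z0, hz0O⟩, fun i z => (Real.sqrt k : ℂ) * α i z, ?_, ?_⟩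
  · intro z hz h
    have h1 := hβ z hz z0 hz0O i0 i0
    have h2 : α i0 z = 0 := by
      rcases mul_eq_zero.1 h with h | h
      · exact absurd (Complex.ofReal_eq_zero.1 h) (Real.sqrt_pos.2 hk).ne'
      · exact h
    rw [h2, mul_zero, zero_mul] at h1
    exact (hO hz).2.2.2.1 h1
  · intro z hz w hw i j
    have hsq : (Real.sqrt k : ℂ) * (Real.sqrt k : ℂ) = (k:ℂ) := by
      rw [← Complex.ofReal_mul, Real.mul_self_sqrt hk.le]
    rw [hβ z hz w hw, hβk j w hw]
    simp only [map_mul, Complex.conj_ofReal]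
    rw [← hsq]; ring

end partI

section partJ
open Metric Set Filter Topology
open scoped ComplexConjugate

theorem gram_ext {X Y κ : Type*} [NormedAddCommGroup X] [InnerProductSpace ℂ X]
    [FiniteDimensional ℂ X] [NormedAddCommGroup Y] [InnerProductSpace ℂ Y]
    [FiniteDimensional ℂ Y] (hXY : Module.finrank ℂ X = Module.finrank ℂ Y)
    (x : κ → X) (y : κ → Y) (h : ∀ a b, inner ℂ (x a) (x b) = (inner ℂ (y a) (y b) : ℂ)) :
    ∃ T : Y →ₗᵢ[ℂ] X, ∀ a, T (y a) = x a := by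
  let lx := Finsupp.linearCombination ℂ x
  let ly := Finsupp.linearCombination ℂ y
  have hin : ∀ c d, inner ℂ (lx c) (lx d) = (inner ℂ (ly c) (ly d) : ℂ) := by
    intro c d
    simp only [lx, ly, Finsupp.linearCombination_apply, h,
      Finsupp.sum, sum_inner, inner_sum, inner_smul_left, inner_smul_right]
  have hnorm : ∀ c, ‖lx c‖ = ‖ly c‖ := by
    intro c
    have h1 := hin c c
    rw [inner_self_c, inner_self_c] at h1
    have h2 : ‖lx c‖^2 = ‖ly c‖^2 := by exact_mod_cast h1
    exact (pow_left_inj₀ (norm_nonneg _) (norm_nonneg _) two_ne_zero).1 h2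
  obtain ⟨g, hg⟩ := LinearMap.exists_rightInverse_of_surjective ly.rangeRestrict
    (LinearMap.range_rangeRestrict ly)
  have hg' : ∀ u : LinearMap.range ly, ly (g u) = u := by
    intro u
    have := LinearMap.congr_fun hg u
    exact congrArg Subtype.val this
  let L : LinearMap.range ly →ₗᵢ[ℂ] X := ⟨lx.comp g, fun u => by
    rw [LinearMap.comp_apply, hnorm, hg']; rfl⟩
  let e : X ≃ₗᵢ[ℂ] Y := 
    (stdOrthonormalBasis ℂ X).equiv (stdOrthonormalBasis ℂ Y) (finCongr hXY)
  let L' : LinearMap.range ly →ₗᵢ[ℂ] Y := e.toLinearIsometry.comp L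
  refine ⟨e.symm.toLinearIsometry.comp L'.extend, fun a => ?_⟩
  have hya : y a ∈ LinearMap.range ly := ⟨Finsupp.single a 1, by simp [ly]⟩
  have h1 := L'.extend_apply ⟨y a, hya⟩
  change e.symm (L'.extend (y a)) = x a
  rw [show L'.extend (y a) = _ from h1]
  change e.symm (e (lx (g ⟨y a, hya⟩))) = x a
  rw [LinearIsometryEquiv.symm_apply_apply]
  have h2 : lx (g ⟨y a, hya⟩ - Finsupp.single a 1) = 0 := by
    rw [← norm_eq_zero, hnorm, map_sub, hg']
    simp [ly]
  rw [map_sub, sub_eq_zero] at h2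
  rw [h2]; simp [lx]

theorem elevenA {V V' W ι : Type*} [NormedAddCommGroup V] [InnerProductSpace ℂ V]
    [NormedAddCommGroup V'] [InnerProductSpace ℂ V']
    [FiniteDimensional ℂ V'] [NormedAddCommGroup W] [InnerProductSpace ℂ W]
    [FiniteDimensional ℂ W] [Fintype ι] [DecidableEq ι] (J : V →ₗᵢ[ℂ] V')
    (hfin : Module.finrank ℂ W + 1 = Fintype.card ι + Module.finrank ℂ V')
    (f : ι → V → W) {O : Set V} (α : ι → V → ℂ)
    (hK : ∀ z ∈ O, ∀ w ∈ O, ∀ i j,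
        Kf f i j z w = (inner ℂ w z - 1) * α i z * conj (α j w)) :
    ∃ (W0 : ι → W) (w0 : ι → ℂ) (W1 : V' →ₗ[ℂ] W) (ω : V' →ₗ[ℂ] ℂ),
      (∀ i j, inner ℂ (W0 i) (W0 j) + conj (w0 i) * w0 j = if i = j then (1:ℂ) else 0) ∧
      (∀ u v, inner ℂ (W1 u) (W1 v) + conj (ω u) * ω v = inner ℂ u v) ∧
      (∀ i v, inner ℂ (W0 i) (W1 v) + conj (w0 i) * ω v = 0) ∧ 
      (∀ i, ∀ z ∈ O, f i z = W0 i + α i z • W1 (J z)) ∧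
      (∀ i, ∀ z ∈ O, α i z = w0 i + α i z * ω (J z)) := by
  let x : ι × O → WithLp 2 (W × ℂ) := fun a => WithLp.toLp 2 (f a.1 a.2, α a.1 a.2)
  let y : ι × O → WithLp 2 (EuclideanSpace ℂ ι × V') := fun a =>
    WithLp.toLp 2 (EuclideanSpace.single a.1 1, α a.1 a.2 • J a.2)
  have hxy : ∀ a b, inner ℂ (x a) (x b) = (inner ℂ (y a) (y b) : ℂ) := by
    rintro ⟨i, z, hz⟩ ⟨j, w, hw⟩
    have h1 := hK w hw z hz j i
    unfold Kf at h1
    simp only [x, y, WithLp.prod_inner_apply, EuclideanSpace.inner_single_left, map_one, one_mul,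
      inner_smul_left, inner_smul_right, LinearIsometry.inner_map_map, RCLike.inner_apply]
    simp only [PiLp.single_apply]
    have : (if i = j then (1:ℂ) else 0) = if j = i then (1:ℂ) else 0 := by simp only [eq_comm]
    rw [this]
    linear_combination h1
  obtain ⟨T, hT⟩ := gram_ext (by
    rw [(WithLp.linearEquiv 2 ℂ (W × ℂ)).finrank_eq, 
      (WithLp.linearEquiv 2 ℂ (EuclideanSpace ℂ ι × V')).finrank_eq]
    simp [hfin]) x y hxy
  let P1 : WithLp 2 (W × ℂ) →ₗ[ℂ] W := (LinearMap.fst ℂ W ℂ).comp (WithLp.linearEquiv 2 ℂ (W × ℂ)).toLinearMap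
  let P2 : WithLp 2 (W × ℂ) →ₗ[ℂ] ℂ := (LinearMap.snd ℂ W ℂ).comp (WithLp.linearEquiv 2 ℂ (W × ℂ)).toLinearMap
  let I2 : V' →ₗ[ℂ] WithLp 2 (EuclideanSpace ℂ ι × V') := 
    (WithLp.linearEquiv 2 ℂ (EuclideanSpace ℂ ι × V')).symm.toLinearMap.comp (LinearMap.inr ℂ _ _)
  let E : ι → WithLp 2 (EuclideanSpace ℂ ι × V') := fun i => 
    WithLp.toLp 2 (EuclideanSpace.single i 1, 0)
  have hin : ∀ u v, inner ℂ (P1 (T u)) (P1 (T v)) + conj (P2 (T u)) * P2 (T v) = (inner ℂ u v : ℂ) := by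
    intro u v
    rw [← T.inner_map_map u v, WithLp.prod_inner_apply]
    simp only [RCLike.inner_apply]
    rw [mul_comm (conj _)]; rfl
  obtain ⟨W1, hW1⟩ : ∃ W1 : V' →ₗ[ℂ] W, W1 = P1.comp (T.toLinearMap.comp I2) := ⟨_, rfl⟩
  obtain ⟨ω, hω⟩ : ∃ ω : V' →ₗ[ℂ] ℂ, ω = P2.comp (T.toLinearMap.comp I2) := ⟨_, rfl⟩
  have hW1' : ∀ v, W1 v = P1 (T (I2 v)) := by intro v; rw [hW1]; rfl
  have hω' : ∀ v, ω v = P2 (T (I2 v)) := by intro v; rw [hω]; rfl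
  have g1 : ∀ i j, inner ℂ (P1 (T (E i))) (P1 (T (E j))) + conj (P2 (T (E i))) * (P2 (T (E j))) 
      = if i = j then (1:ℂ) else 0 := by
    intro i j
    rw [hin]
    simp only [E, WithLp.prod_inner_apply, EuclideanSpace.inner_single_left, map_one, one_mul,
      PiLp.single_apply, inner_zero_right, add_zero]
  have g2 : ∀ u v, inner ℂ (W1 u) (W1 v) + conj (ω u) * ω v = inner ℂ u v := by
    intro u v
    rw [hW1', hW1', hω', hω', hin]
    simp [I2, WithLp.prod_inner_apply]
  have g3 : ∀ i v, inner ℂ (P1 (T (E i))) (W1 v) + conj (P2 (T (E i))) * ω v = 0 := by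
    intro u v
    rw [hW1', hω', hin]
    simp [E, I2, WithLp.prod_inner_apply]
  have hyd : ∀ i (z : O), y (i, z) = E i + α i z • I2 (J z) := by
    intro i z
    apply (WithLp.linearEquiv 2 ℂ (EuclideanSpace ℂ ι × V')).injective
    ext1
    · simp [y, E, I2]
    · simp [y, E, I2]
  have g4 : ∀ i, ∀ z ∈ O, f i z = P1 (T (E i)) + α i z • W1 (J z) := by
    intro i z hz
    have h1 := congrArg P1 (hT (i, ⟨z, hz⟩))
    rw [hyd, map_add, map_add, map_smul, map_smul, ← hW1'] at h1
    exact h1.symm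
  have g5 : ∀ i, ∀ z ∈ O, α i z = P2 (T (E i)) + α i z * ω (J z) := by
    intro i z hz
    have h1 := congrArg P2 (hT (i, ⟨z, hz⟩))
    rw [hyd, map_add, map_add, map_smul, map_smul, ← hω'] at h1
    exact h1.symm
  exact ⟨_, _, W1, ω, g1, g2, g3, g4, g5⟩

theorem eleven {V V' W ι : Type*} [NormedAddCommGroup V] [InnerProductSpace ℂ V]
    [FiniteDimensional ℂ V] [NormedAddCommGroup V'] [InnerProductSpace ℂ V']
    [FiniteDimensional ℂ V'] [NormedAddCommGroup W] [InnerProductSpace ℂ W]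
    [FiniteDimensional ℂ W] [Fintype ι] [DecidableEq ι] (J : V →ₗᵢ[ℂ] V')
    (hfin : Module.finrank ℂ W + 1 = Fintype.card ι + Module.finrank ℂ V')
    (hV : 2 ≤ Module.finrank ℂ V)
    {U : Set V} (hU : IsOpen U) (hc : IsPreconnected U) (f : ι → V → W)
    (hf : ∀ i, DifferentiableOn ℂ (f i) U) {i0 : ι} {O : Set V} (hO : IsOpen O) (hOU : O ⊆ U)
    (hne : O.Nonempty) (α : ι → V → ℂ) (hα : ∀ z ∈ O, α i0 z ≠ 0)
    (hK : ∀ z ∈ O, ∀ w ∈ O, ∀ i j,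
        Kf f i j z w = (inner ℂ w z - 1) * α i z * conj (α j w)) :
    ∃ (W0 : ι → W) (w0 : ι → ℂ) (W1 : V' →ₗ[ℂ] W) (ω : V' →ₗ[ℂ] ℂ),
      (∀ i j, inner ℂ (W0 i) (W0 j) + conj (w0 i) * w0 j = if i = j then (1:ℂ) else 0) ∧
      (∀ u v, inner ℂ (W1 u) (W1 v) + conj (ω u) * ω v = inner ℂ u v) ∧
      (∀ i v, inner ℂ (W0 i) (W1 v) + conj (w0 i) * ω v = 0) ∧ w0 i0 ≠ 0 ∧
      ∀ z ∈ U, 1 - ω (J z) ≠ 0 ∧ ∀ i, (1 - ω (J z)) • (f i z - W0 i) = w0 i • W1 (J z) := by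
  obtain ⟨W0, w0, W1, ω, g1, g2, g3, g4, g5⟩ := elevenA J hfin f α hK
  have hw0 : w0 i0 ≠ 0 := by
    intro h
    have h1 : ∀ z ∈ O, ω (J z) = 1 := by
      intro z hz
      have := g5 i0 z hz
      rw [h, zero_add] at this
      apply mul_left_cancel₀ (hα z hz)
      rw [← this, mul_one]
    obtain ⟨z, hz⟩ := hne
    have h2 := near_line (hO.mem_nhds hz) z
    obtain ⟨t, ht, ht0⟩ := ((h2.filter_mono nhdsWithin_le_nhds).and 
      (self_mem_nhdsWithin : ({0}ᶜ : Set ℂ) ∈ 𝓝[≠] 0)).exists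
    have h3 := h1 _ ht
    rw [map_add, map_add, map_smul, map_smul, h1 z hz] at h3
    simp at h3
    exact ht0 (by simpa using h3)
  have hid : ∀ i, ∀ z ∈ U, (1 - ω (J z)) • (f i z - W0 i) - w0 i • W1 (J z) = 0 := by
    intro i
    apply identU hU hc _ hO (by rwa [inter_eq_self_of_subset_right hOU])
    · rintro z ⟨-, hz⟩
      have h4 := g4 i z hz
      have h5 := g5 i z hz
      rw [h4, add_sub_cancel_left, smul_smul, ← sub_smul]
      rw [show (1 - ω (J z)) * α i z - w0 i = 0 by linear_combination h5, zero_smul]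
    · have d1 : Differentiable ℂ (fun z => ω (J z)) := 
        (LinearMap.toContinuousLinearMap (ω.comp J.toLinearMap)).differentiable
      have d2 : Differentiable ℂ (fun z => W1 (J z)) := 
        (LinearMap.toContinuousLinearMap (W1.comp J.toLinearMap)).differentiable
      have d3 := hf i
      exact DifferentiableOn.sub (DifferentiableOn.smul 
        ((differentiableOn_const _).sub d1.differentiableOn) (d3.sub_const _)) 
        (d2.differentiableOn.const_smul _)
  refine ⟨W0, w0, W1, ω, g1, g2, g3, hw0, fun z hz => ⟨fun h => ?_, fun i => sub_eq_zero.1 (hid i z hz)⟩⟩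
  have key : ∀ z ∈ U, 1 - ω (J z) = 0 → W1 (J z) = 0 := by
    intro z hz h
    have := hid i0 z hz
    rw [h, zero_smul, zero_sub, neg_eq_zero] at this
    exact (smul_eq_zero.1 this).resolve_left hw0
  have hz1 := key z hz h
  have hex : ∃ η : V, η ≠ 0 ∧ inner ℂ z η = (0:ℂ) := by
    by_contra hcon
    push Not at hcon
    have h1 : Function.Injective (innerSL ℂ z : V →L[ℂ] ℂ).toLinearMap := by
      rw [← LinearMap.ker_eq_bot, LinearMap.ker_eq_bot']
      intro η hη
      by_contra h0
      exact hcon η h0 hη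
    have := LinearMap.finrank_le_finrank_of_injective h1
    simp at this; omega
  obtain ⟨η, hη0, hη⟩ := hex
  have h3 : ω (J η) = 0 := by
    have := g2 (J z) (J η)
    rw [hz1, inner_zero_left, J.inner_map_map, hη, ← sub_eq_zero.1 h] at this
    simpa using this
  obtain ⟨t, ht, ht0⟩ := (((near_line (hU.mem_nhds hz) η).filter_mono nhdsWithin_le_nhds).and 
      (self_mem_nhdsWithin : ({0}ᶜ : Set ℂ) ∈ 𝓝[≠] 0)).exists
  have h4 := key _ ht (by rw [map_add, map_add, map_smul, map_smul, h3, smul_zero, add_zero, h])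
  rw [map_add, map_add, map_smul, map_smul, hz1, zero_add] at h4
  have h5 := (smul_eq_zero.1 h4).resolve_left ht0
  have h6 := g2 (J η) (J η)
  rw [h5, h3, J.inner_map_map] at h6
  simp only [inner_zero_left, mul_zero, zero_add] at h6
  exact hη0 (inner_self_eq_zero.1 h6.symm)

end partJ

section partK
open Metric Set Filter Topology
open scoped ComplexConjugate

theorem rows_form {A V' W : Type*} [NormedAddCommGroup A] [InnerProductSpace ℂ A]
    [NormedAddCommGroup V'] [InnerProductSpace ℂ V'] [NormedAddCommGroup W] [InnerProductSpace ℂ W]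
    {n m : ℕ} (P : A →ₗ[ℂ] W) (φ : A →ₗ[ℂ] ℂ) (W1 : V' →ₗ[ℂ] W) (ω : V' →ₗ[ℂ] ℂ)
    (g1 : ∀ a b, inner ℂ (P a) (P b) = inner ℂ a b - conj (φ a) * φ b)
    (g2 : ∀ u v, inner ℂ (W1 u) (W1 v) = inner ℂ u v - conj (ω u) * ω v)
    (g3 : ∀ a v, inner ℂ (P a) (W1 v) = - (conj (φ a) * ω v))
    (x0 : A) (hx0 : φ x0 = 1) (u : Fin n → A) (hu : Orthonormal ℂ u) (hφu : ∀ i, φ (u i) = 0)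
    (hux : ∀ i, inner ℂ (u i) x0 = (0:ℂ)) (b : Fin m → V') (hb : Orthonormal ℂ b)
    (ra : (Fin n ⊕ Fin 1) ⊕ (Fin n ⊕ Fin m) → A) (rb : (Fin n ⊕ Fin 1) ⊕ (Fin n ⊕ Fin m) → W)
    (hra : ra = Sum.elim (Sum.elim u (fun _ => x0)) 
      (Sum.elim (fun _ => 0) (fun j => -(ω (b j)) • x0)))
    (hrb : rb = Sum.elim (Sum.elim (fun _ => 0) (fun _ => P x0)) 
      (Sum.elim (fun i => P (u i)) (fun j => -(ω (b j)) • P x0 + W1 (b j)))) :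
    ∀ k l, inner ℂ (ra l) (ra k) - inner ℂ (rb l) (rb k) = 
      if k = l then Sum.elim (fun _ => (1:ℂ)) (fun _ => -1) k else 0 := by
  have g3' : ∀ a v, inner ℂ (W1 v) (P a) = - (φ a * conj (ω v)) := by
    intro a v
    rw [← inner_conj_symm, g3]; simp
  have hxu : ∀ i, inner ℂ x0 (u i) = (0:ℂ) := by
    intro i; rw [← inner_conj_symm, hux, map_zero]
  have hu' : ∀ i j, inner ℂ (u j) (u i) = if i = j then (1:ℂ) else 0 := by
    intro i j; rw [orthonormal_iff_ite.1 hu]; simp only [eq_comm]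
  have hb' : ∀ i j, inner ℂ (b j) (b i) = if i = j then (1:ℂ) else 0 := by
    intro i j; rw [orthonormal_iff_ite.1 hb]; simp only [eq_comm]
  have e1 : ∀ i : Fin 1, i = 0 := fun i => Subsingleton.elim _ _
  rintro ((i|i)|(i|i)) ((j|j)|(j|j)) <;>
  simp only [hra, hrb, Sum.elim_inl, Sum.elim_inr, hu', hb', g1, g2, g3, g3', hx0, hφu, hxu, hux,
    inner_add_left, inner_add_right, inner_smul_left, inner_smul_right, inner_zero_left, 
    inner_zero_right, Sum.inl.injEq, Sum.inr.injEq, reduceCtorEq, if_false, map_neg, map_zero,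
    map_one, e1, if_true] <;> (try split_ifs) <;> ring

end partK

section mylemmas
open Metric Set Filter Topology
open scoped ComplexConjugate

theorem rowSpan_mul_le {k m n : ℕ} (D : Matrix (Fin k) (Fin m) ℂ) (A : Matrix (Fin m) (Fin n) ℂ) :
    rowSpan (D * A) ≤ rowSpan A := by
  unfold rowSpan
  rw [Submodule.span_le]
  rintro _ ⟨i, rfl⟩
  have : (D * A) i = ∑ j, D i j • A j := by
    ext c; simp [Matrix.mul_apply, Finset.sum_apply]
  simp only [this]
  exact Submodule.sum_mem _ (fun j _ => Submodule.smul_mem _ _ (Submodule.subset_span ⟨j, rfl⟩))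

theorem rowSpan_unit_mul {m n : ℕ} (D : Matrix (Fin m) (Fin m) ℂ) (hD : IsUnit D) 
    (A : Matrix (Fin m) (Fin n) ℂ) : rowSpan (D * A) = rowSpan A := by
  apply le_antisymm (rowSpan_mul_le D A)
  have h := rowSpan_mul_le D⁻¹ (D * A)
  rwa [← Matrix.mul_assoc, Matrix.nonsing_inv_mul _ ((Matrix.isUnit_iff_isUnit_det D).1 hD), 
    Matrix.one_mul] at h

abbrev sig2 (n m : ℕ) : (Fin n ⊕ Fin 1) ⊕ (Fin n ⊕ Fin m) ≃ Fin ((n+1)+(n+m)) :=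
  (Equiv.sumCongr finSumFinEquiv finSumFinEquiv).trans finSumFinEquiv

theorem sigMat_sig2 (n m : ℕ) (k l) : sigMat (n+1) (n+m) (sig2 n m k) (sig2 n m l) = 
    if k = l then Sum.elim (fun _ => (1:ℂ)) (fun _ => -1) k else 0 := by
  unfold sigMat
  rw [Matrix.diagonal_apply]
  simp only [EmbeddingLike.apply_eq_iff_eq]
  congr 1
  rcases k with k | k
  · simp [sig2]; omega
  · simp [sig2]; omega

theorem form_mat (n m : ℕ) (ra : (Fin n ⊕ Fin 1) ⊕ (Fin n ⊕ Fin m) → EuclideanSpace ℂ (Fin (n+1))) 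
    (rb : (Fin n ⊕ Fin 1) ⊕ (Fin n ⊕ Fin m) → EuclideanSpace ℂ (Fin (n+m)))
    (h : ∀ k l, inner ℂ (ra l) (ra k) - inner ℂ (rb l) (rb k) = 
      if k = l then Sum.elim (fun _ => (1:ℂ)) (fun _ => -1) k else 0)
    (R : Matrix (Fin ((n+1)+(n+m))) (Fin ((n+1)+(n+m))) ℂ)
    (hR : R = Matrix.of fun k => Fin.append (ra ((sig2 n m).symm k)) (rb ((sig2 n m).symm k))) :
    R * sigMat (n+1) (n+m) * Rᴴ = sigMat (n+1) (n+m) := by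
  ext k l
  obtain ⟨k, rfl⟩ := (sig2 n m).surjective k
  obtain ⟨l, rfl⟩ := (sig2 n m).surjective l
  rw [sigMat_sig2, ← h k l, Matrix.mul_apply, Fin.sum_univ_add]
  simp only [sigMat, Matrix.mul_diagonal, Matrix.conjTranspose_apply, hR, Matrix.of_apply,
    Equiv.symm_apply_apply, Fin.append_left, Fin.append_right, PiLp.inner_apply, RCLike.inner_apply]
  have h1 : ∀ x : Fin (n+1), ((Fin.castAdd (n+m) x : Fin (n+1+(n+m))) : ℕ) < n+1 := by
    intro x; simpa using x.2
  have h2 : ∀ x : Fin (n+m), ¬ ((Fin.natAdd (n+1) x : Fin (n+1+(n+m))) : ℕ) < n+1 := by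
    intro x; simp only [Fin.val_natAdd]; omega
  simp only [h1, h2, if_true, if_false, RCLike.star_def, mul_one, mul_neg, neg_mul, 
    Finset.sum_neg_distrib, sub_eq_add_neg]

theorem chart_mul_left (n m : ℕ) (D : Matrix (Fin n) (Fin n) ℂ) (Z : Matrix (Fin n) (Fin m) ℂ) (k x) :
    (D * chartMat n m Z) k (Fin.castAdd m x) = D k x := by
  simp only [Matrix.mul_apply, chartMat, Matrix.of_apply, Fin.val_castAdd, x.2, dif_pos, 
    ← Fin.ext_iff]
  simp

theorem chart_mul_right (n m : ℕ) (D : Matrix (Fin n) (Fin n) ℂ) (Z : Matrix (Fin n) (Fin m) ℂ) (k x) :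
    (D * chartMat n m Z) k (Fin.natAdd n x) = ∑ i, D k i * Z i x := by
  simp [Matrix.mul_apply, chartMat]

theorem Phi_inl (n m s : ℕ) (v) (i : Fin n) (t) : 
    Phi (n+1) (n+m) s v (finSumFinEquiv (Sum.inl i)) (sig2 n m t) = 
    Sum.elim (Sum.elim (fun j => if i = j then (1:ℂ) else 0) (fun _ => 0))
      (Sum.elim (fun j => if i = j then (1:ℂ) else 0) (fun _ => 0)) t := by
  rcases t with (j|j)|(j|j)
  · simp [Phi, sig2, Fin.ext_iff]
  · simp [Phi, sig2]
  · have h1 : ¬ (n + 1 + (j:ℕ) < n) := by omega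
    have h2 : n + 1 + (j:ℕ) < 2 * (n+1) - 1 := by omega
    simp [Phi, sig2, Fin.ext_iff, h1, h2]
    omega
  · have h1 : ¬ (n + 1 + (n + (j:ℕ)) < n) := by omega
    have h2 : ¬ (n + 1 + (n + (j:ℕ)) < 2 * (n+1) - 1) := by omega
    simp [Phi, sig2, Fin.ext_iff, h1, h2]

theorem Phi_inr (n m s : ℕ) (z : Fin s → ℂ) (i : Fin 1) (t) : 
    Phi (n+1) (n+m) s (onecons z) (finSumFinEquiv (Sum.inr i)) (sig2 n m t) = 
    Sum.elim (Sum.elim (fun _ => (0:ℂ)) (fun _ => 1))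
      (Sum.elim (fun _ => 0) (fun j : Fin m => if h : (j:ℕ) < s then z ⟨j, h⟩ else 0)) t := by
  rcases t with (j|j)|(j|j)
  · have h1 : ¬ ((j:ℕ) = n) := by omega
    have h2 : ¬ (2 * (n+1) - 1 ≤ (j:ℕ)) := by omega
    simp [Phi, sig2, h1]
    intros; omega
  · simp [Phi, sig2, onecons]
  · have h1 : ¬ (n + 1 + (j:ℕ) = n) := by omega
    have h2 : ¬ (2 * (n+1) - 1 ≤ n + 1 + (j:ℕ)) := by omega
    simp [Phi, sig2, h1]
    intros; omega
  · have h1 : ¬ (n + 1 + (n + (j:ℕ)) = n) := by omega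
    have h2 : (2 * (n+1) ≤ n + 1 + (n + (j:ℕ)) + 1) := by omega
    have h3 : (n + 1 + (n + (j:ℕ)) < 2 * (n+1) - 1 + s) ↔ (j:ℕ) < s := by omega
    have h4 : n + 1 + (n + (j:ℕ)) - (2 * (n+1) - 1) = j := by omega
    simp [Phi, sig2, h1, h2, h3, h4, onecons]

theorem twelve (n m s : ℕ) (W0 : Fin (n+1) → EuclideanSpace ℂ (Fin (n+m))) (w0 : Fin (n+1) → ℂ)
    (W1 : EuclideanSpace ℂ (Fin m) →ₗ[ℂ] EuclideanSpace ℂ (Fin (n+m)))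
    (ω : EuclideanSpace ℂ (Fin m) →ₗ[ℂ] ℂ) {i0 : Fin (n+1)}
    (g1 : ∀ i j, inner ℂ (W0 i) (W0 j) + conj (w0 i) * w0 j = if i = j then (1:ℂ) else 0)
    (g2 : ∀ u v, inner ℂ (W1 u) (W1 v) + conj (ω u) * ω v = inner ℂ u v)
    (g3 : ∀ i v, inner ℂ (W0 i) (W1 v) + conj (w0 i) * ω v = 0) (hw0 : w0 i0 ≠ 0) :
    ∃ R : Matrix (Fin ((n+1)+(n+m))) (Fin ((n+1)+(n+m))) ℂ, R * sigMat (n+1) (n+m) * Rᴴ = sigMat (n+1) (n+m) ∧ 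
      ∀ (Z : Matrix (Fin (n+1)) (Fin (n+m)) ℂ) (z : Fin s → ℂ) (c : EuclideanSpace ℂ (Fin m)),
      (∀ j : Fin m, c j = if h : (j:ℕ) < s then z ⟨j, h⟩ else 0) → 1 - ω c ≠ 0 →
      (∀ i, (1 - ω c) • (WithLp.toLp 2 (Z i) - W0 i) = w0 i • W1 c) → 
      ∃ D : Matrix (Fin (n+1)) (Fin (n+1)) ℂ, IsUnit D ∧ D * chartMat (n+1) (n+m) Z = Phi (n+1) (n+m) s (onecons z) * R := by
  let P : EuclideanSpace ℂ (Fin (n+1)) →ₗ[ℂ] EuclideanSpace ℂ (Fin (n+m)) :=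
    { toFun := fun a => ∑ i, a i • W0 i
      map_add' := by intro a b; simp [add_smul, Finset.sum_add_distrib]
      map_smul' := by intro t a; simp [Finset.smul_sum, smul_smul] }
  let φ : EuclideanSpace ℂ (Fin (n+1)) →ₗ[ℂ] ℂ :=
    { toFun := fun a => ∑ i, a i * w0 i
      map_add' := by intro a b; simp [add_mul, Finset.sum_add_distrib]
      map_smul' := by intro t a; simp [Finset.mul_sum, mul_assoc] }
  have hP : ∀ a, P a = ∑ i, a i • W0 i := fun a => rfl
  have hφ : ∀ a, φ a = ∑ i, a i * w0 i := fun a => rfl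
  have G1 : ∀ a b, inner ℂ (P a) (P b) = inner ℂ a b - conj (φ a) * φ b := by
    intro a b
    have h1 : ∀ i j, inner ℂ (W0 i) (W0 j) = (if i = j then (1:ℂ) else 0) - conj (w0 i) * w0 j := by
      intro i j; rw [← g1]; ring
    rw [hP, hP, hφ, hφ, sum_inner]
    simp only [inner_sum, inner_smul_left, inner_smul_right, h1, mul_sub, Finset.sum_sub_distrib,
      map_sum, Finset.sum_mul_sum, map_mul]
    congr 1
    · simp [PiLp.inner_apply, mul_comm]
    · refine Finset.sum_congr rfl fun i _ => Finset.sum_congr rfl fun j _ => by ring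
  have G2 : ∀ u v, inner ℂ (W1 u) (W1 v) = inner ℂ u v - conj (ω u) * ω v := by
    intro u v; rw [← g2]; ring
  have G3 : ∀ a v, inner ℂ (P a) (W1 v) = - (conj (φ a) * ω v) := by
    intro a v
    have h1 : ∀ i, inner ℂ (W0 i) (W1 v) = - (conj (w0 i) * ω v) := by
      intro i; rw [← sub_eq_zero, sub_neg_eq_add, g3]
    rw [hP, hφ, sum_inner]
    simp only [inner_smul_left, h1, map_sum, map_mul, Finset.sum_mul, ← Finset.sum_neg_distrib]
    refine Finset.sum_congr rfl fun i _ => by ring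
  -- the vector x0
  let cc : EuclideanSpace ℂ (Fin (n+1)) := WithLp.toLp 2 (fun i => conj (w0 i))
  have hφc : ∀ a, φ a = inner ℂ cc a := by
    intro a
    simp [hφ, cc, PiLp.inner_apply]
  have hcc : cc ≠ 0 := by
    intro h
    have := congrArg (fun v : EuclideanSpace ℂ (Fin (n+1)) => v i0) h
    simp [cc] at this
    exact hw0 this
  have hccn : inner ℂ cc cc ≠ (0:ℂ) := by simpa using hcc
  let x0 : EuclideanSpace ℂ (Fin (n+1)) := (inner ℂ cc cc : ℂ)⁻¹ • cc
  have hx0 : φ x0 = 1 := by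
    rw [hφc, inner_smul_right]; exact inv_mul_cancel₀ hccn
  have hfr : Fact (Module.finrank ℂ (EuclideanSpace ℂ (Fin (n+1))) = n + 1) := ⟨by simp⟩
  have hfo : Module.finrank ℂ (Submodule.span ℂ {cc})ᗮ = n := 
    Submodule.finrank_orthogonal_span_singleton hcc
  let B := (stdOrthonormalBasis ℂ (Submodule.span ℂ {cc})ᗮ).reindex (finCongr hfo)
  let u : Fin n → EuclideanSpace ℂ (Fin (n+1)) := fun i => (B i : EuclideanSpace ℂ (Fin (n+1)))
  have hu : Orthonormal ℂ u := B.orthonormal.comp_linearIsometry (Submodule.subtypeₗᵢ _)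
  have hφu : ∀ i, φ (u i) = 0 := by
    intro i
    rw [hφc]
    exact Submodule.mem_orthogonal_singleton_iff_inner_right.1 (B i).2
  have hux : ∀ i, inner ℂ (u i) x0 = (0:ℂ) := by
    intro i
    rw [inner_smul_right, ← inner_conj_symm (u i) cc, ← hφc (u i), hφu]; simp
  clear_value u x0 P φ
  let b : Fin m → EuclideanSpace ℂ (Fin m) := fun j => EuclideanSpace.single j 1
  have hb : Orthonormal ℂ b := EuclideanSpace.orthonormal_single
  have hform := rows_form P φ W1 ω G1 G2 G3 x0 hx0 u hu hφu hux b hb _ _ rfl rfl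
  refine ⟨_, form_mat n m _ _ hform _ rfl, ?_⟩
  intro Z z c hc hωc hZ
  have HZ : ∀ a : EuclideanSpace ℂ (Fin (n+1)), (1 - ω c) • (∑ i, a i • WithLp.toLp 2 (Z i)) = 
      (1 - ω c) • P a + φ a • W1 c := by
    intro a
    rw [hP, hφ, Finset.sum_smul, Finset.smul_sum, Finset.smul_sum, ← Finset.sum_add_distrib]
    refine Finset.sum_congr rfl fun i _ => ?_
    rw [mul_smul, ← hZ i, smul_sub, smul_sub, smul_comm (a i), smul_comm (a i)]
    abel
  have hcb : c = ∑ j, c j • b j := by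
    ext j; simp [b, Pi.single_apply]
  have hω : ω c = ∑ j, c j * ω (b j) := by
    conv_lhs => rw [hcb]
    simp
  have hW1c : W1 c = ∑ j, c j • W1 (b j) := by
    conv_lhs => rw [hcb]
    simp
  let d : Fin n ⊕ Fin 1 → EuclideanSpace ℂ (Fin (n+1)) := Sum.elim u (fun _ => (1 - ω c) • x0)
  have hx00 : x0 ≠ 0 := by rintro h; rw [h] at hx0; simp at hx0
  have hd : LinearIndependent ℂ d := by
    apply linearIndependent_of_ne_zero_of_inner_eq_zero
    · rintro (i|i)
      · exact hu.ne_zero i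
      · exact smul_ne_zero hωc hx00
    · rintro (i|i) (j|j) hij
      · exact hu.2 (fun h => hij (by rw [h]))
      · simp only [d, Sum.elim_inl, Sum.elim_inr, inner_smul_right, hux, mul_zero]
      · simp only [d, Sum.elim_inl, Sum.elim_inr, inner_smul_left]
        rw [← inner_conj_symm, hux, map_zero, mul_zero]
      · exact absurd (by rw [Subsingleton.elim i j]) hij
  refine ⟨Matrix.of fun k => (d (finSumFinEquiv.symm k)).ofLp, ?_, ?_⟩
  · rw [← Matrix.linearIndependent_rows_iff_isUnit]
    have h1 := hd.map' (WithLp.linearEquiv 2 ℂ (Fin (n+1) → ℂ)).toLinearMap (LinearEquiv.ker _)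
    exact h1.comp _ finSumFinEquiv.symm.injective
  · have hvec : ∀ k, (∑ t, Phi (n+1) (n+m) s (onecons z) (finSumFinEquiv k) (sig2 n m t) • 
          (Sum.elim (Sum.elim u (fun _ => x0)) 
      (Sum.elim (fun _ => 0) (fun j => -(ω (b j)) • x0)) t : EuclideanSpace ℂ (Fin (n+1)))) = d k ∧
        (∑ t, Phi (n+1) (n+m) s (onecons z) (finSumFinEquiv k) (sig2 n m t) • 
          (Sum.elim (Sum.elim (fun _ => 0) (fun _ => P x0)) 
      (Sum.elim (fun i => P (u i)) (fun j => -(ω (b j)) • P x0 + W1 (b j))) t : EuclideanSpace ℂ (Fin (n+m)))) =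
        ∑ i, d k i • WithLp.toLp 2 (Z i) := by
      rintro (i|i)
      · simp only [Phi_inl, Fintype.sum_sum_type, Sum.elim_inl, Sum.elim_inr]
        constructor
        · simp [d]
        · have h1 := HZ (u i)
          rw [hφu, zero_smul, add_zero] at h1
          rw [show d (Sum.inl i) = u i from rfl, smul_right_injective _ hωc h1]
          simp
      · have hsum : ∀ {k : ℕ} (y : EuclideanSpace ℂ (Fin k)), ∑ j, c j • (-(ω (b j)) • y) = -(ω c • y) := by
          intro k y
          rw [hω, Finset.sum_smul, ← Finset.sum_neg_distrib]
          refine Finset.sum_congr rfl fun j _ => by rw [neg_smul, smul_neg, smul_smul]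
        simp only [Phi_inr, Fintype.sum_sum_type, Sum.elim_inl, Sum.elim_inr, ← hc]
        constructor
        · simp only [zero_smul, smul_zero, Finset.sum_const_zero, zero_add, Finset.univ_unique, 
            Finset.sum_const, Finset.card_singleton, one_smul, hsum, d, Sum.elim_inr, sub_smul]
          abel
        · have h1 := HZ x0
          rw [hx0, one_smul] at h1
          have h2 : ∑ i_1, d (Sum.inr i) i_1 • WithLp.toLp 2 (Z i_1) = 
              (1 - ω c) • P x0 + W1 c := by
            rw [← h1, Finset.smul_sum]
            simp only [d, Sum.elim_inr, PiLp.smul_apply, smul_smul, smul_eq_mul]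
          rw [h2]
          simp only [zero_smul, smul_zero, Finset.sum_const_zero, zero_add, Finset.univ_unique, 
            Finset.sum_const, Finset.card_singleton, one_smul, smul_add, 
            Finset.sum_add_distrib, ← hW1c, hsum, sub_smul]
          abel
    ext k x
    obtain ⟨k, rfl⟩ := finSumFinEquiv.surjective k
    obtain ⟨h1, h2⟩ := hvec k
    rw [Matrix.mul_apply (M := Phi _ _ _ _), ← (sig2 n m).sum_comp]
    refine Fin.addCases (fun x => ?_) (fun x => ?_) x
    · rw [chart_mul_left]
      simp only [Matrix.of_apply, Equiv.symm_apply_apply, Fin.append_left]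
      rw [← h1]
      simp
    · rw [chart_mul_right]
      simp only [Matrix.of_apply, Equiv.symm_apply_apply, Fin.append_right]
      have h3 := congrArg (fun v : EuclideanSpace ℂ (Fin (n+m)) => v x) h2
      simp only [WithLp.ofLp_sum, Finset.sum_apply, PiLp.smul_apply, smul_eq_mul] at h3
      exact h3.symm
end mylemmas

section mylemmas2
open Metric Set Filter Topology
open scoped ComplexConjugate

theorem cdot_norm {s : ℕ} (v : EuclideanSpace ℂ (Fin s)) : cdot v.ofLp v.ofLp = 1 ↔ ‖v‖ = 1 := by
  have h : cdot v.ofLp v.ofLp = inner ℂ v v := by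
    simp only [cdot, PiLp.inner_apply, RCLike.inner_apply]
  rw [h, inner_self_c]
  constructor
  · intro h1
    have h2 : ‖v‖ ^ 2 = 1 := by exact_mod_cast h1
    nlinarith [norm_nonneg v]
  · intro h1; rw [h1]; simp

def padL (s m : ℕ) : EuclideanSpace ℂ (Fin s) →ₗ[ℂ] EuclideanSpace ℂ (Fin m) where
  toFun z := WithLp.toLp 2 (fun j : Fin m => if h : (j:ℕ) < s then z ⟨j, h⟩ else 0)
  map_add' := by
    intro a b; ext j; by_cases h : (j:ℕ) < s <;> simp [h]
  map_smul' := by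
    intro a b; ext j; by_cases h : (j:ℕ) < s <;> simp [h]

theorem padL_norm {s m : ℕ} (h : s ≤ m) (z) : ‖padL s m z‖ = ‖z‖ := by
  obtain ⟨k, rfl⟩ := Nat.exists_eq_add_of_le h
  rw [EuclideanSpace.norm_eq, EuclideanSpace.norm_eq, Fin.sum_univ_add]
  simp [padL]

def padI {s m : ℕ} (h : s ≤ m) : EuclideanSpace ℂ (Fin s) →ₗᵢ[ℂ] EuclideanSpace ℂ (Fin m) :=
  ⟨padL s m, padL_norm h⟩

theorem sig_sq (a b : ℕ) : sigMat a b * sigMat a b = 1 := by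
  unfold sigMat
  rw [Matrix.diagonal_mul_diagonal, ← Matrix.diagonal_one]
  congr 1; ext i; split_ifs <;> simp

theorem sig_inv {a b : ℕ} (R : Matrix (Fin (a+b)) (Fin (a+b)) ℂ)
    (hR : R * sigMat a b * Rᴴ = sigMat a b) : ∃ M' : Matrix (Fin (a+b)) (Fin (a+b)) ℂ, 
      IsUnit M' ∧ R * M' = 1 ∧ M' * sigMat a b * M'ᴴ = sigMat a b := by
  have h1 : R * (sigMat a b * Rᴴ * sigMat a b) = 1 := by
    rw [← Matrix.mul_assoc, ← Matrix.mul_assoc, hR, sig_sq]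
  obtain ⟨M', hM'⟩ : ∃ M', M' = sigMat a b * Rᴴ * sigMat a b := ⟨_, rfl⟩
  rw [← hM'] at h1
  have h2 : M' * R = 1 := mul_eq_one_comm.1 h1
  refine ⟨M', IsUnit.of_mul_eq_one R h2, h1, ?_⟩
  have h3 : Rᴴ * M'ᴴ = 1 := by rw [← Matrix.conjTranspose_mul, h2, Matrix.conjTranspose_one]
  calc M' * sigMat a b * M'ᴴ = M' * (R * sigMat a b * Rᴴ) * M'ᴴ := by rw [hR]
    _ = (M' * R) * sigMat a b * (Rᴴ * M'ᴴ) := by simp only [Matrix.mul_assoc]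
    _ = _ := by rw [h2, h3, Matrix.one_mul, Matrix.mul_one]

theorem main_n
    (s n m : ℕ) (hs : 2 ≤ s) (hsm : s ≤ m) (hd : m + 1 < 2 * s)
    (U : Set (Fin s → ℂ)) (hopen : IsOpen U) (hconn : IsPreconnected U)
    (hmeets : ∃ z ∈ U, cdot z z = 1)
    (F : (Fin s → ℂ) → Fin (n+1) → Fin (n+m) → ℂ)
    (hF : DifferentiableOn ℂ F U)
    (hshilov : ∀ z ∈ U, cdot z z = 1 →
      Matrix.of (F z) * (Matrix.of (F z))ᴴ = (1 : Matrix (Fin (n+1)) (Fin (n+1)) ℂ))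
    (hnonconst : ∃ z ∈ U, ∃ w ∈ U, F z ≠ F w) :
    ∃ M : Matrix (Fin (1 + s)) (Fin (1 + s)) ℂ,
      ∃ M' : Matrix (Fin ((n+1) + (n+m))) (Fin ((n+1) + (n+m))) ℂ,
        IsUnit M ∧ IsUnit M' ∧
        M * sigMat 1 s * Mᴴ = sigMat 1 s ∧
        M' * sigMat (n+1) (n+m) * M'ᴴ = sigMat (n+1) (n+m) ∧
        ∀ z ∈ U,
          rowSpan (chartMat (n+1) (n+m) (Matrix.of (F z)) * M') =
            rowSpan (Phi (n+1) (n+m) s (Matrix.vecMul (onecons z) M)) := by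
  let f : Fin (n+1) → EuclideanSpace ℂ (Fin s) → EuclideanSpace ℂ (Fin (n+m)) := 
    fun i v => WithLp.toLp 2 (F v.ofLp i)
  let L := (EuclideanSpace.equiv (Fin s) ℂ)
  let L' := (EuclideanSpace.equiv (Fin (n+m)) ℂ)
  let U' : Set (EuclideanSpace ℂ (Fin s)) := L ⁻¹' U
  have hU' : IsOpen U' := hopen.preimage L.continuous
  have hc' : IsPreconnected U' := (L.toHomeomorph.isPreconnected_preimage).2 hconn
  have hf : ∀ i, DifferentiableOn ℂ (f i) U' := by
    intro i
    have h1 : DifferentiableOn ℂ (fun z => F z i) U := differentiableOn_pi.1 hF i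
    have h2 : DifferentiableOn ℂ (fun v => F (L v) i) U' := 
      h1.comp L.differentiableOn (fun v hv => hv)
    exact L'.symm.differentiable.comp_differentiableOn h2
  have hS : ∀ q ∈ U', ‖q‖ = 1 → ∀ i j, Kf f i j q q = 0 := by
    intro q hq hq1 i j
    have h1 := hshilov q.ofLp hq ((cdot_norm q).2 hq1)
    have h2 := congrFun (congrFun h1 i) j
    rw [Matrix.one_apply] at h2
    unfold Kf
    rw [← h2, sub_eq_zero]
    simp [Matrix.mul_apply, f, PiLp.inner_apply]
  obtain ⟨z1, hz1, z2, hz2, hne⟩ := hnonconst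
  obtain ⟨i0, hi0⟩ := Function.ne_iff.1 hne
  have hn : ∃ z ∈ U', ∃ w ∈ U', f i0 z ≠ f i0 w := 
    ⟨WithLp.toLp 2 z1, hz1, WithLp.toLp 2 z2, hz2, fun h => hi0 (congrArg WithLp.ofLp h)⟩
  have hm' : ∃ z ∈ U', ‖z‖ = 1 := by
    obtain ⟨z, hz, hz1⟩ := hmeets
    exact ⟨WithLp.toLp 2 z, hz, (cdot_norm (WithLp.toLp 2 z)).1 hz1⟩
  have hV : 2 ≤ Module.finrank ℂ (EuclideanSpace ℂ (Fin s)) := by simpa using hs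
  obtain ⟨p, hpU, hp, δ, hδ, hball, ⟨e, hpe, hfe⟩, hK, h9⟩ := assemble hV 
    (by simp; omega) hU' hc' f hf hS i0 hn hm'
  obtain ⟨O, hO, hOb, hOne, α, hα, hKα⟩ := ten f hp hδ (fun i => (hf i).mono hball) hpe hfe hK h9
  obtain ⟨W0, w0, W1, ω, g1, g2, g3, hw0, hfin⟩ := eleven (padI hsm) (by simp; omega) hV hU' hc' f hf
    hO (hOb.trans hball) hOne α hα hKα
  obtain ⟨R, hR, hrow⟩ := twelve n m s W0 w0 W1 ω g1 g2 g3 hw0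
  obtain ⟨M', hMu, hRM, hMf⟩ := sig_inv R hR
  refine ⟨1, M', isUnit_one, hMu, by simp, hMf, ?_⟩
  intro z hz
  obtain ⟨h1, h2⟩ := hfin (WithLp.toLp 2 z) hz
  obtain ⟨D, hD, hDe⟩ := hrow (Matrix.of (F z)) z (padI hsm (WithLp.toLp 2 z)) (fun j => rfl) h1 h2
  rw [Matrix.vecMul_one, ← rowSpan_unit_mul D hD, ← Matrix.mul_assoc, hDe, Matrix.mul_assoc, hRM,
    Matrix.mul_one]
end mylemmas2

/-- Let `s ≥ 2`, `2 ≤ r' ≤ s'` with `s − 1 ≤ s' − r' < 2s − 2`.  Let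
`U ⊆ ℂ^s` be open, connected, meeting the unit sphere `S(Ω_{1,s})`, and let `F` be a
nonconstant holomorphic map with `F(z)·F(z)ᴴ = I_{r'}` on `U ∩ S(Ω_{1,s})`.  Then there
exist a `(1,s)`-unitary `M ∈ GL(1+s,ℂ)` and an `(r',s')`-unitary `M' ∈ GL(r'+s',ℂ)` with
`rowSpan([I_{r'} | F(z)]·M') = rowSpan(Φ((1,z)·M))` for all `z ∈ U`; i.e. after
composing with automorphisms on both sides, `F` is the standard linear embedding. -/
theorem rigidity_linear_embedding_shilov
    (s r' s' : ℕ) (hs : 2 ≤ s) (hr' : 2 ≤ r') (hr's' : r' ≤ s')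
    (hlow : (s : ℤ) - 1 ≤ (s' : ℤ) - (r' : ℤ))
    (hhigh : (s' : ℤ) - (r' : ℤ) < 2 * (s : ℤ) - 2)
    (U : Set (Fin s → ℂ)) (hopen : IsOpen U) (hconn : IsPreconnected U)
    (hmeets : ∃ z ∈ U, cdot z z = 1)
    (F : (Fin s → ℂ) → Fin r' → Fin s' → ℂ)
    (hF : DifferentiableOn ℂ F U)
    (hshilov : ∀ z ∈ U, cdot z z = 1 →
      Matrix.of (F z) * (Matrix.of (F z))ᴴ = (1 : Matrix (Fin r') (Fin r') ℂ))
    (hnonconst : ∃ z ∈ U, ∃ w ∈ U, F z ≠ F w) :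
    ∃ M : Matrix (Fin (1 + s)) (Fin (1 + s)) ℂ,
      ∃ M' : Matrix (Fin (r' + s')) (Fin (r' + s')) ℂ,
        IsUnit M ∧ IsUnit M' ∧
        M * sigMat 1 s * Mᴴ = sigMat 1 s ∧
        M' * sigMat r' s' * M'ᴴ = sigMat r' s' ∧
        ∀ z ∈ U,
          rowSpan (chartMat r' s' (Matrix.of (F z)) * M') =
            rowSpan (Phi r' s' s (Matrix.vecMul (onecons z) M)) := by
  obtain ⟨n, rfl⟩ : ∃ n, r' = n + 1 := ⟨r' - 1, by omega⟩
  obtain ⟨m, rfl⟩ : ∃ m, s' = n + m := ⟨s' - n, by omega⟩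
  exact main_n s n m hs (by omega) (by omega) U hopen hconn hmeets F hF hshilov hnonconst
end
end

section
/- Let r, s, r', s' be positive integers with r ≤ s and r' ≤ s'. Let U ⊆ ℂ^{r×s} be a connected open set containing a point Z₀ with Z₀·Z₀ᴴ = I_r, and let F : U → ℂ^{r'×s'} be a holomorphic map such that F(Z)·F(Z)ᴴ = I_{r'} for every Z ∈ U with Z·Zᴴ = I_r. Then there exists an open connected set U' ⊆ U containing a point Z₁ with Z₁·Z₁ᴴ = I_r such that for all Z, W ∈ U' with Z·Wᴴ = I_r one has F(Z)·F(W)ᴴ = I_{r'}; i.e. F restricted to U' is an orthogonal map. -/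
open scoped BigOperators
open Matrix

noncomputable section

lemma aux_contAt_inv {X : Type*} [TopologicalSpace X] {n : ℕ}
    (f : X → Matrix (Fin n) (Fin n) ℂ) (x : X) (hf : ContinuousAt f x) (h : (f x).det ≠ 0) :
    ContinuousAt (fun y => (f y)⁻¹) x := by
  simp only [Matrix.inv_def, Ring.inverse_eq_inv']
  have h1 : ContinuousAt (fun y => (f y).det) x :=
    (continuous_id.matrix_det).continuousAt.comp hf
  have h2 : ContinuousAt (fun y => (f y).adjugate) x :=
    (continuous_id.matrix_adjugate).continuousAt.comp hf
  exact (h1.inv₀ h).smul h2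

lemma aux_contAt_mul {X : Type*} [TopologicalSpace X] {l m n : ℕ}
    (f : X → Matrix (Fin l) (Fin m) ℂ) (g : X → Matrix (Fin m) (Fin n) ℂ) (x : X)
    (hf : ContinuousAt f x) (hg : ContinuousAt g x) :
    ContinuousAt (fun y => f y * g y) x := by
  have : Continuous (fun p : Matrix (Fin l) (Fin m) ℂ × Matrix (Fin m) (Fin n) ℂ => p.1 * p.2) :=
    continuous_fst.matrix_mul continuous_snd
  exact this.continuousAt.comp (f := fun y => (f y, g y)) (hf.prodMk hg)

lemma aux_diff_det {n : ℕ} (f : ℂ → Matrix (Fin n) (Fin n) ℂ) (t : ℂ)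
    (hf : ∀ i j, DifferentiableAt ℂ (fun t => f t i j) t) :
    DifferentiableAt ℂ (fun t => (f t).det) t := by
  simp only [Matrix.det_apply']
  refine DifferentiableAt.fun_sum fun σ _ => ?_
  refine DifferentiableAt.const_mul ?_ _
  exact DifferentiableAt.fun_finsetProd fun i _ => hf _ _

lemma aux_diff_inv {n : ℕ} (f : ℂ → Matrix (Fin n) (Fin n) ℂ) (t : ℂ)
    (hf : ∀ i j, DifferentiableAt ℂ (fun t => f t i j) t) (h : (f t).det ≠ 0) (i j) :
    DifferentiableAt ℂ (fun t => (f t)⁻¹ i j) t := by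
  simp only [Matrix.inv_def, Ring.inverse_eq_inv', Matrix.smul_apply, smul_eq_mul,
    Matrix.adjugate_apply]
  refine ((aux_diff_det f t hf).inv h).mul (aux_diff_det _ t ?_)
  intro a b
  simp only [Matrix.updateRow_apply]
  split_ifs
  · exact differentiableAt_const _
  · exact hf _ _

lemma aux_diff_mul {l m n : ℕ} (f : ℂ → Matrix (Fin l) (Fin m) ℂ)
    (g : ℂ → Matrix (Fin m) (Fin n) ℂ) (t : ℂ)
    (hf : ∀ i j, DifferentiableAt ℂ (fun t => f t i j) t)
    (hg : ∀ i j, DifferentiableAt ℂ (fun t => g t i j) t) (i j) :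
    DifferentiableAt ℂ (fun t => (f t * g t) i j) t := by
  simp only [Matrix.mul_apply]
  exact DifferentiableAt.fun_sum fun k _ => (hf _ _).mul (hg _ _)

/-- skew-Hermitian pencil -/
def auxK {n : ℕ} (K : Matrix (Fin n) (Fin n) ℂ) (t : ℂ) : Matrix (Fin n) (Fin n) ℂ :=
  (1 / 2 : ℂ) • (K - Kᴴ) - (Complex.I * t / 2) • (K + Kᴴ)

lemma auxK_I {n : ℕ} (K : Matrix (Fin n) (Fin n) ℂ) : auxK K Complex.I = K := by
  ext i j
  simp only [auxK, Matrix.sub_apply, Matrix.smul_apply, Matrix.add_apply, smul_eq_mul,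
    Complex.I_mul_I]
  ring

lemma auxK_negI {n : ℕ} (K : Matrix (Fin n) (Fin n) ℂ) : auxK K (-Complex.I) = -Kᴴ := by
  ext i j
  simp only [auxK, Matrix.sub_apply, Matrix.smul_apply, Matrix.add_apply, smul_eq_mul,
    Complex.I_mul_I, mul_neg, Matrix.neg_apply]
  ring

lemma auxK_real {n : ℕ} (K : Matrix (Fin n) (Fin n) ℂ) (x : ℝ) :
    (auxK K x)ᴴ = - auxK K x := by
  ext i j
  simp [auxK, Matrix.conjTranspose_apply]
  ring

/-- Cayley transform -/
def auxC {n : ℕ} (K : Matrix (Fin n) (Fin n) ℂ) : Matrix (Fin n) (Fin n) ℂ :=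
  (1 + K) * (1 - K)⁻¹

lemma auxC_unitary {n : ℕ} (K : Matrix (Fin n) (Fin n) ℂ) (hK : Kᴴ = -K)
    (h : (1 - K).det ≠ 0) : auxC K * (auxC K)ᴴ = 1 := by
  have hu : IsUnit (1 - K).det := isUnit_iff_ne_zero.2 h
  have e : (1 - K)ᴴ = 1 + K := by simp [hK]
  have e' : (1 + K)ᴴ = 1 - K := by rw [← e, conjTranspose_conjTranspose]
  have hu' : IsUnit (1 + K).det := by
    rw [← e, det_conjTranspose]; exact hu.star
  have hc : (1 + K) * (1 - K) = (1 - K) * (1 + K) := by noncomm_ring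
  unfold auxC
  rw [conjTranspose_mul, conjTranspose_nonsing_inv, e, e']
  have hc2 : (1 - K)⁻¹ * (1 + K)⁻¹ = (1 + K)⁻¹ * (1 - K)⁻¹ := by
    rw [← Matrix.mul_inv_rev, ← Matrix.mul_inv_rev, hc]
  calc (1 + K) * (1 - K)⁻¹ * ((1 + K)⁻¹ * (1 - K))
      = (1 + K) * ((1 - K)⁻¹ * (1 + K)⁻¹) * (1 - K) := by simp only [Matrix.mul_assoc]
    _ = ((1 + K) * (1 + K)⁻¹) * ((1 - K)⁻¹ * (1 - K)) := by
        rw [hc2]; simp only [Matrix.mul_assoc]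
    _ = 1 := by rw [Matrix.mul_nonsing_inv _ hu', Matrix.nonsing_inv_mul _ hu, one_mul]

/-- the group element -/
def auxg {r s : ℕ} (A Z W : Matrix (Fin r) (Fin s) ℂ) : Matrix (Fin s) (Fin s) ℂ :=
  Aᴴ * Z + (1 - Aᴴ * A) * (1 - Wᴴ * Z)

def auxk {r s : ℕ} (A Z W : Matrix (Fin r) (Fin s) ℂ) : Matrix (Fin s) (Fin s) ℂ :=
  (auxg A Z W - 1) * (auxg A Z W + 1)⁻¹

lemma auxg_self {r s : ℕ} (A : Matrix (Fin r) (Fin s) ℂ) (hA : A * Aᴴ = 1) :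
    auxg A A A = 1 := by
  have h : (Aᴴ * A) * (Aᴴ * A) = Aᴴ * A := by
    rw [Matrix.mul_assoc, ← Matrix.mul_assoc A, hA, Matrix.one_mul]
  unfold auxg
  rw [mul_sub, sub_mul, sub_mul, h]; simp

lemma auxg_left {r s : ℕ} (A Z W : Matrix (Fin r) (Fin s) ℂ) (hA : A * Aᴴ = 1) :
    A * auxg A Z W = Z := by
  unfold auxg
  have h0 : A * (1 - Aᴴ * A) = 0 := by
    rw [Matrix.mul_sub, ← Matrix.mul_assoc, hA]; simp
  rw [Matrix.mul_add, ← Matrix.mul_assoc, ← Matrix.mul_assoc, h0, hA]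
  simp

lemma auxg_right {r s : ℕ} (A Z W : Matrix (Fin r) (Fin s) ℂ) (h : Z * Wᴴ = 1) :
    auxg A Z W * Wᴴ = Aᴴ := by
  unfold auxg
  have h0 : (1 - Wᴴ * Z) * Wᴴ = 0 := by
    rw [Matrix.sub_mul, Matrix.mul_assoc, h]; simp
  rw [Matrix.add_mul, Matrix.mul_assoc, h, Matrix.mul_assoc (1 - Aᴴ * A), h0]
  simp

lemma auxk_facts {r s : ℕ} (A Z W : Matrix (Fin r) (Fin s) ℂ)
    (hA : A * Aᴴ = 1) (h : Z * Wᴴ = 1) (hg : (auxg A Z W + 1).det ≠ 0)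
    (h2 : (1 + (auxk A Z W)ᴴ).det ≠ 0) :
    A * auxC (auxk A Z W) = Z ∧ A * auxC (-(auxk A Z W)ᴴ) = W := by
  have hgl := auxg_left A Z W hA
  have hgr := auxg_right A Z W h
  unfold auxk at *
  generalize auxg A Z W = g at *
  have hu : IsUnit (g + 1).det := isUnit_iff_ne_zero.2 hg
  have i1 : (g + 1)⁻¹ * (g + 1) = 1 := Matrix.nonsing_inv_mul _ hu
  have i2 : (g + 1) * (g + 1)⁻¹ = 1 := Matrix.mul_nonsing_inv _ hu
  set K := (g - 1) * (g + 1)⁻¹ with hK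
  have e1 : 1 - K = (2 : ℂ) • (g + 1)⁻¹ := by
    have : 1 - K = (g + 1) * (g + 1)⁻¹ - K := by rw [i2]
    rw [this, hK, ← sub_mul, two_smul, ← two_mul]
    congr 1
    rw [← one_add_one_eq_two]; abel
  have e2 : 1 + K = (2 : ℂ) • ((g + 1)⁻¹ * g) := by
    have c : (g + 1)⁻¹ * g = 1 - (g + 1)⁻¹ := by
      rw [eq_sub_iff_add_eq]
      calc (g + 1)⁻¹ * g + (g + 1)⁻¹ = (g + 1)⁻¹ * (g + 1) := by rw [mul_add, mul_one]
        _ = 1 := i1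
    have : K = 1 - (2 : ℂ) • (g + 1)⁻¹ := by rw [← e1]; abel
    rw [this, c, smul_sub, two_smul ℂ (1 : Matrix (Fin s) (Fin s) ℂ)]; abel
  have e3 : 1 + K = (2 : ℂ) • (g * (g + 1)⁻¹) := by
    have c : g * (g + 1)⁻¹ = 1 - (g + 1)⁻¹ := by
      rw [eq_sub_iff_add_eq]
      calc g * (g + 1)⁻¹ + (g + 1)⁻¹ = (g + 1) * (g + 1)⁻¹ := by rw [add_mul, one_mul]
        _ = 1 := i2
    have : K = 1 - (2 : ℂ) • (g + 1)⁻¹ := by rw [← e1]; abel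
    rw [this, c, smul_sub, two_smul ℂ (1 : Matrix (Fin s) (Fin s) ℂ)]; abel
  constructor
  · have : (1 - K)⁻¹ = (1 / 2 : ℂ) • (g + 1) := by
      apply Matrix.inv_eq_right_inv
      rw [e1, Matrix.smul_mul, Matrix.mul_smul, i1, smul_smul]; norm_num
    unfold auxC
    rw [this, e3, Matrix.smul_mul, Matrix.mul_smul, Matrix.mul_assoc, Matrix.mul_smul, i1, Matrix.mul_smul,
      Matrix.mul_smul, smul_smul]
    norm_num
    exact hgl
  · have key : (1 + K) * Wᴴ = (1 - K) * Aᴴ := by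
      rw [e1, e2, Matrix.smul_mul, Matrix.mul_assoc, hgr, Matrix.smul_mul]
    have key2 := congrArg conjTranspose key
    simp only [conjTranspose_mul, conjTranspose_conjTranspose, conjTranspose_add,
      conjTranspose_sub, conjTranspose_one] at key2
    unfold auxC
    rw [sub_neg_eq_add, ← sub_eq_add_neg, ← Matrix.mul_assoc, ← key2, Matrix.mul_assoc,
      Matrix.mul_nonsing_inv _ (isUnit_iff_ne_zero.2 h2), Matrix.mul_one]

lemma aux_near {r s : ℕ} (A : Matrix (Fin r) (Fin s) ℂ) (hA : A * Aᴴ = 1)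
    (U : Set (Matrix (Fin r) (Fin s) ℂ)) (hU : U ∈ nhds A) :
    ∀ᶠ p : Matrix (Fin r) (Fin s) ℂ × Matrix (Fin r) (Fin s) ℂ in nhds (A, A),
      (auxg A p.1 p.2 + 1).det ≠ 0 ∧ ∀ t ∈ Metric.closedBall (0 : ℂ) 2,
        (1 - auxK (auxk A p.1 p.2) t).det ≠ 0 ∧ A * auxC (auxK (auxk A p.1 p.2) t) ∈ U := by
  have cg : Continuous (fun p : Matrix (Fin r) (Fin s) ℂ × Matrix (Fin r) (Fin s) ℂ =>
      auxg A p.1 p.2) := by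
    unfold auxg
    fun_prop
  have dg : (auxg A A A + 1).det ≠ 0 := by
    rw [auxg_self A hA]
    have : (1 + 1 : Matrix (Fin s) (Fin s) ℂ) = (2 : ℂ) • 1 := by rw [two_smul]
    rw [this, det_smul]; simp
  have k0 : auxk A A A = 0 := by
    unfold auxk; rw [auxg_self A hA]; simp
  have K0 : ∀ t, auxK (auxk A A A) t = 0 := by intro t; rw [k0]; simp [auxK]
  have ck : ContinuousAt (fun p : Matrix (Fin r) (Fin s) ℂ × Matrix (Fin r) (Fin s) ℂ =>
      auxk A p.1 p.2) (A, A) := by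
    unfold auxk
    exact aux_contAt_mul _ _ _ (cg.sub continuous_const).continuousAt
      (aux_contAt_inv _ _ (cg.add continuous_const).continuousAt dg)
  refine Filter.Eventually.and ?_ ?_
  · have : Continuous (fun p : Matrix (Fin r) (Fin s) ℂ × Matrix (Fin r) (Fin s) ℂ =>
      (auxg A p.1 p.2 + 1).det) := (cg.add continuous_const).matrix_det
    exact this.continuousAt.eventually_ne dg
  · refine (isCompact_closedBall (0 : ℂ) 2).eventually_forall_of_forall_eventually ?_
    intro t _
    have cK : Continuous (fun q : Matrix (Fin s) (Fin s) ℂ × ℂ => auxK q.1 q.2) := by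
      unfold auxK
      fun_prop
    have cKt : ContinuousAt (fun q : (Matrix (Fin r) (Fin s) ℂ × Matrix (Fin r) (Fin s) ℂ) × ℂ =>
        auxK (auxk A q.1.1 q.1.2) q.2) ((A, A), t) := by
      have h1 : ContinuousAt (fun q : (Matrix (Fin r) (Fin s) ℂ × Matrix (Fin r) (Fin s) ℂ) × ℂ =>
        auxk A q.1.1 q.1.2) ((A, A), t) :=
        ContinuousAt.comp (f := Prod.fst) (x := ((A, A), t)) ck continuousAt_fst
      exact cK.continuousAt.comp (f := fun q : (Matrix (Fin r) (Fin s) ℂ ×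
        Matrix (Fin r) (Fin s) ℂ) × ℂ => (auxk A q.1.1 q.1.2, q.2)) (h1.prodMk continuousAt_snd)
    have d1 : (1 - auxK (auxk A A A) t).det ≠ 0 := by rw [K0]; simp
    have c1 := (continuousAt_const (y := (1 : Matrix (Fin s) (Fin s) ℂ))).sub cKt
    refine Filter.Eventually.and ?_ ?_
    · have : ContinuousAt (fun q : (Matrix (Fin r) (Fin s) ℂ × Matrix (Fin r) (Fin s) ℂ) × ℂ =>
        (1 - auxK (auxk A q.1.1 q.1.2) q.2).det) ((A, A), t) :=
        (continuous_id.matrix_det).continuousAt.comp c1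
      exact this.eventually_ne d1
    · have : ContinuousAt (fun q : (Matrix (Fin r) (Fin s) ℂ × Matrix (Fin r) (Fin s) ℂ) × ℂ =>
        A * auxC (auxK (auxk A q.1.1 q.1.2) q.2)) ((A, A), t) := by
        unfold auxC
        exact aux_contAt_mul _ _ _ continuousAt_const (aux_contAt_mul _ _ _
          (continuousAt_const.add cKt) (aux_contAt_inv _ _ c1 d1))
      apply this.eventually_mem
      simp only [K0]
      simpa [auxC] using hU

/-- Let `r ≤ s`, `r' ≤ s'` be positive integers, `U ⊆ ℂ^{r×s}` open and
connected containing a null point `Z₀` (`Z₀·Z₀ᴴ = I_r`), and let `F : U → ℂ^{r'×s'}` be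
holomorphic mapping null points to null points.  Then there is an open connected
`U' ⊆ U` containing a null point on which `F` is an orthogonal map: `Z, W ∈ U'` with
`Z·Wᴴ = I_r` imply `F(Z)·F(W)ᴴ = I_{r'}`. -/
theorem null_preserving_implies_orthogonal
    (r s r' s' : ℕ) (hr : 0 < r) (hrs : r ≤ s) (hr' : 0 < r') (hr's' : r' ≤ s')
    (U : Set (Fin r → Fin s → ℂ)) (hopen : IsOpen U) (hconn : IsPreconnected U)
    (Z₀ : Fin r → Fin s → ℂ) (hZ₀U : Z₀ ∈ U)
    (hZ₀ : Matrix.of Z₀ * (Matrix.of Z₀)ᴴ = (1 : Matrix (Fin r) (Fin r) ℂ))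
    (F : (Fin r → Fin s → ℂ) → Fin r' → Fin s' → ℂ)
    (hF : DifferentiableOn ℂ F U)
    (hnullpres : ∀ Z ∈ U, Matrix.of Z * (Matrix.of Z)ᴴ = (1 : Matrix (Fin r) (Fin r) ℂ) →
      Matrix.of (F Z) * (Matrix.of (F Z))ᴴ = (1 : Matrix (Fin r') (Fin r') ℂ)) :
    ∃ U' ⊆ U, IsOpen U' ∧ IsPreconnected U' ∧
      (∃ Z₁ ∈ U', Matrix.of Z₁ * (Matrix.of Z₁)ᴴ = (1 : Matrix (Fin r) (Fin r) ℂ)) ∧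
      ∀ Z ∈ U', ∀ W ∈ U',
        Matrix.of Z * (Matrix.of W)ᴴ = (1 : Matrix (Fin r) (Fin r) ℂ) →
        Matrix.of (F Z) * (Matrix.of (F W))ᴴ = (1 : Matrix (Fin r') (Fin r') ℂ) := by
  have hnear := aux_near (Matrix.of Z₀) hZ₀ U (hopen.mem_nhds hZ₀U)
  obtain ⟨ε, hε, hball⟩ := Metric.eventually_nhds_iff_ball.1
    (show ∀ᶠ p : (Fin r → Fin s → ℂ) × (Fin r → Fin s → ℂ) in nhds (Z₀, Z₀), _ from hnear)
  obtain ⟨δ, hδ, hδU⟩ := Metric.isOpen_iff.1 hopen Z₀ hZ₀U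
  refine ⟨Metric.ball Z₀ (min ε δ), (Metric.ball_subset_ball (min_le_right _ _)).trans hδU,
    Metric.isOpen_ball, (convex_ball _ _).isPreconnected,
    ⟨Z₀, Metric.mem_ball_self (lt_min hε hδ), hZ₀⟩, ?_⟩
  intro Z hZ W hW hZW
  have hmem : (Z, W) ∈ Metric.ball (Z₀, Z₀) ε := by
    rw [← ball_prod_same]
    exact ⟨Metric.ball_subset_ball (min_le_left _ _) hZ,
      Metric.ball_subset_ball (min_le_left _ _) hW⟩
  obtain ⟨hg, hP⟩ := hball _ hmem
  set K := auxk (Matrix.of Z₀) (Matrix.of Z) (Matrix.of W) with hK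
  have hP' : ∀ t ∈ Metric.closedBall (0 : ℂ) 2, (1 - auxK K t).det ≠ 0 ∧
      (Matrix.of Z₀ * auxC (auxK K t) : Matrix (Fin r) (Fin s) ℂ) ∈ U := hP
  have hI : (-Complex.I) ∈ Metric.closedBall (0 : ℂ) 2 := by simp
  have h2 : (1 + Kᴴ).det ≠ 0 := by
    have := (hP' _ hI).1
    rwa [auxK_negI, sub_neg_eq_add] at this
  obtain ⟨f1, f2⟩ := auxk_facts _ _ _ hZ₀ hZW hg h2
  let c : ℂ → (Fin r → Fin s → ℂ) := fun t => Matrix.of Z₀ * auxC (auxK K t)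
  have hc : ∀ t ∈ Metric.ball (0 : ℂ) 2, DifferentiableAt ℂ c t := by
    intro t ht
    have hd := (hP' t (Metric.ball_subset_closedBall ht)).1
    have dK : ∀ i j, DifferentiableAt ℂ (fun t => auxK K t i j) t := by
      intro i j
      simp only [auxK, Matrix.sub_apply, Matrix.smul_apply, smul_eq_mul]
      fun_prop
    refine differentiableAt_pi.2 fun i => differentiableAt_pi.2 fun j => ?_
    refine aux_diff_mul (fun _ => Matrix.of Z₀) (fun t => auxC (auxK K t)) t
      (fun _ _ => differentiableAt_const _) ?_ i j
    refine aux_diff_mul (fun t => 1 + auxK K t) (fun t => (1 - auxK K t)⁻¹) t ?_ ?_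
    · intro a b
      exact (differentiableAt_const _).add (dK a b)
    · refine aux_diff_inv (fun t => 1 - auxK K t) t ?_ hd
      intro a b
      exact (differentiableAt_const _).sub (dK a b)
  have hFc : ∀ t ∈ Metric.ball (0 : ℂ) 2, ∀ i j,
      DifferentiableAt ℂ (fun t => F (c t) i j) t := by
    intro t ht i j
    have hm : c t ∈ U := (hP' t (Metric.ball_subset_closedBall ht)).2
    have h1 : DifferentiableAt ℂ F (c t) := hF.differentiableAt (hopen.mem_nhds hm)
    have h3 : DifferentiableAt ℂ (fun t => F (c t)) t := h1.comp t (hc t ht)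
    exact differentiableAt_pi.1 (differentiableAt_pi.1 h3 i) j
  have hreal : ∀ x : ℝ, (x : ℂ) ∈ Metric.ball (0 : ℂ) 2 →
      Matrix.of (F (c x)) * (Matrix.of (F (c x)))ᴴ = (1 : Matrix (Fin r') (Fin r') ℂ) := by
    intro x hx
    obtain ⟨hd, hm⟩ := hP' x (Metric.ball_subset_closedBall hx)
    refine hnullpres _ hm ?_
    have hu := auxC_unitary _ (auxK_real K x) hd
    change (Matrix.of Z₀ * auxC (auxK K x)) * (Matrix.of Z₀ * auxC (auxK K x))ᴴ = 1
    rw [conjTranspose_mul, Matrix.mul_assoc, ← Matrix.mul_assoc (auxC _), hu, Matrix.one_mul, hZ₀]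
  have cI : c Complex.I = Z := by
    change Matrix.of Z₀ * auxC (auxK K Complex.I) = Matrix.of Z
    rw [auxK_I]; exact f1
  have cnI : c (-Complex.I) = W := by
    change Matrix.of Z₀ * auxC (auxK K (-Complex.I)) = Matrix.of W
    rw [auxK_negI]; exact f2
  ext i j
  let h : ℂ → ℂ := fun t => ∑ k, F (c t) i k * (starRingEnd ℂ) (F (c ((starRingEnd ℂ) t)) j k)
  have hh : DifferentiableOn ℂ h (Metric.ball 0 2) := by
    intro t ht
    refine DifferentiableAt.differentiableWithinAt ?_
    refine DifferentiableAt.fun_sum fun k _ => (hFc t ht i k).mul ?_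
    have ht' : (starRingEnd ℂ) t ∈ Metric.ball (0 : ℂ) 2 := by simpa using ht
    exact differentiableAt_conj_conj_iff.2 (hFc _ ht' j k)
  have ha : AnalyticOnNhd ℂ h (Metric.ball 0 2) := hh.analyticOnNhd Metric.isOpen_ball
  have hr0 : ∀ x : ℝ, (x : ℂ) ∈ Metric.ball (0 : ℂ) 2 →
      h x = (1 : Matrix (Fin r') (Fin r') ℂ) i j := by
    intro x hx
    rw [← hreal x hx]
    simp [h, Matrix.mul_apply, Matrix.conjTranspose_apply]
  have hfreq : ∃ᶠ t in nhdsWithin (0 : ℂ) {0}ᶜ, h t = (1 : Matrix (Fin r') (Fin r') ℂ) i j := by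
    have hT : Filter.Tendsto (fun x : ℝ => (x : ℂ)) (nhdsWithin 0 {0}ᶜ)
        (nhdsWithin (0 : ℂ) {0}ᶜ) := by
      refine tendsto_nhdsWithin_iff.2 ⟨?_, ?_⟩
      · have : Filter.Tendsto (fun x : ℝ => (x : ℂ)) (nhds 0) (nhds ((0 : ℝ) : ℂ)) :=
          Complex.continuous_ofReal.tendsto 0
        rw [Complex.ofReal_zero] at this
        exact this.mono_left nhdsWithin_le_nhds
      · filter_upwards [self_mem_nhdsWithin] with x hx
        simpa using hx
    refine hT.frequently (Filter.Eventually.frequently ?_)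
    have : ∀ᶠ t in nhdsWithin (0 : ℂ) {0}ᶜ, t ∈ Metric.ball (0 : ℂ) 2 :=
      nhdsWithin_le_nhds (Metric.ball_mem_nhds _ two_pos)
    filter_upwards [hT.eventually this] with x hx using hr0 x hx
  have heq := ha.eqOn_of_preconnected_of_frequently_eq
    (analyticOnNhd_const (v := (1 : Matrix (Fin r') (Fin r') ℂ) i j))
    (convex_ball _ _).isPreconnected (Metric.mem_ball_self two_pos) hfreq
  have hfin := heq (show Complex.I ∈ Metric.ball (0 : ℂ) 2 by simp)
  refine Eq.trans ?_ hfin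
  simp only [h, Complex.conj_I, cI, cnI]
  rfl
end
end

section
/- Let s ≥ 2 and 1 ≤ r' ≤ s' be integers, and let F : U → ℂ^{r'×s'} be a local orthogonal map in chart form from 𝒢(1,s) to 𝒢(r',s'). For a subset S ⊆ U let V_{F(S)} ⊆ ℂ^{r'+s'} denote the ℂ-linear span of the union over w ∈ S of rowSpan([I_{r'} | F(w)]). Suppose that for every z₀ ∈ U one has dim V_{F({w ∈ U : w·z₀ᴴ = 1})} = dim V_{F(U)}. Then F is null, i.e. F(z)·F(z)ᴴ = I_{r'} for every z ∈ U. -/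
open scoped BigOperators
open Matrix

noncomputable section

/-- `VF F S` is the ℂ-linear span in `ℂ^{r'+s'}` of the union over `w ∈ S` of the rows
of the chart matrices `[I_{r'} | F(w)]`. -/
def VF {s r' s' : ℕ} (F : (Fin s → ℂ) → Fin r' → Fin s' → ℂ)
    (S : Set (Fin s → ℂ)) : Submodule ℂ (Fin (r' + s') → ℂ) :=
  Submodule.span ℂ (⋃ w ∈ S, Set.range fun i => chartMat r' s' (Matrix.of (F w)) i)

/-- The Hermitian pairing against the `k`-th row of `[I | Z]`. -/
def orthFun {r s : ℕ} (Z : Fin r → Fin s → ℂ) (k : Fin r) : (Fin (r + s) → ℂ) →ₗ[ℂ] ℂ where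
  toFun v := v (Fin.castAdd s k) - ∑ j, v (Fin.natAdd r j) * (starRingEnd ℂ) (Z k j)
  map_add' u v := by
    simp only [Pi.add_apply, add_mul, Finset.sum_add_distrib]
    ring
  map_smul' c v := by
    simp only [Pi.smul_apply, smul_eq_mul, mul_assoc, RingHom.id_apply, mul_sub, Finset.mul_sum]

lemma orthFun_chart {r s : ℕ} (Z W : Fin r → Fin s → ℂ) (i k : Fin r) :
    orthFun Z k (chartMat r s (Matrix.of W) i) =
      (1 : Matrix (Fin r) (Fin r) ℂ) i k - (Matrix.of W * (Matrix.of Z)ᴴ) i k := by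
  simp [orthFun, chartMat, Matrix.mul_apply, Matrix.one_apply, Fin.ext_iff]

/-- Let `s ≥ 2`, `1 ≤ r' ≤ s'`, and let `F` be a local orthogonal map in
chart form from `𝒢(1,s)` to `𝒢(r',s')`.  If for every `z₀ ∈ U` the span of the images of
the orthogonal hyperplane trace `{w ∈ U : w·z₀ᴴ = 1}` has the same dimension as the span
of the image of `U`, then `F` is null: `F(z)·F(z)ᴴ = I_{r'}` for every `z ∈ U`. -/
theorem hyperplane_span_condition_implies_null
    (s r' s' : ℕ) (hs : 2 ≤ s) (hr' : 1 ≤ r') (hr's' : r' ≤ s')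
    (U : Set (Fin s → ℂ)) (hopen : IsOpen U) (hconn : IsPreconnected U)
    (hnull : ∃ z ∈ U, cdot z z = 1)
    (F : (Fin s → ℂ) → Fin r' → Fin s' → ℂ)
    (hF : DifferentiableOn ℂ F U)
    (horth : ∀ z ∈ U, ∀ w ∈ U, cdot z w = 1 →
      Matrix.of (F z) * (Matrix.of (F w))ᴴ = (1 : Matrix (Fin r') (Fin r') ℂ))
    (hdim : ∀ z₀ ∈ U,
      Module.finrank ℂ ↥(VF F {w ∈ U | cdot w z₀ = 1}) = Module.finrank ℂ ↥(VF F U)) :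
    ∀ z ∈ U, Matrix.of (F z) * (Matrix.of (F z))ᴴ = (1 : Matrix (Fin r') (Fin r') ℂ) := by
  intro z hz
  have hsub : VF F {w ∈ U | cdot w z = 1} ≤ VF F U := by
    apply Submodule.span_mono
    exact Set.biUnion_subset_biUnion_left (fun w hw => hw.1)
  have heq := Submodule.eq_of_le_of_finrank_eq hsub (hdim z hz)
  have key : ∀ k : Fin r', VF F {w ∈ U | cdot w z = 1} ≤ LinearMap.ker (orthFun (F z) k) := by
    intro k
    apply Submodule.span_le.2
    intro v hv
    simp only [Set.mem_iUnion, Set.mem_range] at hv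
    obtain ⟨w, ⟨hwU, hw⟩, i, rfl⟩ := hv
    have h := congrFun (congrFun (horth w hwU z hz hw) i) k
    simp only [SetLike.mem_coe, LinearMap.mem_ker]
    rw [orthFun_chart, h, sub_self]
  ext i k
  have hmem : chartMat r' s' (Matrix.of (F z)) i ∈ VF F U := by
    apply Submodule.subset_span
    simp only [Set.mem_iUnion, Set.mem_range]
    exact ⟨z, hz, i, rfl⟩
  rw [← heq] at hmem
  have h := LinearMap.mem_ker.1 (key k hmem)
  rw [orthFun_chart] at h
  exact (sub_eq_zero.1 h).symm
end
end
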